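/- arXiv:1512.01758 — 9 statements merged into one kernel-verified Lean document; each statement's English description precedes it below -/
import Mathlib

section
/- For rational q ∈ ℚ^{dT} and rational r ∈ ℚ ∩ (0,1), let p_{q,r} be an 𝓕-measurable random variable with values in ℝ ∪ {±∞}, and suppose the family is monotone in the sense that p_{q,r} ≤ p_{q',r'} a.s. whenever r' ≥ r + |q − q'|. Then the map V : Ω × ℝ^{dT} → ℝ ∪ {±∞} defined by V(ω,x) = inf{ p_{q,r}(ω) : q ∈ ℚ^{dT}, r ∈ ℚ ∩ (0,1), |x − q| < r } is a normal integrand: its hypographical correspondence ω ↦ {(x,β) ∈ ℝ^{dT} × ℝ : β ≤ V(ω,x)} is closed-valued and measurable; in particular x ↦ V(ω,x) is upper semicontinuous for every ω. -/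
open MeasureTheory Filter Topology

noncomputable section

/-- The map `V(ω,x) = inf { p_{q,r}(ω) : q ∈ ℚ^{dT}, r ∈ ℚ ∩ (0,1), |x − q| < r }`. -/
def Vconstr {Ω : Type*} {T d : ℕ}
    (p : (Fin T → Fin d → ℚ) → ℚ → Ω → EReal) (ω : Ω) (x : Fin T → Fin d → ℝ) : EReal :=
  ⨅ q : Fin T → Fin d → ℚ, ⨅ r : ℚ,
    ⨅ _ : 0 < r ∧ r < 1 ∧ ‖x - fun t i => ((q t i : ℝ))‖ < (r : ℝ), p q r ω

/-- The hypographical correspondence of `Vconstr p`. -/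
def VconstrHypo {Ω : Type*} {T d : ℕ}
    (p : (Fin T → Fin d → ℚ) → ℚ → Ω → EReal) (ω : Ω) :
    Set ((Fin T → Fin d → ℝ) × ℝ) :=
  {xb : (Fin T → Fin d → ℝ) × ℝ | (xb.2 : EReal) ≤ Vconstr p ω xb.1}

/-- `V` lies below a level at `x` iff some member of the family that is active at `x` does. -/
theorem Vconstr_lt_iff {Ω : Type*} {T d : ℕ}
    (p : (Fin T → Fin d → ℚ) → ℚ → Ω → EReal) (ω : Ω) (x : Fin T → Fin d → ℝ) (y : EReal) :
    Vconstr p ω x < y ↔ ∃ (q : Fin T → Fin d → ℚ) (r : ℚ), (0 < r ∧ r < 1 ∧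
      ‖x - fun t i => ((q t i : ℝ))‖ < (r : ℝ)) ∧ p q r ω < y := by
  simp only [Vconstr, iInf_lt_iff, exists_prop]

theorem upperSemicontinuous_Vconstr {Ω : Type*} {T d : ℕ}
    (p : (Fin T → Fin d → ℚ) → ℚ → Ω → EReal) (ω : Ω) :
    UpperSemicontinuous (Vconstr p ω) := by
  intro x y hxy
  obtain ⟨q, r, ⟨h0, h1, hr⟩, hp⟩ := (Vconstr_lt_iff p ω x y).1 hxy
  have hcont : Continuous fun x' : Fin T → Fin d → ℝ => ‖x' - fun t i => ((q t i : ℝ))‖ := by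
    fun_prop
  filter_upwards [hcont.continuousAt.eventually_lt continuousAt_const hr] with x' hx'
  exact (Vconstr_lt_iff p ω x' y).2 ⟨q, r, ⟨h0, h1, hx'⟩, hp⟩

theorem isClosed_VconstrHypo {Ω : Type*} {T d : ℕ}
    (p : (Fin T → Fin d → ℚ) → ℚ → Ω → EReal) (ω : Ω) : IsClosed (VconstrHypo p ω) :=
  (upperSemicontinuous_iff_IsClosed_hypograph.1 (upperSemicontinuous_Vconstr p ω)).preimage
    (continuous_fst.prodMk (continuous_coe_real_ereal.comp continuous_snd))

/-- By compactness, `V < β` on all of `K` iff finitely many balls whose values lie below `β`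
cover `K`; there are only countably many such finite families. -/
theorem measurableSet_exists_le_Vconstr {Ω : Type*} [MeasurableSpace Ω] {T d : ℕ}
    (p : (Fin T → Fin d → ℚ) → ℚ → Ω → EReal) (hp : ∀ q r, Measurable (p q r))
    {K : Set (Fin T → Fin d → ℝ)} (hK : IsCompact K) (β : EReal) :
    MeasurableSet {ω | ∃ x ∈ K, β ≤ Vconstr p ω x} := by
  let U : (Fin T → Fin d → ℚ) × ℚ → Set (Fin T → Fin d → ℝ) := fun a =>
    {x | 0 < a.2 ∧ a.2 < 1 ∧ ‖x - fun t i => ((a.1 t i : ℝ))‖ < (a.2 : ℝ)}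
  have hU : ∀ a, IsOpen (U a) := fun a =>
    isOpen_const.and (isOpen_const.and (isOpen_lt (by fun_prop) continuous_const))
  have hcompl : {ω | ∃ x ∈ K, β ≤ Vconstr p ω x}ᶜ =
      ⋃ F : Finset ((Fin T → Fin d → ℚ) × ℚ), ⋃ _ : K ⊆ ⋃ a ∈ F, U a,
        ⋂ a ∈ F, {ω | p a.1 a.2 ω < β} := by
    ext ω
    simp only [Set.mem_compl_iff, Set.mem_ofPred_eq, not_exists, not_and, not_le, Set.mem_iUnion,
      Set.mem_iInter, exists_prop]
    constructor
    · intro h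
      obtain ⟨F, hFsub, hFfin, hF⟩ := hK.elim_finite_subcover_image
        (b := {a | p a.1 a.2 ω < β}) (c := U) (fun a _ => hU a) (by
          intro x hx
          obtain ⟨q, r, hqr, hlt⟩ := (Vconstr_lt_iff p ω x β).1 (h x hx)
          exact Set.mem_biUnion (x := (q, r)) hlt hqr)
      refine ⟨hFfin.toFinset, by simpa using hF, fun a ha => hFsub (by simpa using ha)⟩
    · rintro ⟨F, hF, hlt⟩ x hx
      obtain ⟨a, ha, hxa⟩ := Set.mem_iUnion₂.1 (hF hx)
      exact (Vconstr_lt_iff p ω x β).2 ⟨a.1, a.2, hxa, hlt a ha⟩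
  refine MeasurableSet.of_compl (hcompl ▸ ?_)
  exact MeasurableSet.iUnion fun F => MeasurableSet.iUnion fun _ =>
    F.measurableSet_biInter fun a _ => measurableSet_lt (hp a.1 a.2) measurable_const

theorem measurableSet_ball_inter_VconstrHypo {Ω : Type*} [MeasurableSpace Ω] {T d : ℕ}
    (p : (Fin T → Fin d → ℚ) → ℚ → Ω → EReal) (hp : ∀ q r, Measurable (p q r))
    (c : (Fin T → Fin d → ℝ) × ℝ) (s : ℝ) :
    MeasurableSet {ω | (Metric.ball c s ∩ VconstrHypo p ω).Nonempty} := by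
  have hunion : {ω | (Metric.ball c s ∩ VconstrHypo p ω).Nonempty} =
      ⋃ t : ℚ, ⋃ _ : (t : ℝ) < s, ⋃ b : ℚ, ⋃ _ : |(b : ℝ) - c.2| < s,
        {ω | ∃ x ∈ Metric.closedBall c.1 (t : ℝ), ((b : ℝ) : EReal) ≤ Vconstr p ω x} := by
    ext ω
    simp only [Set.mem_ofPred_eq, Set.mem_iUnion, exists_prop]
    constructor
    · rintro ⟨⟨x, b⟩, hball, hle⟩
      rw [Metric.mem_ball, Prod.dist_eq, max_lt_iff, Real.dist_eq, abs_lt] at hball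
      obtain ⟨hx, hb₁, hb₂⟩ := hball
      obtain ⟨t, hxt, hts⟩ := exists_rat_btwn hx
      obtain ⟨b', hb', hb'b⟩ := exists_rat_btwn (show c.2 - s < b by simp at hb₁; linarith)
      refine ⟨t, hts, b', abs_lt.2 ⟨by linarith, by simp at hb₂; linarith⟩, x, hxt.le, ?_⟩
      exact (EReal.coe_le_coe_iff.2 hb'b.le).trans hle
    · rintro ⟨t, hts, b, hb, x, hx, hle⟩
      refine ⟨(x, (b : ℝ)), ?_, hle⟩
      rw [Metric.mem_ball, Prod.dist_eq, max_lt_iff]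
      exact ⟨(Metric.mem_closedBall.1 hx).trans_lt hts, hb⟩
  rw [hunion]
  exact MeasurableSet.iUnion fun t => MeasurableSet.iUnion fun _ => MeasurableSet.iUnion fun b =>
    MeasurableSet.iUnion fun _ =>
      measurableSet_exists_le_Vconstr p hp (isCompact_closedBall c.1 (t : ℝ)) _

/-- given a monotone family `p_{q,r}` of measurable extended random
variables, the map `V(ω,x) = inf { p_{q,r}(ω) : |x − q| < r }` is a normal integrand:
its hypographical correspondence is closed valued and measurable; in particular
`x ↦ V(ω,x)` is upper semicontinuous for every `ω`. -/
theorem stmt1 {Ω : Type*} {mΩ : MeasurableSpace Ω} (P : Measure Ω) [IsProbabilityMeasure P]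
    (T d : ℕ) (hT : 1 ≤ T) (hd : 1 ≤ d)
    (p : (Fin T → Fin d → ℚ) → ℚ → Ω → EReal)
    (hpmeas : ∀ q r, Measurable (p q r))
    (hpmono : ∀ (q q' : Fin T → Fin d → ℚ) (r r' : ℚ),
      (r : ℝ) + ‖(fun t i => ((q t i : ℝ))) - (fun t i => ((q' t i : ℝ)) :
          Fin T → Fin d → ℝ)‖ ≤ (r' : ℝ) →
      ∀ᵐ ω ∂P, p q r ω ≤ p q' r' ω) :
    -- closed valued
    (∀ ω, IsClosed (VconstrHypo p ω)) ∧
    -- measurable correspondence: the preimage condition holds for every open ball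
    (∀ (c : (Fin T → Fin d → ℝ) × ℝ) (s : ℝ),
      MeasurableSet {ω | (Metric.ball c s ∩ VconstrHypo p ω).Nonempty}) ∧
    -- in particular, upper semicontinuity in `x` for every `ω`
    (∀ ω, UpperSemicontinuous (Vconstr p ω)) :=
  ⟨isClosed_VconstrHypo p, measurableSet_ball_inter_VconstrHypo p hpmeas,
    upperSemicontinuous_Vconstr p⟩

end
end

section
/- Let V̂ be a market model, and for q ∈ ℚ^{dT}, r ∈ ℚ ∩ (0,1) let p_{q,r} be the essential supremum of { V̂(ϑ) : ϑ ∈ 𝒜, ‖ϑ − q‖_∞ < r } (i.e. a measurable random variable with p_{q,r} ≥ V̂(ϑ) a.s. for every admissible ϑ in this set, and minimal with this property), and define V(ω,x) = inf{ p_{q,r}(ω) : q ∈ ℚ^{dT}, r ∈ ℚ ∩ (0,1), |x − q| < r }. Then for every strategy ϑ ∈ 𝒜 one has V̂(ϑ)(ω) ≤ V(ω, ϑ(ω)) for almost every ω. -/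
open MeasureTheory Filter Topology
open scoped ENNReal NNReal

noncomputable section

/-- A strategy `ϑ` is adapted to the filtration `ℱ`. -/
def AdaptedStrat {Ω : Type*} {T d : ℕ} (ℱ : Fin T → MeasurableSpace Ω)
    (ϑ : Ω → Fin T → Fin d → ℝ) : Prop :=
  ∀ t : Fin T, Measurable[ℱ t] fun ω => ϑ ω t

/-- `‖ϑ − q‖_∞ < r` : the essential supremum of `|ϑ(ω) − q|` is smaller than `r`. -/
def InLinftyBall {Ω : Type*} {mΩ : MeasurableSpace Ω} {T d : ℕ} (P : Measure Ω)
    (q : Fin T → Fin d → ℚ) (r : ℚ) (ϑ : Ω → Fin T → Fin d → ℝ) : Prop :=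
  essSup (fun ω => (‖ϑ ω - fun t i => ((q t i : ℝ))‖₊ : ℝ≥0∞)) P < ENNReal.ofReal (r : ℝ)

/-- Locality at each single time propagates to all times in a finite set `S`. -/
theorem ae_eq_of_local_finset {Ω : Type*} {mΩ : MeasurableSpace Ω} {P : Measure Ω} {T d : ℕ}
    {ℱ : Fin T → MeasurableSpace Ω} {Vh : (Ω → Fin T → Fin d → ℝ) → Ω → EReal}
    (hloc : ∀ (t : Fin T) (A : Set Ω), MeasurableSet[ℱ t] A →
      ∀ ϑ, AdaptedStrat ℱ ϑ →
        ∀ᵐ ω ∂P, ω ∈ A →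
          Vh ϑ ω = Vh (fun ω' s => if s = t then A.indicator (fun ω'' => ϑ ω'' t) ω'
            else ϑ ω' s) ω)
    {A : Fin T → Set Ω} (hA : ∀ t, MeasurableSet[ℱ t] (A t))
    {ϑ : Ω → Fin T → Fin d → ℝ} (hϑ : AdaptedStrat ℱ ϑ) (S : Finset (Fin T)) :
    ∀ᵐ ω ∂P, (∀ t, ω ∈ A t) →
      Vh ϑ ω = Vh (fun ω' s => if s ∈ S then (A s).indicator (fun ω'' => ϑ ω'' s) ω'
        else ϑ ω' s) ω := by
  induction S using Finset.induction_on with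
  | empty => simp
  | insert t S ht ih =>
    have hadapted : AdaptedStrat ℱ (fun ω' s =>
        if s ∈ S then (A s).indicator (fun ω'' => ϑ ω'' s) ω' else ϑ ω' s) := by
      intro s
      by_cases hs : s ∈ S
      · simpa only [hs, if_true] using (hϑ s).indicator (hA s)
      · simpa only [hs, if_false] using hϑ s
    filter_upwards [ih, hloc t (A t) (hA t) _ hadapted] with ω hω hstep hmem
    rw [hω hmem, hstep (hmem t)]
    congr 1
    funext ω' s
    by_cases hs : s = t
    · subst hs
      simp [ht]
    · simp [hs]

/-- A local map takes a.s. equal values where two adapted strategies agree on events that are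
observable at the respective times. -/
theorem ae_eq_of_local_of_eqOn {Ω : Type*} {mΩ : MeasurableSpace Ω} {P : Measure Ω} {T d : ℕ}
    {ℱ : Fin T → MeasurableSpace Ω} {Vh : (Ω → Fin T → Fin d → ℝ) → Ω → EReal}
    (hloc : ∀ (t : Fin T) (A : Set Ω), MeasurableSet[ℱ t] A →
      ∀ ϑ, AdaptedStrat ℱ ϑ →
        ∀ᵐ ω ∂P, ω ∈ A →
          Vh ϑ ω = Vh (fun ω' s => if s = t then A.indicator (fun ω'' => ϑ ω'' t) ω'
            else ϑ ω' s) ω)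
    {A : Fin T → Set Ω} (hA : ∀ t, MeasurableSet[ℱ t] (A t))
    {ϑ ψ : Ω → Fin T → Fin d → ℝ} (hϑ : AdaptedStrat ℱ ϑ) (hψ : AdaptedStrat ℱ ψ)
    (heq : ∀ t, Set.EqOn (fun ω => ϑ ω t) (fun ω => ψ ω t) (A t)) :
    ∀ᵐ ω ∂P, (∀ t, ω ∈ A t) → Vh ϑ ω = Vh ψ ω := by
  filter_upwards [ae_eq_of_local_finset hloc hA hϑ Finset.univ,
    ae_eq_of_local_finset hloc hA hψ Finset.univ] with ω h₁ h₂ hmem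
  rw [h₁ hmem, h₂ hmem]
  congr 1
  funext ω' s
  simp only [Finset.mem_univ, if_true]
  exact congrFun (Set.indicator_congr (heq s)) ω'

/-- A strategy that stays within `c < r` of `q` lies in the open `L^∞`-ball of radius `r`. -/
theorem inLinftyBall_of_norm_le {Ω : Type*} {mΩ : MeasurableSpace Ω} {T d : ℕ} (P : Measure Ω)
    {q : Fin T → Fin d → ℚ} {c r : ℚ} (hc : 0 ≤ c) (hcr : c < r)
    {ϑ : Ω → Fin T → Fin d → ℝ} (h : ∀ ω, ‖ϑ ω - fun t i => ((q t i : ℝ))‖ ≤ c) :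
    InLinftyBall P q r ϑ := by
  have hc' : (0 : ℝ) ≤ c := by exact_mod_cast hc
  have hcr' : (c : ℝ) < r := by exact_mod_cast hcr
  refine lt_of_le_of_lt (essSup_le_of_ae_le (ENNReal.ofReal (c : ℝ)) ?_)
    ((ENNReal.ofReal_lt_ofReal_iff (hc'.trans_lt hcr')).2 hcr')
  refine Eventually.of_forall fun ω => ?_
  change ‖ϑ ω - fun t i => ((q t i : ℝ))‖ₑ ≤ _
  rw [← ofReal_norm]
  exact ENNReal.ofReal_le_ofReal (h ω)

/-- for a market model `V̂`, with `p_{q,r}` the essential supremum of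
`{ V̂(ϑ) : ϑ ∈ 𝒜, ‖ϑ − q‖_∞ < r }` and
`V(ω,x) = inf { p_{q,r}(ω) : |x − q| < r, r ∈ (0,1) }`, one has
`V̂(ϑ) ≤ V(·,ϑ(·))` a.s. for every adapted strategy `ϑ`. -/
theorem stmt2 {Ω : Type*} {mΩ : MeasurableSpace Ω} (P : Measure Ω) [IsProbabilityMeasure P]
    (T d : ℕ) (hT : 1 ≤ T) (hd : 1 ≤ d)
    (ℱ : Fin T → MeasurableSpace Ω) (hℱmono : Monotone ℱ) (hℱle : ∀ t, ℱ t ≤ mΩ)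
    -- the market model V̂
    (Vh : (Ω → Fin T → Fin d → ℝ) → Ω → EReal)
    (hVhmeas : ∀ ϑ, AdaptedStrat ℱ ϑ → Measurable (Vh ϑ))
    (hVhnotTop : ∀ ϑ, AdaptedStrat ℱ ϑ → ∀ᵐ ω ∂P, Vh ϑ ω ≠ ⊤)
    -- (A1) normalization
    (hA1 : ∀ᵐ ω ∂P, Vh (fun _ _ _ => 0) ω = 0)
    -- (A2) locality
    (hA2 : ∀ (t : Fin T) (A : Set Ω), MeasurableSet[ℱ t] A →
      ∀ ϑ, AdaptedStrat ℱ ϑ →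
        ∀ᵐ ω ∂P, ω ∈ A →
          Vh ϑ ω = Vh (fun ω' s => if s = t then A.indicator (fun ω'' => ϑ ω'' t) ω'
            else ϑ ω' s) ω)
    -- `p q r` is the essential supremum of `{ V̂(ϑ) : ϑ ∈ 𝒜, ‖ϑ − q‖_∞ < r }` :
    (p : (Fin T → Fin d → ℚ) → ℚ → Ω → EReal)
    (hpmeas : ∀ q r, Measurable (p q r))
    (hpub : ∀ q r ϑ, AdaptedStrat ℱ ϑ → InLinftyBall P q r ϑ →
      ∀ᵐ ω ∂P, Vh ϑ ω ≤ p q r ω)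
    (hpmin : ∀ q r (m : Ω → EReal), Measurable m →
      (∀ ϑ, AdaptedStrat ℱ ϑ → InLinftyBall P q r ϑ → ∀ᵐ ω ∂P, Vh ϑ ω ≤ m ω) →
      ∀ᵐ ω ∂P, p q r ω ≤ m ω) :
    -- conclusion: V̂(ϑ)(ω) ≤ V(ω, ϑ(ω)) a.s. for every adapted strategy ϑ
    ∀ ϑ, AdaptedStrat ℱ ϑ → ∀ᵐ ω ∂P, Vh ϑ ω ≤ Vconstr p ω (ϑ ω) := by
  intro ϑ hϑ
  have key : ∀ (q : Fin T → Fin d → ℚ) (r c : ℚ), 0 ≤ c → c < r →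
      ∀ᵐ ω ∂P, ‖ϑ ω - fun t i => ((q t i : ℝ))‖ ≤ c → Vh ϑ ω ≤ p q r ω := by
    intro q r c hc hcr
    have hc' : (0 : ℝ) ≤ c := by exact_mod_cast hc
    let A : Fin T → Set Ω := fun t => {ω | ‖ϑ ω t - fun i => ((q t i : ℝ))‖ ≤ c}
    have hA : ∀ t, MeasurableSet[ℱ t] (A t) := fun t => by
      have hball : MeasurableSet {x : Fin d → ℝ | ‖x - fun i => ((q t i : ℝ))‖ ≤ c} :=
        measurableSet_le (measurable_id.sub_const _).norm measurable_const
      exact hϑ t hball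
    classical
    let ψ : Ω → Fin T → Fin d → ℝ := fun ω t =>
      if ω ∈ A t then ϑ ω t else fun i => ((q t i : ℝ))
    have hψ : AdaptedStrat ℱ ψ := fun t => Measurable.ite (hA t) (hϑ t) measurable_const
    have hball : InLinftyBall P q r ψ := by
      refine inLinftyBall_of_norm_le P hc hcr fun ω => (pi_norm_le_iff_of_nonneg hc').2 fun t => ?_
      by_cases hω : ω ∈ A t
      · simp only [ψ, Pi.sub_apply, if_pos hω]
        exact hω
      · simpa [ψ, hω] using hc
    have heq : ∀ t, Set.EqOn (fun ω => ϑ ω t) (fun ω => ψ ω t) (A t) := fun t ω hω => by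
      simp [ψ, hω]
    filter_upwards [ae_eq_of_local_of_eqOn hA2 hA hϑ hψ heq, hpub q r ψ hψ hball]
      with ω hVh hle hω
    rw [hVh fun t => (norm_le_pi_norm (ϑ ω - fun t i => ((q t i : ℝ))) t).trans hω]
    exact hle
  have hall : ∀ᵐ ω ∂P, ∀ (q : Fin T → Fin d → ℚ) (r c : ℚ), 0 ≤ c → c < r →
      ‖ϑ ω - fun t i => ((q t i : ℝ))‖ ≤ c → Vh ϑ ω ≤ p q r ω := by
    simpa only [ae_all_iff] using key
  filter_upwards [hall] with ω hω
  refine le_iInf fun q => le_iInf fun r => le_iInf fun ⟨_, _, hnorm⟩ => ?_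
  obtain ⟨c, hc, hcr⟩ := exists_rat_btwn hnorm
  have hc0 : (0 : ℝ) ≤ c := (norm_nonneg _).trans hc.le
  exact hω q r c (by exact_mod_cast hc0) (by exact_mod_cast hcr) hc.le

end
end

section
/- Let V̂ be a market model. Then V̂ is upper semicontinuous (with respect to L^∞ convergence of bounded strategies) if and only if for every sequence of strategies ϑⁿ ∈ 𝒜 converging almost surely to a strategy ϑ ∈ 𝒜 one has limsup_n V̂(ϑⁿ) ≤ V̂(ϑ) almost surely. -/
open MeasureTheory Filter Topology

noncomputable section

/-- A strategy is essentially bounded. -/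
def EssBdd {Ω : Type*} {mΩ : MeasurableSpace Ω} {T d : ℕ} (P : Measure Ω)
    (ϑ : Ω → Fin T → Fin d → ℝ) : Prop :=
  ∃ M : ℝ, ∀ᵐ ω ∂P, ‖ϑ ω‖ ≤ M

/-- Convergence of strategies in `L^∞`: `‖ϑⁿ − ϑ‖_∞ → 0`. -/
def LinftyTendsto {Ω : Type*} {mΩ : MeasurableSpace Ω} {T d : ℕ} (P : Measure Ω)
    (ϑn : ℕ → Ω → Fin T → Fin d → ℝ) (ϑ : Ω → Fin T → Fin d → ℝ) : Prop :=
  ∀ ε : ℝ, 0 < ε → ∀ᶠ n in atTop, ∀ᵐ ω ∂P, ‖ϑn n ω - ϑ ω‖ ≤ ε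

/-- The market model `V̂` is upper semicontinuous (w.r.t. `L^∞` convergence of
essentially bounded strategies). -/
def USCModel {Ω : Type*} {mΩ : MeasurableSpace Ω} {T d : ℕ} (P : Measure Ω)
    (ℱ : Fin T → MeasurableSpace Ω)
    (Vh : (Ω → Fin T → Fin d → ℝ) → Ω → EReal) : Prop :=
  ∀ (ϑn : ℕ → Ω → Fin T → Fin d → ℝ) (ϑ : Ω → Fin T → Fin d → ℝ),
    (∀ n, AdaptedStrat ℱ (ϑn n)) → (∀ n, EssBdd P (ϑn n)) → AdaptedStrat ℱ ϑ →
    LinftyTendsto P ϑn ϑ →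
    ∀ᵐ ω ∂P, Filter.limsup (fun n => Vh (ϑn n) ω) atTop ≤ Vh ϑ ω

/-- An Egorov-type covering: an a.e. convergent sequence of `m`-measurable functions converges
uniformly to a bounded limit on each of countably many `m`-measurable sets covering almost every
point. -/
lemma exists_cover_tendstoUniformlyOn {Ω E : Type*} [NormedAddCommGroup E] [MeasurableSpace E]
    [BorelSpace E] [SecondCountableTopology E] {mΩ m : MeasurableSpace Ω}
    (hm : m ≤ mΩ) (P : Measure[mΩ] Ω) [IsFiniteMeasure P] {f : ℕ → Ω → E} {g : Ω → E}
    (hf : ∀ n, Measurable[m] (f n)) (hg : Measurable[m] g)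
    (hfg : ∀ᵐ ω ∂P, Tendsto (fun n => f n ω) atTop (𝓝 (g ω))) :
    ∃ A : ℕ × ℕ → Set Ω, (∀ k, MeasurableSet[m] (A k)) ∧
      (∀ k, TendstoUniformlyOn f g atTop (A k)) ∧
      (∀ k, ∃ M : ℝ, ∀ ω ∈ A k, ‖g ω‖ ≤ M) ∧ ∀ᵐ ω ∂P, ∃ k, ω ∈ A k := by
  have hset : MeasurableSet[m] {ω | Tendsto (fun n => f n ω) atTop (𝓝 (g ω))} := by
    have h : {ω | Tendsto (fun n => f n ω) atTop (𝓝 (g ω))} =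
        {ω | Tendsto (fun n => ‖f n ω - g ω‖) atTop (𝓝 0)} := by
      ext ω
      exact tendsto_iff_norm_sub_tendsto_zero
    rw [h]
    exact measurableSet_tendsto (𝓝 0) fun n => ((hf n).sub hg).norm
  have htrim : ∀ᵐ ω ∂P.trim hm, Tendsto (fun n => f n ω) atTop (𝓝 (g ω)) := by
    rw [ae_iff, ← Set.compl_ofPred, trim_measurableSet_eq hm hset.compl]
    exact hfg
  have hegorov (j : ℕ) : ∃ N, MeasurableSet[m] N ∧ P N ≤ ENNReal.ofReal (1 / ((j : ℝ) + 1)) ∧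
      TendstoUniformlyOn f g atTop Nᶜ := by
    obtain ⟨N, hN, hPN, hunif⟩ := tendstoUniformlyOn_of_ae_tendsto' (μ := P.trim hm)
      (fun n => (hf n).stronglyMeasurable) hg.stronglyMeasurable htrim
      (ε := 1 / ((j : ℝ) + 1)) (by positivity)
    exact ⟨N, hN, by rwa [trim_measurableSet_eq hm hN] at hPN, hunif⟩
  choose N hN hPN hunif using hegorov
  refine ⟨fun k => (N k.1)ᶜ ∩ {ω | ‖g ω‖ ≤ k.2},
    fun k => (hN k.1).compl.inter (measurableSet_le hg.norm measurable_const),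
    fun k => (hunif k.1).mono Set.inter_subset_left,
    fun k => ⟨k.2, fun ω hω => hω.2⟩, ?_⟩
  have hnull : P (⋂ j, N j) = 0 := by
    have hlim : Tendsto (fun j : ℕ => ENNReal.ofReal (1 / ((j : ℝ) + 1))) atTop (𝓝 0) := by
      simpa using ENNReal.tendsto_ofReal (tendsto_one_div_add_atTop_nhds_zero_nat (𝕜 := ℝ))
    exact le_antisymm (ge_of_tendsto' hlim fun j =>
      (measure_mono (Set.iInter_subset N j)).trans (hPN j)) zero_le
  filter_upwards [measure_eq_zero_iff_ae_notMem.1 hnull] with ω hω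
  obtain ⟨j, hj⟩ : ∃ j, ω ∉ N j := by simpa using hω
  obtain ⟨i, hi⟩ := exists_nat_ge ‖g ω‖
  exact ⟨(j, i), hj, hi⟩

/-- Cutting off an adapted strategy at each time `t ∈ S` outside an `ℱ t`-measurable set. -/
lemma AdaptedStrat.cutoff {Ω : Type*} {T d : ℕ} {ℱ : Fin T → MeasurableSpace Ω}
    {ϑ : Ω → Fin T → Fin d → ℝ} (hϑ : AdaptedStrat ℱ ϑ) {A : Fin T → Set Ω}
    (hA : ∀ t, MeasurableSet[ℱ t] (A t)) (S : Finset (Fin T)) :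
    AdaptedStrat ℱ fun ω s => if s ∈ S then (A s).indicator (fun ω' => ϑ ω' s) ω else ϑ ω s := by
  intro t
  by_cases ht : t ∈ S
  · simpa only [ht, if_true] using (hϑ t).indicator (hA t)
  · simpa only [ht, if_false] using hϑ t

/-- Iterated locality: on `⋂ t, A t`, the value of a strategy does not change if it is cut off
outside `A t` at each time `t`. -/
lemma ae_eq_cutoff_of_locality {Ω : Type*} {mΩ : MeasurableSpace Ω} {P : Measure Ω} {T d : ℕ}
    {ℱ : Fin T → MeasurableSpace Ω} {Vh : (Ω → Fin T → Fin d → ℝ) → Ω → EReal}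
    (hA2 : ∀ (t : Fin T) (A : Set Ω), MeasurableSet[ℱ t] A →
      ∀ ϑ, AdaptedStrat ℱ ϑ →
        ∀ᵐ ω ∂P, ω ∈ A →
          Vh ϑ ω = Vh (fun ω' s => if s = t then A.indicator (fun ω'' => ϑ ω'' t) ω'
            else ϑ ω' s) ω)
    {ϑ : Ω → Fin T → Fin d → ℝ} (hϑ : AdaptedStrat ℱ ϑ) {A : Fin T → Set Ω}
    (hA : ∀ t, MeasurableSet[ℱ t] (A t)) :
    ∀ᵐ ω ∂P, (∀ t, ω ∈ A t) →
      Vh ϑ ω = Vh (fun ω' s => (A s).indicator (fun ω'' => ϑ ω'' s) ω') ω := by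
  have key (S : Finset (Fin T)) : ∀ᵐ ω ∂P, (∀ t, ω ∈ A t) → Vh ϑ ω =
      Vh (fun ω' s => if s ∈ S then (A s).indicator (fun ω'' => ϑ ω'' s) ω' else ϑ ω' s) ω := by
    induction S using Finset.induction_on with
    | empty => simp
    | insert t S ht ih =>
      filter_upwards [ih, hA2 t (A t) (hA t) _ (hϑ.cutoff hA S)] with ω h₁ h₂ hω
      rw [h₁ hω, h₂ (hω t)]
      congr 1
      funext ω' s
      by_cases hs : s = t
      · subst hs
        simp [ht]
      · simp [hs]
  simpa using key Finset.univ

lemma LinftyTendsto.ae_tendsto {Ω : Type*} {mΩ : MeasurableSpace Ω} {P : Measure Ω} {T d : ℕ}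
    {ϑn : ℕ → Ω → Fin T → Fin d → ℝ} {ϑ : Ω → Fin T → Fin d → ℝ} (h : LinftyTendsto P ϑn ϑ) :
    ∀ᵐ ω ∂P, Tendsto (fun n => ϑn n ω) atTop (𝓝 (ϑ ω)) := by
  have h' (j : ℕ) : ∃ N, ∀ n ≥ N, ∀ᵐ ω ∂P, ‖ϑn n ω - ϑ ω‖ ≤ 1 / ((j : ℝ) + 1) :=
    eventually_atTop.1 (h _ (by positivity))
  choose N hN using h'
  have hae : ∀ᵐ ω ∂P, ∀ j, ∀ n ≥ N j, ‖ϑn n ω - ϑ ω‖ ≤ 1 / ((j : ℝ) + 1) := by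
    simpa only [ae_all_iff] using hN
  filter_upwards [hae] with ω hω
  rw [Metric.tendsto_atTop]
  intro ε hε
  obtain ⟨j, hj⟩ := exists_nat_one_div_lt hε
  exact ⟨N j, fun n hn => by rw [dist_eq_norm]; exact (hω j n hn).trans_lt hj⟩

/-- If at each time `t` the strategies converge uniformly on `A t` to a limit bounded there, then
upper semicontinuity along the sequence holds a.e. on `⋂ t, A t`. -/
lemma USCModel.ae_limsup_le_on {Ω : Type*} {mΩ : MeasurableSpace Ω} {P : Measure Ω} {T d : ℕ}
    {ℱ : Fin T → MeasurableSpace Ω} {Vh : (Ω → Fin T → Fin d → ℝ) → Ω → EReal}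
    (hV : USCModel P ℱ Vh)
    (hA2 : ∀ (t : Fin T) (A : Set Ω), MeasurableSet[ℱ t] A →
      ∀ ϑ, AdaptedStrat ℱ ϑ →
        ∀ᵐ ω ∂P, ω ∈ A →
          Vh ϑ ω = Vh (fun ω' s => if s = t then A.indicator (fun ω'' => ϑ ω'' t) ω'
            else ϑ ω' s) ω)
    {ϑn : ℕ → Ω → Fin T → Fin d → ℝ} {ϑ : Ω → Fin T → Fin d → ℝ}
    (hϑn : ∀ n, AdaptedStrat ℱ (ϑn n)) (hϑ : AdaptedStrat ℱ ϑ) {A : Fin T → Set Ω}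
    (hA : ∀ t, MeasurableSet[ℱ t] (A t))
    (hunif : ∀ t, TendstoUniformlyOn (fun n ω => ϑn n ω t) (fun ω => ϑ ω t) atTop (A t))
    (hbdd : ∀ t, ∃ M : ℝ, ∀ ω ∈ A t, ‖ϑ ω t‖ ≤ M) :
    ∀ᵐ ω ∂P, (∀ t, ω ∈ A t) → limsup (fun n => Vh (ϑn n) ω) atTop ≤ Vh ϑ ω := by
  let cut (η : Ω → Fin T → Fin d → ℝ) : Ω → Fin T → Fin d → ℝ :=
    fun ω s => (A s).indicator (fun ω' => η ω' s) ω
  have hcut {η} (hη : AdaptedStrat ℱ η) : AdaptedStrat ℱ (cut η) :=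
    fun t => (hη t).indicator (hA t)
  have hconv (ε : ℝ) (hε : 0 < ε) : ∀ᶠ n in atTop, ∀ ω, ‖cut (ϑn n) ω - cut ϑ ω‖ ≤ ε := by
    have h := eventually_all.2 fun t => Metric.tendstoUniformlyOn_iff.1 (hunif t) ε hε
    filter_upwards [h] with n hn ω
    refine (pi_norm_le_iff_of_nonneg hε.le).2 fun t => ?_
    by_cases hω : ω ∈ A t
    · have := (hn t ω hω).le
      rw [dist_comm, dist_eq_norm] at this
      simpa [cut, hω] using this
    · simpa [cut, hω] using hε.le
  choose M hM using hbdd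
  have hcutbdd (ω : Ω) : ‖cut ϑ ω‖ ≤ ∑ t, |M t| := by
    refine (pi_norm_le_iff_of_nonneg (by positivity)).2 fun t => ?_
    by_cases hω : ω ∈ A t
    · have h₁ : ‖cut ϑ ω t‖ ≤ |M t| := by
        simpa [cut, hω] using (hM t ω hω).trans (le_abs_self _)
      exact h₁.trans (Finset.single_le_sum (f := fun t => |M t|)
        (fun _ _ => abs_nonneg _) (Finset.mem_univ t))
    · simp only [cut, Set.indicator_of_notMem hω, norm_zero]
      positivity
  obtain ⟨n₀, hn₀⟩ := eventually_atTop.1 (hconv 1 one_pos)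
  have husc := hV (fun n => cut (ϑn (n + n₀))) (cut ϑ) (fun n => hcut (hϑn _))
    (fun n => ⟨1 + ∑ t, |M t|, Eventually.of_forall fun ω => by
      have h₁ := hn₀ (n + n₀) (Nat.le_add_left _ _) ω
      have h₂ := norm_add_le (cut (ϑn (n + n₀)) ω - cut ϑ ω) (cut ϑ ω)
      rw [sub_add_cancel] at h₂
      linarith [hcutbdd ω]⟩)
    (hcut hϑ)
    (fun ε hε => ((tendsto_add_atTop_nat n₀).eventually (hconv ε hε)).mono
      fun n hn => Eventually.of_forall hn)
  filter_upwards [husc, ae_eq_cutoff_of_locality hA2 hϑ hA,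
    ae_all_iff.2 fun n => ae_eq_cutoff_of_locality hA2 (hϑn n) hA] with ω h₁ h₂ h₃ hω
  rw [h₂ hω, ← limsup_nat_add _ n₀]
  simpa only [fun n => h₃ n hω] using h₁

/-- a market model `V̂` is upper semicontinuous (w.r.t. `L^∞` convergence
of bounded strategies) if and only if for every sequence of adapted strategies `ϑⁿ`
converging almost surely to an adapted strategy `ϑ` one has
`limsup_n V̂(ϑⁿ) ≤ V̂(ϑ)` almost surely. -/
theorem stmt4 {Ω : Type*} {mΩ : MeasurableSpace Ω} (P : Measure Ω) [IsProbabilityMeasure P]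
    (T d : ℕ) (hT : 1 ≤ T) (hd : 1 ≤ d)
    (ℱ : Fin T → MeasurableSpace Ω) (hℱmono : Monotone ℱ) (hℱle : ∀ t, ℱ t ≤ mΩ)
    -- the market model V̂
    (Vh : (Ω → Fin T → Fin d → ℝ) → Ω → EReal)
    (hVhmeas : ∀ ϑ, AdaptedStrat ℱ ϑ → Measurable (Vh ϑ))
    (hVhnotTop : ∀ ϑ, AdaptedStrat ℱ ϑ → ∀ᵐ ω ∂P, Vh ϑ ω ≠ ⊤)
    -- (A1) normalization
    (hA1 : ∀ᵐ ω ∂P, Vh (fun _ _ _ => 0) ω = 0)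
    -- (A2) locality
    (hA2 : ∀ (t : Fin T) (A : Set Ω), MeasurableSet[ℱ t] A →
      ∀ ϑ, AdaptedStrat ℱ ϑ →
        ∀ᵐ ω ∂P, ω ∈ A →
          Vh ϑ ω = Vh (fun ω' s => if s = t then A.indicator (fun ω'' => ϑ ω'' t) ω'
            else ϑ ω' s) ω) :
    -- the equivalence
    USCModel P ℱ Vh ↔
      (∀ (ϑn : ℕ → Ω → Fin T → Fin d → ℝ) (ϑ : Ω → Fin T → Fin d → ℝ),
        (∀ n, AdaptedStrat ℱ (ϑn n)) → AdaptedStrat ℱ ϑ →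
        (∀ᵐ ω ∂P, Tendsto (fun n => ϑn n ω) atTop (nhds (ϑ ω))) →
        ∀ᵐ ω ∂P, Filter.limsup (fun n => Vh (ϑn n) ω) atTop ≤ Vh ϑ ω) := by
  refine ⟨fun hV ϑn ϑ hϑn hϑ hlim => ?_, fun h ϑn ϑ hϑn _ hϑ hlim =>
    h ϑn ϑ hϑn hϑ hlim.ae_tendsto⟩
  have hcover (t : Fin T) := exists_cover_tendstoUniformlyOn (hℱle t) P (fun n => hϑn n t) (hϑ t)
    (hlim.mono fun ω hω => tendsto_pi_nhds.1 hω t)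
  choose A hA hunif hbdd hcov using hcover
  have hon : ∀ᵐ ω ∂P, ∀ c : Fin T → ℕ × ℕ, (∀ t, ω ∈ A t (c t)) →
      limsup (fun n => Vh (ϑn n) ω) atTop ≤ Vh ϑ ω :=
    ae_all_iff.2 fun c => hV.ae_limsup_le_on hA2 hϑn hϑ (fun t => hA t (c t))
      (fun t => hunif t (c t)) fun t => hbdd t (c t)
  filter_upwards [hon, ae_all_iff.2 hcov] with ω h₁ h₂
  choose c hc using h₂
  exact h₁ c hc

end
end

section
/- Let f̂ : L^0(𝓕;ℝ^d) → L^0(𝓕;ℝ) be a one-step market model (i.e. f̂(0) = 0 a.s. and f̂ is local: f̂(ϑ)·1_A = f̂(ϑ·1_A)·1_A a.s. for all A ∈ 𝓕). If f̂ is sequentially continuous, i.e. ϑ^k → ϑ almost surely implies f̂(ϑ^k) → f̂(ϑ) almost surely, then f̂ can be represented by a Carathéodory map: there is f : Ω × ℝ^d → ℝ such that x ↦ f(ω,x) is continuous for a.e. ω, ω ↦ f(ω,x) is 𝓕-measurable for every x, and f̂(ϑ)(ω) = f(ω,ϑ(ω)) a.s. for every ϑ ∈ L^0(𝓕;ℝ^d).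 -/
open MeasureTheory Filter Topology

noncomputable section

/-- A sequence of measurable maps evaluated at a measurable random index is measurable. -/
lemma Measurable.comp_random_index {Ω β : Type*} [MeasurableSpace Ω] [MeasurableSpace β]
    {u : ℕ → Ω → β} {m : Ω → ℕ} (hu : ∀ n, Measurable (u n)) (hm : Measurable m) :
    Measurable fun ω => u (m ω) ω := by
  have h : Measurable fun p : ℕ × Ω => u p.1 p.2 := measurable_from_prod_countable_right hu
  exact h.comp (hm.prodMk measurable_id)

/-- A bounded sequence of real random variables converges along a measurable random subsequence. -/
lemma exists_measurable_subseq_tendsto_real {Ω : Type*} [MeasurableSpace Ω] {x : ℕ → Ω → ℝ}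
    (hx : ∀ n, Measurable (x n)) {C : ℝ} (hC : ∀ n ω, |x n ω| ≤ C) :
    ∃ m : ℕ → Ω → ℕ, (∀ k, Measurable (m k)) ∧ (∀ k ω, k ≤ m k ω) ∧
      ∀ ω, ∃ L, Tendsto (fun k => x (m k ω) ω) atTop (𝓝 L) := by
  classical
  set y : Ω → ℝ := fun ω => limsup (fun n => x n ω) atTop with hy
  have hym : Measurable y := Measurable.limsup hx
  have hex : ∀ (k : ℕ) (ω : Ω), ∃ n, k ≤ n ∧ |x n ω - y ω| < 1 / ((k : ℝ) + 1) := by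
    intro k ω
    have hpos : (0 : ℝ) < 1 / ((k : ℝ) + 1) := by positivity
    have hbdd : IsBoundedUnder (· ≤ ·) atTop fun n => x n ω :=
      isBoundedUnder_of ⟨C, fun n => (abs_le.1 (hC n ω)).2⟩
    have hbdd' : IsBoundedUnder (· ≥ ·) atTop fun n => x n ω :=
      isBoundedUnder_of ⟨-C, fun n => (abs_le.1 (hC n ω)).1⟩
    have h₁ : ∀ᶠ n in atTop, x n ω < y ω + 1 / ((k : ℝ) + 1) :=
      eventually_lt_of_limsup_lt (by simp only [hy]; linarith) hbdd
    have h₂ : ∃ᶠ n in atTop, y ω - 1 / ((k : ℝ) + 1) < x n ω :=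
      frequently_lt_of_lt_limsup hbdd'.isCoboundedUnder_le (by simp only [hy]; linarith)
    obtain ⟨n, h, h', hn⟩ := (h₂.and_eventually (h₁.and (eventually_ge_atTop k))).exists
    exact ⟨n, hn, abs_lt.2 ⟨by linarith, by linarith⟩⟩
  refine ⟨fun k ω => Nat.find (hex k ω), fun k => measurable_find (hex k) fun n => ?_,
    fun k ω => (Nat.find_spec (hex k ω)).1, fun ω => ⟨y ω, ?_⟩⟩
  · exact (MeasurableSet.const _).inter
      (measurableSet_lt ((hx n).sub hym).abs measurable_const)
  · rw [tendsto_iff_dist_tendsto_zero]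
    exact squeeze_zero (fun _ => dist_nonneg) (fun k => (Nat.find_spec (hex k ω)).2.le)
      tendsto_one_div_add_atTop_nhds_zero_nat

/-- A bounded sequence of random vectors converges along a measurable random subsequence. -/
lemma exists_measurable_subseq_tendsto_pi {Ω ι : Type*} [MeasurableSpace Ω] [Fintype ι]
    {x : ℕ → Ω → ι → ℝ} (hx : ∀ n, Measurable (x n)) {C : ℝ} (hC : ∀ n ω, ‖x n ω‖ ≤ C) :
    ∃ m : ℕ → Ω → ℕ, (∀ k, Measurable (m k)) ∧ (∀ k ω, k ≤ m k ω) ∧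
      ∀ ω, ∃ L, Tendsto (fun k => x (m k ω) ω) atTop (𝓝 L) := by
  classical
  suffices h : ∀ s : Finset ι, ∃ m : ℕ → Ω → ℕ, (∀ k, Measurable (m k)) ∧ (∀ k ω, k ≤ m k ω) ∧
      ∀ i ∈ s, ∀ ω, ∃ L, Tendsto (fun k => x (m k ω) ω i) atTop (𝓝 L) by
    obtain ⟨m, hm, hle, hL⟩ := h Finset.univ
    choose L hL using fun i => hL i (Finset.mem_univ i)
    exact ⟨m, hm, hle, fun ω => ⟨fun i => L i ω, tendsto_pi_nhds.2 fun i => hL i ω⟩⟩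
  intro s
  induction s using Finset.induction_on with
  | empty => exact ⟨fun k _ => k, fun _ => measurable_const, fun _ _ => le_rfl, by simp⟩
  | insert a s _ ih =>
    obtain ⟨m, hm, hle, hL⟩ := ih
    obtain ⟨r, hr, hler, hLr⟩ := exists_measurable_subseq_tendsto_real
      (x := fun k ω => x (m k ω) ω a) (C := C)
      (fun k => (measurable_pi_apply a).comp (Measurable.comp_random_index hx (hm k)))
      (fun k ω => (norm_le_pi_norm (x (m k ω) ω) a).trans (hC _ _))
    refine ⟨fun k ω => m (r k ω) ω, fun k => Measurable.comp_random_index hm (hr k),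
      fun k ω => (hler k ω).trans (hle _ _), fun i hi ω => ?_⟩
    rcases Finset.mem_insert.1 hi with rfl | hi
    · exact hLr ω
    · obtain ⟨L, h⟩ := hL i hi ω
      exact ⟨L, h.comp (tendsto_atTop_mono (fun k => hler k ω) tendsto_id)⟩

/-- `g`, viewed as a function of the points `e i`, is uniformly continuous on bounded sets. -/
def UnifContOnBounded {E : Type*} [SeminormedAddCommGroup E] (e : ℕ → E) (g : ℕ → ℝ) : Prop :=
  ∀ M N : ℕ, ∃ n : ℕ, ∀ i j, ‖e i‖ ≤ M → ‖e j‖ ≤ M → dist (e i) (e j) < 1 / ((n : ℝ) + 1) →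
    |g i - g j| < 1 / ((N : ℝ) + 1)

namespace UnifContOnBounded

variable {E : Type*} [SeminormedAddCommGroup E] {e : ℕ → E} {g : ℕ → ℝ}

lemma tendsto_dist (H : UnifContOnBounded e g) {α : Type*} {l : Filter α} {u v : α → ℕ} {x : E}
    (hu : Tendsto (fun a => e (u a)) l (𝓝 x)) (hv : Tendsto (fun a => e (v a)) l (𝓝 x)) :
    Tendsto (fun a => dist (g (u a)) (g (v a))) l (𝓝 0) := by
  rw [Metric.tendsto_nhds]
  intro ε hε
  obtain ⟨M, hM⟩ := exists_nat_gt ‖x‖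
  obtain ⟨N, hN⟩ := exists_nat_one_div_lt hε
  obtain ⟨n, hn⟩ := H M N
  have hd : Tendsto (fun a => dist (e (u a)) (e (v a))) l (𝓝 0) := by simpa using hu.dist hv
  filter_upwards [hu.norm.eventually_lt_const hM, hv.norm.eventually_lt_const hM,
    hd.eventually_lt_const (Nat.one_div_pos_of_nat (n := n))] with a h₁ h₂ h₃
  rw [Real.dist_0_eq_abs, abs_of_nonneg dist_nonneg]
  exact (hn _ _ h₁.le h₂.le h₃).trans hN

lemma tendsto_limsup (H : UnifContOnBounded e g) {s t : ℕ → ℕ} {x : E}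
    (hs : Tendsto (fun n => e (s n)) atTop (𝓝 x)) (ht : Tendsto (fun n => e (t n)) atTop (𝓝 x)) :
    Tendsto (fun n => g (t n)) atTop (𝓝 (limsup (fun n => g (s n)) atTop)) := by
  have hc : CauchySeq fun n => g (s n) := by
    rw [cauchySeq_iff_tendsto_dist_atTop_0, ← prod_atTop_atTop_eq]
    exact H.tendsto_dist (u := fun p : ℕ × ℕ => s p.1) (v := fun p : ℕ × ℕ => s p.2)
      (hs.comp tendsto_fst) (hs.comp tendsto_snd)
  obtain ⟨L, hL⟩ := cauchySeq_tendsto_of_complete hc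
  rw [hL.limsup_eq]
  exact hL.congr_dist (H.tendsto_dist hs ht)

lemma continuous_limsup (H : UnifContOnBounded e g) {s : E → ℕ → ℕ}
    (hs : ∀ x, Tendsto (fun n => e (s x n)) atTop (𝓝 x)) :
    Continuous fun x => limsup (fun n => g (s x n)) atTop := by
  rw [continuous_iff_seqContinuous]
  intro x a hx
  have hex : ∀ n : ℕ, ∃ i, dist (e i) (x n) < 1 / ((n : ℝ) + 1) ∧
      dist (g i) (limsup (fun k => g (s (x n) k)) atTop) < 1 / ((n : ℝ) + 1) := fun n => by
    have hpos : (0 : ℝ) < 1 / ((n : ℝ) + 1) := Nat.one_div_pos_of_nat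
    obtain ⟨k, hk⟩ := ((Metric.tendsto_nhds.1 (hs (x n)) _ hpos).and
      (Metric.tendsto_nhds.1 (H.tendsto_limsup (hs (x n)) (hs (x n))) _ hpos)).exists
    exact ⟨_, hk⟩
  choose t ht ht' using hex
  have h₁ : Tendsto (fun n => e (t n)) atTop (𝓝 a) := by
    refine hx.congr_dist (squeeze_zero (fun _ => dist_nonneg) (fun n => ?_)
      tendsto_one_div_add_atTop_nhds_zero_nat)
    rw [dist_comm]
    exact (ht n).le
  exact (H.tendsto_limsup (hs a) h₁).congr_dist (squeeze_zero (fun _ => dist_nonneg)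
    (fun n => (ht' n).le) tendsto_one_div_add_atTop_nhds_zero_nat)

end UnifContOnBounded

section LocalOperator

variable {Ω : Type*} {mΩ : MeasurableSpace Ω} {P : Measure Ω} {d : ℕ}
  {fh : (Ω → Fin d → ℝ) → Ω → ℝ}

/-- A local operator acts on countably-valued maps by gluing its values at constants. -/
lemma ae_eq_of_local_of_countable
    (hloc : ∀ (A : Set Ω), MeasurableSet A → ∀ ϑ : Ω → Fin d → ℝ, Measurable ϑ →
      ∀ᵐ ω ∂P, ω ∈ A → fh ϑ ω = fh (A.indicator ϑ) ω)
    (e : ℕ → Fin d → ℝ) {t : Ω → ℕ} (ht : Measurable t) :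
    ∀ᵐ ω ∂P, fh (fun ω' => e (t ω')) ω = fh (fun _ => e (t ω)) ω := by
  have hmeas : Measurable fun ω => e (t ω) := (measurable_from_nat (f := e)).comp ht
  have hA : ∀ i, MeasurableSet (t ⁻¹' {i}) := fun i => ht (measurableSet_singleton i)
  have h₁ := ae_all_iff.2 fun i => hloc _ (hA i) _ hmeas
  have h₂ := ae_all_iff.2 fun i => hloc _ (hA i) (fun _ => e i) measurable_const
  filter_upwards [h₁, h₂] with ω h₁ h₂
  rw [h₁ (t ω) rfl, h₂ (t ω) rfl]
  congr 1
  ext ω' : 1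
  by_cases h : t ω' = t ω <;> simp [Set.indicator, h]

/-- A local, sequentially continuous operator is almost surely uniformly continuous on bounded
subsets of a countable set of constants. -/
lemma ae_unifContOnBounded
    (hfmeas : ∀ ϑ : Ω → Fin d → ℝ, Measurable ϑ → Measurable (fh ϑ))
    (hloc : ∀ (A : Set Ω), MeasurableSet A → ∀ ϑ : Ω → Fin d → ℝ, Measurable ϑ →
      ∀ᵐ ω ∂P, ω ∈ A → fh ϑ ω = fh (A.indicator ϑ) ω)
    (hcont : ∀ (ϑk : ℕ → Ω → Fin d → ℝ) (ϑ : Ω → Fin d → ℝ),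
      (∀ k, Measurable (ϑk k)) → Measurable ϑ →
      (∀ᵐ ω ∂P, Tendsto (fun k => ϑk k ω) atTop (nhds (ϑ ω))) →
      ∀ᵐ ω ∂P, Tendsto (fun k => fh (ϑk k) ω) atTop (nhds (fh ϑ ω)))
    (e : ℕ → Fin d → ℝ) :
    ∀ᵐ ω ∂P, UnifContOnBounded e fun i => fh (fun _ => e i) ω := by
  classical
  refine ae_all_iff.2 fun M => ae_all_iff.2 fun N => ?_
  set g : ℕ → Ω → ℝ := fun i => fh fun _ => e i
  have hgm : ∀ i, Measurable (g i) := fun i => hfmeas _ measurable_const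
  -- Select measurably, at each scale, a pair violating the modulus whenever there is one.
  let C : ℝ := max M ‖e 0‖
  let bad : ℕ → Ω → ℕ × ℕ → Prop := fun n ω p => ‖e p.1‖ ≤ M ∧ ‖e p.2‖ ≤ M ∧
    dist (e p.1) (e p.2) < 1 / ((n : ℝ) + 1) ∧ 1 / ((N : ℝ) + 1) ≤ |g p.1 ω - g p.2 ω|
  have hbad : ∀ n p, MeasurableSet {ω | bad n ω p} := fun n p =>
    (MeasurableSet.const _).inter ((MeasurableSet.const _).inter ((MeasurableSet.const _).inter
      (measurableSet_le measurable_const ((hgm p.1).sub (hgm p.2)).abs)))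
  have hnone : ∀ n, MeasurableSet {ω | ∀ q, ¬ bad n ω q} := fun n => by
    rw [Set.ofPred_forall]
    exact MeasurableSet.iInter fun q => (hbad n q).compl
  let sel : ℕ → Ω → ℕ × ℕ → Prop := fun n ω p => bad n ω p ∨ p = (0, 0) ∧ ∀ q, ¬ bad n ω q
  have hex : ∀ n ω, ∃ k : ℕ, sel n ω k.unpair := fun n ω => by
    by_cases h : ∃ p, bad n ω p
    · obtain ⟨p, hp⟩ := h
      exact ⟨Nat.pair p.1 p.2, Or.inl (by simpa using hp)⟩
    · exact ⟨0, Or.inr ⟨Nat.unpair_zero, not_exists.1 h⟩⟩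
  let c : ℕ → Ω → ℕ := fun n ω => Nat.find (hex n ω)
  have hc : ∀ n ω, sel n ω (c n ω).unpair := fun n ω => Nat.find_spec (hex n ω)
  have hcm : ∀ n, Measurable (c n) := fun n => measurable_find (hex n) fun k =>
    (hbad n _).union ((MeasurableSet.const _).inter (hnone n))
  have hbound : ∀ n ω, ‖e (c n ω).unpair.1‖ ≤ C := fun n ω => by
    rcases hc n ω with h | h
    · exact h.1.trans (le_max_left _ _)
    · rw [h.1]; exact le_max_right _ _
  have hclose : ∀ n ω, dist (e (c n ω).unpair.1) (e (c n ω).unpair.2) < 1 / ((n : ℝ) + 1) :=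
    fun n ω => by
      rcases hc n ω with h | h
      · exact h.2.2.1
      · rw [h.1, dist_self]; exact Nat.one_div_pos_of_nat
  obtain ⟨m, hm, hle, hL⟩ := exists_measurable_subseq_tendsto_pi
    (x := fun n ω => e (c n ω).unpair.1)
    (fun n => (measurable_from_nat (f := fun k => e k.unpair.1)).comp (hcm n)) hbound
  choose L hL using hL
  have hr : ∀ k, Measurable fun ω => c (m k ω) ω := fun k =>
    Measurable.comp_random_index hcm (hm k)
  have hp : ∀ k, Measurable fun ω => (c (m k ω) ω).unpair.1 := fun k =>
    (measurable_from_nat (f := fun i => i.unpair.1)).comp (hr k)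
  have hq : ∀ k, Measurable fun ω => (c (m k ω) ω).unpair.2 := fun k =>
    (measurable_from_nat (f := fun i => i.unpair.2)).comp (hr k)
  have hpe : ∀ k, Measurable fun ω => e (c (m k ω) ω).unpair.1 := fun k =>
    (measurable_from_nat (f := e)).comp (hp k)
  have hqe : ∀ k, Measurable fun ω => e (c (m k ω) ω).unpair.2 := fun k =>
    (measurable_from_nat (f := e)).comp (hq k)
  have hLm : Measurable L := measurable_of_tendsto_metrizable hpe (tendsto_pi_nhds.2 hL)
  have hL' : ∀ ω, Tendsto (fun k => e (c (m k ω) ω).unpair.2) atTop (𝓝 (L ω)) := fun ω =>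
    (hL ω).congr_dist (squeeze_zero (fun _ => dist_nonneg)
      (fun k => (hclose (m k ω) ω).le.trans
        (Nat.one_div_le_one_div (hle k ω))) tendsto_one_div_add_atTop_nhds_zero_nat)
  filter_upwards [hcont _ L hpe hLm (ae_of_all _ hL), hcont _ L hqe hLm (ae_of_all _ hL'),
    ae_all_iff.2 fun k => ae_eq_of_local_of_countable hloc e (hp k),
    ae_all_iff.2 fun k => ae_eq_of_local_of_countable hloc e (hq k)] with ω h₁ h₂ h₃ h₄
  have hdist := h₁.dist h₂
  rw [dist_self] at hdist
  obtain ⟨k, hk⟩ := (hdist.eventually_lt_const (Nat.one_div_pos_of_nat (n := N))).exists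
  rw [h₃ k, h₄ k, Real.dist_eq] at hk
  refine ⟨m k ω, fun i j hi hj hij => ?_⟩
  rcases hc (m k ω) ω with h | h
  · exact absurd hk (not_lt.2 h.2.2.2)
  · by_contra hcon
    exact h.2 (i, j) ⟨hi, hj, hij, not_lt.1 hcon⟩

end LocalOperator

/-- a sequentially continuous one-step market model
`f̂ : L^0(𝓕;ℝ^d) → L^0(𝓕;ℝ)` can be represented by a Carathéodory map. -/
theorem stmt5 {Ω : Type*} {mΩ : MeasurableSpace Ω} (P : Measure Ω) [IsProbabilityMeasure P]
    (d : ℕ) (hd : 1 ≤ d)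
    -- the one-step market model f̂
    (fh : (Ω → Fin d → ℝ) → Ω → ℝ)
    (hfmeas : ∀ ϑ : Ω → Fin d → ℝ, Measurable ϑ → Measurable (fh ϑ))
    -- normalization: f̂(0) = 0 a.s.
    (hA1 : ∀ᵐ ω ∂P, fh (fun _ _ => 0) ω = 0)
    -- locality: f̂(ϑ)·1_A = f̂(ϑ·1_A)·1_A a.s. for all A ∈ 𝓕
    (hA2 : ∀ (A : Set Ω), MeasurableSet A → ∀ ϑ : Ω → Fin d → ℝ, Measurable ϑ →
      ∀ᵐ ω ∂P, ω ∈ A → fh ϑ ω = fh (A.indicator ϑ) ω)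
    -- sequential continuity
    (hcont : ∀ (ϑk : ℕ → Ω → Fin d → ℝ) (ϑ : Ω → Fin d → ℝ),
      (∀ k, Measurable (ϑk k)) → Measurable ϑ →
      (∀ᵐ ω ∂P, Tendsto (fun k => ϑk k ω) atTop (nhds (ϑ ω))) →
      ∀ᵐ ω ∂P, Tendsto (fun k => fh (ϑk k) ω) atTop (nhds (fh ϑ ω))) :
    -- conclusion: representation by a Carathéodory map
    ∃ f : Ω → (Fin d → ℝ) → ℝ,
      (∀ᵐ ω ∂P, Continuous (f ω)) ∧
      (∀ x : Fin d → ℝ, Measurable fun ω => f ω x) ∧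
      (∀ ϑ : Ω → Fin d → ℝ, Measurable ϑ → ∀ᵐ ω ∂P, fh ϑ ω = f ω (ϑ ω)) := by
  classical
  set e : ℕ → Fin d → ℝ := TopologicalSpace.denseSeq (Fin d → ℝ)
  have he : ∀ (x : Fin d → ℝ) (n : ℕ), ∃ i, dist x (e i) < 1 / ((n : ℝ) + 1) := fun x n =>
    (TopologicalSpace.denseRange_denseSeq (Fin d → ℝ)).exists_dist_lt x Nat.one_div_pos_of_nat
  let s : (Fin d → ℝ) → ℕ → ℕ := fun x n => Nat.find (he x n)
  have hs : ∀ x, Tendsto (fun n => e (s x n)) atTop (𝓝 x) := fun x =>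
    tendsto_const_nhds.congr_dist (squeeze_zero (fun _ => dist_nonneg)
      (fun n => (Nat.find_spec (he x n)).le) tendsto_one_div_add_atTop_nhds_zero_nat)
  have hsm : ∀ n, Measurable fun x => s x n := fun n => measurable_find (he · n) fun i =>
    measurableSet_lt (measurable_id.dist measurable_const) measurable_const
  have hunif := ae_unifContOnBounded hfmeas hA2 hcont e
  refine ⟨fun ω x => limsup (fun n => fh (fun _ => e (s x n)) ω) atTop, ?_,
    fun x => Measurable.limsup fun n => hfmeas _ measurable_const, fun ϑ hϑ => ?_⟩
  · filter_upwards [hunif] with ω H using H.continuous_limsup hs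
  · have ht : ∀ n, Measurable fun ω => s (ϑ ω) n := fun n => (hsm n).comp hϑ
    filter_upwards [hunif, hcont (fun n ω => e (s (ϑ ω) n)) ϑ
        (fun n => (measurable_from_nat (f := e)).comp (ht n)) hϑ (ae_of_all _ fun ω => hs (ϑ ω)),
      ae_all_iff.2 fun n => ae_eq_of_local_of_countable hA2 e (ht n)] with ω H h₁ h₂
    simp only [h₂] at h₁
    exact tendsto_nhds_unique h₁ (H.tendsto_limsup (hs (ϑ ω)) (hs (ϑ ω)))

end
end

section
/- Let V : Ω × ℝ^{dT} → ℝ ∪ {−∞} be a normal integrand market model satisfying the no-arbitrage condition NA. Then the market model is viable: for every finite random variable f ∈ L^0(𝓕;ℝ), the set 𝒞_f = { g ∈ L^0(𝓕;ℝ) : ∃ϑ ∈ 𝒜 with V(·,ϑ(·)) ≥ g ≥ f a.s. } of superhedgeable claims dominating f is bounded in probability. -/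
open MeasureTheory Filter Topology
open scoped ENNReal

noncomputable section

/-- The hypographical correspondence of `V` is closed valued and measurable. -/
def HypoClosedMeas {Ω : Type*} {mΩ : MeasurableSpace Ω} {T d : ℕ}
    (V : Ω → (Fin T → Fin d → ℝ) → EReal) : Prop :=
  (∀ ω, IsClosed {xb : (Fin T → Fin d → ℝ) × ℝ | (xb.2 : EReal) ≤ V ω xb.1}) ∧
  (∀ (c : (Fin T → Fin d → ℝ) × ℝ) (s : ℝ),
    MeasurableSet {ω | (Metric.ball c s ∩
      {xb : (Fin T → Fin d → ℝ) × ℝ | (xb.2 : EReal) ≤ V ω xb.1}).Nonempty})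

/-- The recession market model
`V^∞(ω,z) = lim_{λ→∞} sup { (1/δ)·V(ω,δx) : δ > λ, |x−z| < 1/λ }`; since the inner
supremum is antitone in `λ`, the limit equals the infimum over `λ > 0`. -/
def recessionModel {Ω : Type*} {T d : ℕ} (V : Ω → (Fin T → Fin d → ℝ) → EReal)
    (ω : Ω) (z : Fin T → Fin d → ℝ) : EReal :=
  ⨅ l : {l : ℝ // 0 < l}, ⨆ δ : {δ : ℝ // l.1 < δ},
    ⨆ x : {x : Fin T → Fin d → ℝ // ‖x - z‖ < 1 / l.1},
      (((δ.1)⁻¹ : ℝ) : EReal) * V ω (δ.1 • x.1)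

/-- The no-arbitrage condition NA: the only adapted strategy `ϑ` with
`V^∞(·,ϑ(·)) ≥ 0` a.s. is `ϑ = 0`. -/
def NAcond {Ω : Type*} {mΩ : MeasurableSpace Ω} {T d : ℕ} (P : Measure Ω)
    (ℱ : Fin T → MeasurableSpace Ω) (V : Ω → (Fin T → Fin d → ℝ) → EReal) : Prop :=
  ∀ ϑ, AdaptedStrat ℱ ϑ → (∀ᵐ ω ∂P, 0 ≤ recessionModel V ω (ϑ ω)) →
    ∀ᵐ ω ∂P, ϑ ω = 0

theorem exists_measurable_random_index {Ω : Type*} {m : MeasurableSpace Ω}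
    {p : ℕ → ℕ → Ω → Prop} (hp : ∀ k n, MeasurableSet {ω | p k n ω}) :
    ∃ τ : ℕ → Ω → ℕ, (∀ k, Measurable (τ k)) ∧
      ∀ k ω, (∃ n, k ≤ n ∧ p k n ω) → k ≤ τ k ω ∧ p k (τ k ω) ω := by
  classical
  have hex : ∀ k ω, ∃ n, (k ≤ n ∧ p k n ω) ∨ ¬ ∃ n, k ≤ n ∧ p k n ω := by
    intro k ω
    by_cases h : ∃ n, k ≤ n ∧ p k n ω
    · exact h.imp fun n hn => Or.inl hn
    · exact ⟨0, Or.inr h⟩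
  refine ⟨fun k ω => Nat.find (hex k ω), fun k => measurable_find (hex k) fun n => ?_,
    fun k ω h => (Nat.find_spec (hex k ω)).resolve_right (not_not.mpr h)⟩
  have hand : ∀ n, MeasurableSet {ω | k ≤ n ∧ p k n ω} := fun n =>
    (MeasurableSet.const _).inter (hp k n)
  have hexm : MeasurableSet {ω | ∃ n, k ≤ n ∧ p k n ω} := by
    convert MeasurableSet.iUnion hand using 1
    ext ω
    simp
  exact (hand n).union hexm.compl

theorem measurable_comp_random_index {Ω : Type*} {m : MeasurableSpace Ω} {u : ℕ → Ω → ℝ}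
    (hu : ∀ n, Measurable (u n)) {τ : Ω → ℕ} (hτ : Measurable τ) :
    Measurable fun ω => u (τ ω) ω := by
  have h : Measurable fun q : Ω × ℕ => u q.2 q.1 := measurable_from_prod_countable_left hu
  exact h.comp (measurable_id.prodMk hτ)

theorem exists_abs_sub_limsup_lt {u : ℕ → ℝ} {C : ℝ} (hu : ∀ᶠ n in atTop, |u n| ≤ C)
    {e : ℝ} (he : 0 < e) (k : ℕ) : ∃ n, k ≤ n ∧ |u n - limsup u atTop| < e := by
  have hle : IsBoundedUnder (· ≤ ·) atTop u :=
    isBoundedUnder_of_eventually_le (hu.mono fun n hn => (abs_le.mp hn).2)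
  have hge : IsBoundedUnder (· ≥ ·) atTop u :=
    isBoundedUnder_of_eventually_ge (hu.mono fun n hn => (abs_le.mp hn).1)
  have hfreq : ∃ᶠ n in atTop, limsup u atTop - e < u n :=
    frequently_lt_of_lt_limsup hge.isCoboundedUnder_le (by linarith)
  have hev : ∀ᶠ n in atTop, u n < limsup u atTop + e :=
    eventually_lt_of_limsup_lt (by linarith) hle
  obtain ⟨n, ⟨hn₁, hn₂⟩, hn₃⟩ :=
    ((hfreq.and_eventually hev).and_eventually (eventually_ge_atTop k)).exists
  exact ⟨n, hn₃, abs_lt.mpr ⟨by linarith, by linarith⟩⟩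

/-- Every asymptotic direction `z` of sequences in the random set `S`, known up to coordinate `j`,
vanishes: if the coordinates of `y n` from `j` on and the scale `r n → ∞` are adapted, and
`y n / r n` converges to an adapted `z` in the coordinates before `j`, then these coordinates
of `z` are zero. -/
def NoDirectionBefore {Ω : Type*} {mΩ : MeasurableSpace Ω} {N : ℕ} (P : Measure Ω)
    (𝒢 : Fin N → MeasurableSpace Ω) (S : Ω → Set (Fin N → ℝ)) (j : ℕ) : Prop :=
  ∀ (y : ℕ → Ω → Fin N → ℝ) (r : ℕ → Ω → ℝ) (z : Ω → Fin N → ℝ),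
    (∀ s : Fin N, j ≤ s → ∀ n, Measurable[𝒢 s] fun ω => y n ω s) →
    (∀ s : Fin N, j ≤ s → ∀ n, Measurable[𝒢 s] (r n)) →
    (∀ s : Fin N, (s : ℕ) < j → Measurable[𝒢 s] fun ω => z ω s) →
    (∀ᵐ ω ∂P, ∀ n, y n ω ∈ S ω) →
    (∀ᵐ ω ∂P, Tendsto (fun n => r n ω) atTop atTop) →
    (∀ᵐ ω ∂P, ∀ s : Fin N, (s : ℕ) < j →
      Tendsto (fun n => y n ω s / r n ω) atTop (𝓝 (z ω s))) →
    ∀ᵐ ω ∂P, ∀ s : Fin N, (s : ℕ) < j → z ω s = 0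

section

variable {Ω : Type*} {mΩ : MeasurableSpace Ω} {N : ℕ} {P : Measure Ω}
  {𝒢 : Fin N → MeasurableSpace Ω} {S : Ω → Set (Fin N → ℝ)}

theorem NoDirectionBefore.ae_eventually_mul_le (h𝒢 : Monotone 𝒢)
    (hS0 : ∀ᵐ ω ∂P, (0 : Fin N → ℝ) ∈ S ω) {j : Fin N}
    (hj : NoDirectionBefore P 𝒢 S (j + 1)) {y : ℕ → Ω → Fin N → ℝ} {r : ℕ → Ω → ℝ}
    (hy : ∀ s : Fin N, j ≤ s → ∀ n, Measurable[𝒢 s] fun ω => y n ω s)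
    (hr : ∀ n, Measurable[𝒢 j] (r n))
    (hyS : ∀ᵐ ω ∂P, ∀ n, y n ω ∈ S ω)
    (hr_top : ∀ᵐ ω ∂P, Tendsto (fun n => r n ω) atTop atTop)
    (hbdd : ∀ᵐ ω ∂P, ∀ s : Fin N, s < j → ∃ C, ∀ᶠ n in atTop, |y n ω s / r n ω| ≤ C)
    {c : ℝ} (hc : c * c = 1) :
    ∀ᵐ ω ∂P, ∃ k : ℕ, ∀ n, k ≤ n → c * (y n ω j / r n ω) ≤ k := by
  classical
  have hp : ∀ k n : ℕ, MeasurableSet[𝒢 j] {ω | (k : ℝ) < c * (y n ω j / r n ω)} := fun k n =>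
    measurableSet_lt (@measurable_const _ _ _ (𝒢 j) _)
      (((hy j le_rfl n).div (hr n)).const_mul c)
  obtain ⟨τ, hτ, hτp⟩ := @exists_measurable_random_index _ (𝒢 j) _ hp
  obtain ⟨B, hmem⟩ : ∃ B : Set Ω, ∀ ω, ω ∈ B ↔
      ∀ k : ℕ, ∃ n, k ≤ n ∧ (k : ℝ) < c * (y n ω j / r n ω) := ⟨{ω | _}, fun ω => Iff.rfl⟩
  have hB : MeasurableSet[𝒢 j] B := by
    have : B = ⋂ k : ℕ, ⋃ n : ℕ, ⋃ _ : k ≤ n, {ω | (k : ℝ) < c * (y n ω j / r n ω)} := by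
      ext ω
      simp [hmem]
    rw [this]
    exact @MeasurableSet.iInter _ _ (𝒢 j) _ _ fun k => @MeasurableSet.iUnion _ _ (𝒢 j) _ _ fun n =>
      @MeasurableSet.iUnion _ _ (𝒢 j) _ _ fun _ => hp k n
  have key := hj (fun k ω => if ω ∈ B then y (τ k ω) ω else 0)
    (fun k ω => if ω ∈ B then c * y (τ k ω) ω j else k)
    (fun ω s => if ω ∈ B then (if s = j then c else 0) else 0) ?_ ?_ ?_ ?_ ?_ ?_
  · filter_upwards [key] with ω hω
    by_contra hcon
    push Not at hcon
    have hωB : ω ∈ B := (hmem ω).2 hcon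
    have h0 := hω j (Nat.lt_succ_self _)
    simp only [hωB, if_true] at h0
    simp [h0] at hc
  · intro s hs n
    have hjs : j ≤ s := by
      rw [Fin.le_def]
      omega
    have hτs : Measurable[𝒢 s] (τ n) := (hτ n).mono (h𝒢 hjs) le_rfl
    have hm : Measurable[𝒢 s] fun ω => if ω ∈ B then y (τ n ω) ω s else 0 :=
      Measurable.ite (p := fun ω => ω ∈ B) (h𝒢 hjs _ hB)
        (@measurable_comp_random_index _ (𝒢 s) _ (hy s hjs) _ hτs) (@measurable_const _ _ _ (𝒢 s) _)
    convert hm using 2 with ω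
    split_ifs <;> rfl
  · intro s hs n
    have hjs : j ≤ s := by
      rw [Fin.le_def]
      omega
    have hm : Measurable[𝒢 j] fun ω => if ω ∈ B then c * y (τ n ω) ω j else (n : ℝ) :=
      Measurable.ite (p := fun ω => ω ∈ B) hB
        ((@measurable_comp_random_index _ (𝒢 j) _ (hy j le_rfl) _ (hτ n)).const_mul c)
        (@measurable_const _ _ _ (𝒢 j) _)
    exact hm.mono (h𝒢 hjs) le_rfl
  · intro s hs
    by_cases hsj : s = j
    · subst hsj
      exact Measurable.ite (p := fun ω => ω ∈ B) hB (@measurable_const _ _ _ (𝒢 s) _)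
        (@measurable_const _ _ _ (𝒢 s) _)
    · simp only [hsj, if_false, ite_self]
      exact @measurable_const _ _ _ (𝒢 s) _
  · filter_upwards [hyS, hS0] with ω h1 h2 n
    split_ifs
    · exact h1 _
    · exact h2
  · filter_upwards [hr_top] with ω h1
    by_cases hωB : ω ∈ B
    · simp only [hωB, if_true]
      have hτk : Tendsto (fun k => τ k ω) atTop atTop :=
        tendsto_atTop_mono (fun k => (hτp k ω ((hmem ω).1 hωB k)).1) tendsto_id
      have hrτ := h1.comp hτk
      refine tendsto_atTop_mono' _ ?_ hrτ
      filter_upwards [hrτ.eventually_gt_atTop 0, eventually_ge_atTop 1] with k (hk : 0 < r (τ k ω) ω) hk1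
      have h2 := (hτp k ω ((hmem ω).1 hωB k)).2
      rw [← mul_div_assoc, lt_div_iff₀ hk] at h2
      have hk1' : (1 : ℝ) ≤ k := by exact_mod_cast hk1
      simp only [Function.comp_apply]
      nlinarith
    · simp only [hωB, if_false]
      exact tendsto_natCast_atTop_atTop
  · filter_upwards [hr_top, hbdd] with ω h1 h2 s hs
    by_cases hωB : ω ∈ B
    swap
    · simp [hωB]
    simp only [hωB, if_true]
    have hτk : Tendsto (fun k => τ k ω) atTop atTop :=
      tendsto_atTop_mono (fun k => (hτp k ω ((hmem ω).1 hωB k)).1) tendsto_id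
    have hrτ := h1.comp hτk
    have hlt : ∀ᶠ k : ℕ in atTop, 0 < r (τ k ω) ω ∧ (0 : ℝ) < k ∧
        k * r (τ k ω) ω < c * y (τ k ω) ω j := by
      filter_upwards [hrτ.eventually_gt_atTop 0, eventually_ge_atTop 1] with k (hk : 0 < r (τ k ω) ω) hk1
      have h3 := (hτp k ω ((hmem ω).1 hωB k)).2
      rw [← mul_div_assoc, lt_div_iff₀ hk] at h3
      exact ⟨hk, by exact_mod_cast hk1, h3⟩
    by_cases hsj : s = j
    · subst hsj
      simp only [if_true]
      refine tendsto_const_nhds.congr' ?_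
      filter_upwards [hlt] with k ⟨hk, hk0, hk3⟩
      have hpos : 0 < c * y (τ k ω) ω s := (mul_pos hk0 hk).trans hk3
      rw [eq_div_iff hpos.ne', ← mul_assoc, hc, one_mul]
    · simp only [hsj, if_false]
      obtain ⟨C, hC⟩ := h2 s (lt_of_le_of_ne (by rw [Fin.le_def]; omega) hsj)
      have hlim : Tendsto (fun k : ℕ => C / (k : ℝ)) atTop (𝓝 0) :=
        tendsto_const_div_atTop_nhds_zero_nat C
      refine squeeze_zero_norm' ?_ hlim
      filter_upwards [hlt, hτk.eventually hC] with k ⟨hk, hk0, hk3⟩ hkC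
      have hpos : 0 < c * y (τ k ω) ω j := (mul_pos hk0 hk).trans hk3
      rw [abs_div, abs_of_pos hk, div_le_iff₀ hk] at hkC
      have hC0 : 0 ≤ C := nonneg_of_mul_nonneg_left ((abs_nonneg _).trans hkC) hk
      rw [Real.norm_eq_abs, abs_div, abs_of_pos hpos, div_le_div_iff₀ hpos hk0]
      nlinarith

theorem NoDirectionBefore.ae_bounded (h𝒢 : Monotone 𝒢)
    (hS0 : ∀ᵐ ω ∂P, (0 : Fin N → ℝ) ∈ S ω) {j : Fin N}
    (hj : NoDirectionBefore P 𝒢 S (j + 1)) {y : ℕ → Ω → Fin N → ℝ} {r : ℕ → Ω → ℝ}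
    (hy : ∀ s : Fin N, j ≤ s → ∀ n, Measurable[𝒢 s] fun ω => y n ω s)
    (hr : ∀ n, Measurable[𝒢 j] (r n))
    (hyS : ∀ᵐ ω ∂P, ∀ n, y n ω ∈ S ω)
    (hr_top : ∀ᵐ ω ∂P, Tendsto (fun n => r n ω) atTop atTop)
    (hbdd : ∀ᵐ ω ∂P, ∀ s : Fin N, s < j → ∃ C, ∀ᶠ n in atTop, |y n ω s / r n ω| ≤ C) :
    ∀ᵐ ω ∂P, ∃ C, ∀ᶠ n in atTop, |y n ω j / r n ω| ≤ C := by
  filter_upwards [hj.ae_eventually_mul_le h𝒢 hS0 hy hr hyS hr_top hbdd (c := 1) (by norm_num),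
    hj.ae_eventually_mul_le h𝒢 hS0 hy hr hyS hr_top hbdd (c := -1) (by norm_num)]
    with ω ⟨k, hk⟩ ⟨l, hl⟩
  refine ⟨max k l, ?_⟩
  filter_upwards [eventually_ge_atTop k, eventually_ge_atTop l] with n hnk hnl
  have h1 := hk n hnk
  have h2 := hl n hnl
  refine abs_le.mpr ⟨?_, ?_⟩
  · have := le_max_right (k : ℝ) l
    linarith
  · have := le_max_left (k : ℝ) l
    linarith

theorem NoDirectionBefore.of_succ (h𝒢 : Monotone 𝒢)
    (hS0 : ∀ᵐ ω ∂P, (0 : Fin N → ℝ) ∈ S ω) {j : Fin N}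
    (hj : NoDirectionBefore P 𝒢 S (j + 1)) : NoDirectionBefore P 𝒢 S j := by
  intro y r z hy hr hz hyS hr_top hlim
  have hbdd := hj.ae_bounded h𝒢 hS0 hy (hr j le_rfl) hyS hr_top <| by
    filter_upwards [hlim] with ω hω s hs
    obtain ⟨C, hC⟩ := (hω s hs).abs.isBoundedUnder_le
    exact ⟨C, hC⟩
  have hu : ∀ n, Measurable[𝒢 j] fun ω => y n ω j / r n ω := fun n =>
    (hy j le_rfl n).div (hr j le_rfl n)
  set L : Ω → ℝ := fun ω => limsup (fun n => y n ω j / r n ω) atTop with hL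
  have hLm : Measurable[𝒢 j] L := Measurable.limsup hu
  obtain ⟨τ, hτ, hτp⟩ := @exists_measurable_random_index _ (𝒢 j)
    (fun k n ω => |y n ω j / r n ω - L ω| < 1 / ((k : ℝ) + 1)) fun k n =>
      measurableSet_lt (measurable_abs.comp ((hu n).sub hLm))
        (@measurable_const _ _ _ (𝒢 j) _)
  have hτ_spec : ∀ᵐ ω ∂P, ∀ k, k ≤ τ k ω ∧
      |y (τ k ω) ω j / r (τ k ω) ω - L ω| < 1 / ((k : ℝ) + 1) := by
    filter_upwards [hbdd] with ω ⟨C, hC⟩ k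
    exact hτp k ω (exists_abs_sub_limsup_lt hC (by positivity) k)
  have hτ_top : ∀ᵐ ω ∂P, Tendsto (fun k => τ k ω) atTop atTop := by
    filter_upwards [hτ_spec] with ω hω
    exact tendsto_atTop_mono (fun k => (hω k).1) tendsto_id
  have key := hj (fun k ω => y (τ k ω) ω) (fun k ω => r (τ k ω) ω)
    (fun ω => Function.update (z ω) j (L ω)) ?_ ?_ ?_ ?_ ?_ ?_
  · filter_upwards [key] with ω hω s hs
    have := hω s (Nat.lt_succ_of_lt hs)
    rwa [Function.update_of_ne (Fin.ne_of_lt hs)] at this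
  · intro s hs n
    have hjs : j ≤ s := by
      rw [Fin.le_def]
      omega
    exact @measurable_comp_random_index _ (𝒢 s) _ (hy s hjs) _ ((hτ n).mono (h𝒢 hjs) le_rfl)
  · intro s hs n
    have hjs : j ≤ s := by
      rw [Fin.le_def]
      omega
    exact @measurable_comp_random_index _ (𝒢 s) _ (hr s hjs) _ ((hτ n).mono (h𝒢 hjs) le_rfl)
  · intro s hs
    by_cases hsj : s = j
    · subst hsj
      simpa using hLm
    · simp only [Function.update_of_ne hsj]
      exact hz s (lt_of_le_of_ne (Nat.lt_succ_iff.mp hs) fun h => hsj (Fin.ext h))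
  · filter_upwards [hyS] with ω hω n
    exact hω _
  · filter_upwards [hr_top, hτ_top] with ω h1 h2
    exact h1.comp h2
  · filter_upwards [hlim, hτ_top, hτ_spec] with ω h1 h2 h3 s hs
    by_cases hsj : s = j
    · subst hsj
      simp only [Function.update_self]
      rw [tendsto_iff_norm_sub_tendsto_zero]
      exact squeeze_zero (fun _ => norm_nonneg _) (fun k => (h3 k).2.le)
        tendsto_one_div_add_atTop_nhds_zero_nat
    · simp only [Function.update_of_ne hsj]
      exact (h1 s (lt_of_le_of_ne (Nat.lt_succ_iff.mp hs) fun h => hsj (Fin.ext h))).comp h2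

theorem NoDirectionBefore.of_le (h𝒢 : Monotone 𝒢)
    (hS0 : ∀ᵐ ω ∂P, (0 : Fin N → ℝ) ∈ S ω) (hN : NoDirectionBefore P 𝒢 S N) {j : ℕ}
    (hjN : j ≤ N) : NoDirectionBefore P 𝒢 S j := by
  induction hjN using Nat.decreasingInduction with
  | self => exact hN
  | of_succ k hk ih => exact NoDirectionBefore.of_succ (j := ⟨k, hk⟩) h𝒢 hS0 ih

/-- Adapted sequences in a random set without asymptotic directions grow at most linearly. -/
theorem NoDirectionBefore.ae_linear_growth (h𝒢 : Monotone 𝒢)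
    (hS0 : ∀ᵐ ω ∂P, (0 : Fin N → ℝ) ∈ S ω) (hN : NoDirectionBefore P 𝒢 S N)
    {y : ℕ → Ω → Fin N → ℝ} (hy : ∀ s n, Measurable[𝒢 s] fun ω => y n ω s)
    (hyS : ∀ᵐ ω ∂P, ∀ n, y n ω ∈ S ω) :
    ∀ᵐ ω ∂P, ∀ s, ∃ C, ∀ᶠ n in atTop, |y n ω s / (n : ℝ)| ≤ C := by
  rw [ae_all_iff]
  intro s
  induction s using WellFoundedLT.induction with
  | ind s ih =>
    refine (hN.of_le h𝒢 hS0 s.isLt).ae_bounded h𝒢 hS0 (r := fun n _ => (n : ℝ))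
      (fun t _ => hy t) (fun n => @measurable_const _ _ _ (𝒢 s) _) hyS
      (Eventually.of_forall fun _ => tendsto_natCast_atTop_atTop) ?_
    rw [ae_all_iff]
    intro t
    by_cases hts : t < s
    · filter_upwards [ih t hts] with ω hω _ using hω
    · exact Eventually.of_forall fun ω h => absurd h hts

end

theorem recessionModel_nonneg_of_tendsto {Ω : Type*} {T d : ℕ}
    {V : Ω → (Fin T → Fin d → ℝ) → EReal} {ω : Ω} {a : ℝ} {x : ℕ → Fin T → Fin d → ℝ}
    {r : ℕ → ℝ} {z : Fin T → Fin d → ℝ} (hx : ∀ n, (a : EReal) ≤ V ω (x n))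
    (hr : Tendsto r atTop atTop) (hz : Tendsto (fun n => (r n)⁻¹ • x n) atTop (𝓝 z)) :
    0 ≤ recessionModel V ω z := by
  refine le_iInf fun l => ?_
  have hlim : Tendsto (fun n => (((r n)⁻¹ * a : ℝ) : EReal)) atTop (𝓝 0) := by
    have h := (tendsto_inv_atTop_zero.comp hr).mul_const a
    rw [zero_mul] at h
    exact (continuous_coe_real_ereal.tendsto 0).comp h
  refine le_of_tendsto hlim ?_
  have hnear : ∀ᶠ n in atTop, ‖(r n)⁻¹ • x n - z‖ < 1 / l.1 := by
    have h := hz.eventually (Metric.ball_mem_nhds z (one_div_pos.mpr l.2))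
    simpa [dist_eq_norm] using h
  filter_upwards [hnear, hr.eventually_gt_atTop l.1] with n hn hrn
  have hrpos : 0 < r n := l.2.trans hrn
  refine le_iSup_of_le ⟨r n, hrn⟩ (le_iSup_of_le ⟨(r n)⁻¹ • x n, hn⟩ ?_)
  dsimp only
  rw [smul_inv_smul₀ hrpos.ne', EReal.coe_mul]
  exact mul_le_mul_of_nonneg_left (hx n) (EReal.coe_nonneg.mpr (inv_nonneg.mpr hrpos.le))

theorem AdaptedStrat.measurable {Ω : Type*} {mΩ : MeasurableSpace Ω} {T d : ℕ}
    {ℱ : Fin T → MeasurableSpace Ω} (hℱle : ∀ t, ℱ t ≤ mΩ) {ϑ : Ω → Fin T → Fin d → ℝ}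
    (hϑ : AdaptedStrat ℱ ϑ) : Measurable ϑ :=
  measurable_pi_iff.mpr fun t => (hϑ t).mono (hℱle t) le_rfl

theorem NAcond.tendsto_inv_sq_smul {Ω : Type*} {mΩ : MeasurableSpace Ω} {P : Measure Ω} {T d : ℕ}
    {ℱ : Fin T → MeasurableSpace Ω} (hℱmono : Monotone ℱ)
    {V : Ω → (Fin T → Fin d → ℝ) → EReal} (hV0 : ∀ᵐ ω ∂P, V ω 0 = 0) (hNA : NAcond P ℱ V)
    {f : Ω → ℝ} {ϑ : ℕ → Ω → Fin T → Fin d → ℝ} (hϑ : ∀ n, AdaptedStrat ℱ (ϑ n))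
    (hϑV : ∀ n, ∀ᵐ ω ∂P, (f ω : EReal) ≤ V ω (ϑ n ω)) :
    ∀ᵐ ω ∂P, Tendsto (fun n : ℕ => ((n : ℝ) ^ 2)⁻¹ • ϑ n ω) atTop (𝓝 0) := by
  have hdiv : ∀ (t : Fin T) (i : Fin d), (finProdFinEquiv (t, i)).divNat = t := fun t i =>
    congrArg Prod.fst (finProdFinEquiv.symm_apply_apply (t, i))
  have hmod : ∀ (t : Fin T) (i : Fin d), (finProdFinEquiv (t, i)).modNat = i := fun t i =>
    congrArg Prod.snd (finProdFinEquiv.symm_apply_apply (t, i))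
  set 𝒢 : Fin (T * d) → MeasurableSpace Ω := fun s => ℱ s.divNat
  set S : Ω → Set (Fin (T * d) → ℝ) := fun ω =>
    {x | ((min (f ω) 0 : ℝ) : EReal) ≤ V ω fun t i => x (finProdFinEquiv (t, i))}
  have h𝒢 : Monotone 𝒢 := fun s t hst => hℱmono (Nat.div_le_div_right hst)
  have hS0 : ∀ᵐ ω ∂P, (0 : Fin (T * d) → ℝ) ∈ S ω := by
    filter_upwards [hV0] with ω hω
    change ((min (f ω) 0 : ℝ) : EReal) ≤ V ω 0
    rw [hω]
    exact_mod_cast min_le_right (f ω) 0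
  have hN : NoDirectionBefore P 𝒢 S (T * d) := by
    intro y r z _ _ hz hyS hr hlim
    have hzero := hNA (fun ω t i => z ω (finProdFinEquiv (t, i))) ?_ ?_
    · filter_upwards [hzero] with ω hω s _
      have h := congrFun (congrFun hω s.divNat) s.modNat
      have hs : finProdFinEquiv (s.divNat, s.modNat) = s := finProdFinEquiv.apply_symm_apply s
      simpa [hs] using h
    · intro t
      refine @measurable_pi_iff _ _ _ (ℱ t) _ _ |>.mpr fun i => ?_
      have h := hz (finProdFinEquiv (t, i)) (Fin.isLt _)
      have h𝒢t : 𝒢 (finProdFinEquiv (t, i)) = ℱ t := congrArg ℱ (hdiv t i)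
      rwa [h𝒢t] at h
    · filter_upwards [hyS, hr, hlim] with ω h1 h2 h3
      refine recessionModel_nonneg_of_tendsto h1 h2 ?_
      refine tendsto_pi_nhds.mpr fun t => tendsto_pi_nhds.mpr fun i => ?_
      refine (h3 (finProdFinEquiv (t, i)) (Fin.isLt _)).congr fun n => ?_
      simp [div_eq_inv_mul]
  have hgrowth := hN.ae_linear_growth h𝒢 hS0
    (y := fun n ω s => ϑ n ω s.divNat s.modNat)
    (fun s n => (@measurable_pi_iff _ _ _ (ℱ s.divNat) _ _ |>.mp (hϑ n s.divNat)) s.modNat) ?_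
  · filter_upwards [hgrowth] with ω hω
    refine tendsto_pi_nhds.mpr fun t => tendsto_pi_nhds.mpr fun i => ?_
    obtain ⟨C, hC⟩ := hω (finProdFinEquiv (t, i))
    simp only [hdiv, hmod] at hC
    refine squeeze_zero_norm' ?_ (tendsto_const_div_atTop_nhds_zero_nat C)
    filter_upwards [hC] with n hn
    calc ‖(((n : ℝ) ^ 2)⁻¹ • ϑ n ω) t i‖ = |ϑ n ω t i / n| / n := by
          simp only [Pi.smul_apply, smul_eq_mul, Real.norm_eq_abs, abs_mul, abs_inv, abs_div,
            abs_pow, Nat.abs_cast]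
          ring
      _ ≤ C / n := by gcongr
  · filter_upwards [ae_all_iff.mpr hϑV] with ω hω n
    change ((min (f ω) 0 : ℝ) : EReal) ≤ V ω _
    refine le_trans (by exact_mod_cast min_le_left (f ω) 0) ((hω n).trans (le_of_eq ?_))
    congr 1
    ext t i
    simp only [hdiv, hmod]

theorem tendsto_measure_zero_of_ae_eventually_notMem {Ω : Type*} {mΩ : MeasurableSpace Ω}
    {P : Measure Ω} [IsFiniteMeasure P] {A : ℕ → Set Ω} (hA : ∀ n, MeasurableSet (A n))
    (h : ∀ᵐ ω ∂P, ∀ᶠ n in atTop, ω ∉ A n) : Tendsto (fun n => P (A n)) atTop (𝓝 0) := by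
  rw [← measure_empty (μ := P)]
  refine tendsto_measure_of_ae_tendsto_indicator_of_isFiniteMeasure _ MeasurableSet.empty hA ?_
  filter_upwards [h] with ω hω
  exact hω.mono fun n hn => iff_of_false hn (Set.notMem_empty ω)

/-- The adapted strategies whose outcome dominates a fixed claim are bounded in probability. -/
theorem NAcond.exists_measure_norm_lt {Ω : Type*} {mΩ : MeasurableSpace Ω} {P : Measure Ω}
    [IsFiniteMeasure P] {T d : ℕ}
    {ℱ : Fin T → MeasurableSpace Ω} (hℱmono : Monotone ℱ) (hℱle : ∀ t, ℱ t ≤ mΩ)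
    {V : Ω → (Fin T → Fin d → ℝ) → EReal} (hV0 : ∀ᵐ ω ∂P, V ω 0 = 0) (hNA : NAcond P ℱ V)
    (f : Ω → ℝ) {ε : ℝ≥0∞} (hε : 0 < ε) :
    ∃ K : ℝ, 0 ≤ K ∧ ∀ ϑ, AdaptedStrat ℱ ϑ → (∀ᵐ ω ∂P, (f ω : EReal) ≤ V ω (ϑ ω)) →
      P {ω | K ≤ ‖ϑ ω‖} < ε := by
  by_contra! hcon
  choose ϑ hϑ hϑV hϑP using fun n : ℕ => hcon ((n : ℝ) ^ 2) (sq_nonneg _)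
  have hlim := tendsto_measure_zero_of_ae_eventually_notMem (P := P)
    (A := fun n : ℕ => {ω | (n : ℝ) ^ 2 ≤ ‖ϑ n ω‖})
    (fun n => measurableSet_le measurable_const ((hϑ n).measurable hℱle).norm) ?_
  · obtain ⟨n, hn⟩ := (hlim.eventually_lt_const hε).exists
    exact absurd hn (not_lt.mpr (hϑP n))
  · filter_upwards [hNA.tendsto_inv_sq_smul hℱmono hV0 hϑ hϑV] with ω hω
    have hnorm := hω.norm
    rw [norm_zero] at hnorm
    filter_upwards [hnorm.eventually_lt_const one_pos, eventually_gt_atTop 0] with n hn hn0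
    have hpos : (0 : ℝ) < (n : ℝ) ^ 2 := by positivity
    rw [norm_smul, norm_inv, Real.norm_of_nonneg hpos.le, inv_mul_lt_iff₀ hpos, mul_one] at hn
    exact not_le.mpr hn

theorem UpperSemicontinuous.exists_real_bound_closedBall {E : Type*} [NormedAddCommGroup E]
    [ProperSpace E] {v : E → EReal} (hv : UpperSemicontinuous v) (htop : ∀ x, v x ≠ ⊤)
    {K : ℝ} (hK : 0 ≤ K) : ∃ b : ℝ, ∀ x, ‖x‖ ≤ K → v x ≤ b := by
  obtain ⟨x₀, -, hmax⟩ := UpperSemicontinuousOn.exists_isMaxOn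
    (Metric.nonempty_closedBall.mpr hK) (isCompact_closedBall (0 : E) K)
    (hv.upperSemicontinuousOn _)
  refine ⟨(v x₀).toReal, fun x hx => ?_⟩
  exact (hmax (mem_closedBall_zero_iff.mpr hx)).trans (EReal.le_coe_toReal (htop x₀))

/-- a normal integrand market model satisfying NA is viable: for every
finite random variable `f`, the set `𝒞_f` of superhedgeable claims dominating `f` is
bounded in probability. -/
theorem stmt6 {Ω : Type*} {mΩ : MeasurableSpace Ω} (P : Measure Ω) [IsProbabilityMeasure P]
    (T d : ℕ) (hT : 1 ≤ T) (hd : 1 ≤ d)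
    (ℱ : Fin T → MeasurableSpace Ω) (hℱmono : Monotone ℱ) (hℱle : ∀ t, ℱ t ≤ mΩ)
    -- V is a normal integrand market model:
    (V : Ω → (Fin T → Fin d → ℝ) → EReal)
    (hVjm : Measurable (Function.uncurry V))
    (hV0 : ∀ᵐ ω ∂P, V ω 0 = 0)
    (hVnotTop : ∀ ω x, V ω x ≠ ⊤)
    (hVusc : ∀ᵐ ω ∂P, UpperSemicontinuous (V ω))
    (hVhypo : HypoClosedMeas (mΩ := mΩ) V)
    -- satisfying the no-arbitrage condition:
    (hNA : NAcond P ℱ V)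
    (f : Ω → ℝ) (hf : Measurable f) :
    -- 𝒞_f is bounded in probability
    ∀ ε : ℝ, 0 < ε → ∃ M : ℝ, 0 < M ∧
      ∀ g : Ω → ℝ, Measurable g →
        (∃ ϑ, AdaptedStrat ℱ ϑ ∧
          ∀ᵐ ω ∂P, f ω ≤ g ω ∧ (g ω : EReal) ≤ V ω (ϑ ω)) →
        P {ω | M ≤ |g ω|} < ENNReal.ofReal ε := by
  intro ε hε
  have hε2 : 0 < ENNReal.ofReal (ε / 2) := ENNReal.ofReal_pos.mpr (half_pos hε)
  obtain ⟨K, hK, hKP⟩ := hNA.exists_measure_norm_lt hℱmono hℱle hV0 f hε2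
  by_contra! hcon
  choose g hg hgV hgP using fun n : ℕ => hcon ((n : ℝ) + 1) (by positivity)
  choose ϑ hϑ hϑV using hgV
  have hlim := tendsto_measure_zero_of_ae_eventually_notMem (P := P)
    (A := fun n : ℕ => {ω | (n : ℝ) + 1 ≤ |g n ω|} ∩ {ω | ‖ϑ n ω‖ < K})
    (fun n => (measurableSet_le measurable_const (measurable_abs.comp (hg n))).inter
      (measurableSet_lt ((hϑ n).measurable hℱle).norm measurable_const)) ?_
  · obtain ⟨n, hn⟩ := (hlim.eventually_lt_const hε2).exists
    have hdom : ∀ᵐ ω ∂P, (f ω : EReal) ≤ V ω (ϑ n ω) := by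
      filter_upwards [hϑV n] with ω hω
      exact (EReal.coe_le_coe_iff.mpr hω.1).trans hω.2
    refine absurd (hgP n) (not_le.mpr ?_)
    calc P {ω | (n : ℝ) + 1 ≤ |g n ω|}
        ≤ P (({ω | (n : ℝ) + 1 ≤ |g n ω|} ∩ {ω | ‖ϑ n ω‖ < K}) ∪ {ω | K ≤ ‖ϑ n ω‖}) := by
          refine measure_mono fun ω hω => ?_
          rcases lt_or_ge ‖ϑ n ω‖ K with h | h
          · exact Or.inl ⟨hω, h⟩
          · exact Or.inr h
      _ ≤ _ := measure_union_le _ _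
      _ < ENNReal.ofReal (ε / 2) + ENNReal.ofReal (ε / 2) :=
          ENNReal.add_lt_add hn (hKP (ϑ n) (hϑ n) hdom)
      _ = ENNReal.ofReal ε := by
          rw [← ENNReal.ofReal_add (half_pos hε).le (half_pos hε).le, add_halves]
  · filter_upwards [ae_all_iff.mpr hϑV, hVusc] with ω hω husc
    obtain ⟨b, hb⟩ := husc.exists_real_bound_closedBall (hVnotTop ω) hK
    obtain ⟨m, hm⟩ := exists_nat_ge (max b (-f ω))
    filter_upwards [eventually_ge_atTop m] with n hn
    rintro ⟨h1 : (n : ℝ) + 1 ≤ |g n ω|, h2 : ‖ϑ n ω‖ < K⟩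
    have hgb : g n ω ≤ b := EReal.coe_le_coe_iff.mp ((hω n).2.trans (hb _ h2.le))
    have hmn : (m : ℝ) ≤ n := by exact_mod_cast hn
    have hbm := (le_max_left _ _).trans hm
    have hfm := (le_max_right _ _).trans hm
    rcases le_abs.mp h1 with h | h
    · linarith
    · linarith [(hω n).1]

end
end

section
/- Let V : Ω × ℝ^{dT} → ℝ ∪ {−∞} be a normal integrand market model satisfying the no-arbitrage condition NA, and let f ∈ L^0(𝓕;ℝ) be a random variable. Then the set 𝒜_f = { ϑ ∈ 𝒜 : V(·,ϑ(·)) ≥ f a.s. } of strategies superhedging f is bounded in probability (as a subset of L^0(𝓕;ℝ^{dT})). -/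
open MeasureTheory Filter Topology
open scoped ENNReal

noncomputable section

section AsymptoticDirections

variable {Ω : Type*}

/-- The size `1 + ∑ i < k, |X n i ω|` of the first `k` coordinates of the `n`-th sequence. -/
def partialSize (X : ℕ → ℕ → Ω → ℝ) (k n : ℕ) (ω : Ω) : ℝ :=
  1 + ∑ i ∈ Finset.range k, |X n i ω|

/-- The event that, along a subsequence, `s * X n k` grows faster than all earlier coordinates. -/
def blowUp (X : ℕ → ℕ → Ω → ℝ) (s : ℝ) (k : ℕ) : Set Ω :=
  {ω | ∀ m : ℕ, ∃ n : ℕ, m * partialSize X k n ω < s * X n k ω}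

/-- The pairs `(n, a)` with `a > m` for which the first `k` coordinates of `X n / a` are
`1 / (m + 1)`-close to those of `Z`. -/
def approxIndices (X : ℕ → ℕ → Ω → ℝ) (Z : ℕ → Ω → ℝ) (k m : ℕ) (ω : Ω) : Set (ℕ × ℕ) :=
  {p | m + 1 ≤ p.2 ∧ ∀ i < k, |X p.1 i ω / p.2 - Z i ω| < 1 / ((m : ℝ) + 1)}

/-- The upper limit of `X n k / a` over the pairs `(n, a)` whose first `k` coordinates
approximate `Z`. -/
def upperExtension (X : ℕ → ℕ → Ω → ℝ) (Z : ℕ → Ω → ℝ) (k : ℕ) (ω : Ω) : EReal :=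
  ⨅ m : ℕ, ⨆ p : ℕ × ℕ, ⨆ _ : p ∈ approxIndices X Z k m ω, ((X p.1 k ω / p.2 : ℝ) : EReal)

variable {X : ℕ → ℕ → Ω → ℝ} {Z : ℕ → Ω → ℝ}

lemma one_le_partialSize (k n : ℕ) (ω : Ω) : 1 ≤ partialSize X k n ω :=
  le_add_of_nonneg_right (Finset.sum_nonneg fun _ _ => abs_nonneg _)

lemma abs_le_partialSize {k i : ℕ} (hi : i < k) (n : ℕ) (ω : Ω) :
    |X n i ω| ≤ partialSize X k n ω := by
  have := Finset.single_le_sum (f := fun i => |X n i ω|) (fun _ _ => abs_nonneg _)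
    (Finset.mem_range.2 hi)
  simp only [partialSize]
  linarith

lemma approxIndices_anti {k m m' : ℕ} (h : m ≤ m') (ω : Ω) :
    approxIndices X Z k m' ω ⊆ approxIndices X Z k m ω := by
  rintro p ⟨h1, h2⟩
  refine ⟨by omega, fun i hi => (h2 i hi).trans_le ?_⟩
  gcongr

lemma approxIndices_congr {Z' : ℕ → Ω → ℝ} {k : ℕ} {ω : Ω} (h : ∀ i < k, Z i ω = Z' i ω) (m : ℕ) :
    approxIndices X Z k m ω = approxIndices X Z' k m ω := by
  ext p
  simp only [approxIndices, Set.mem_ofPred_eq]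
  refine and_congr_right fun _ => forall₂_congr fun i hi => ?_
  rw [h i hi]

/-- Outside the blow-up events, each coordinate is dominated by the preceding ones. -/
lemma exists_abs_le_mul_partialSize {k : ℕ} {ω : Ω} (h1 : ω ∉ blowUp X 1 k)
    (h2 : ω ∉ blowUp X (-1) k) : ∃ M : ℝ, 0 ≤ M ∧ ∀ n, |X n k ω| ≤ M * partialSize X k n ω := by
  simp only [blowUp, Set.mem_ofPred_eq, not_forall, not_exists, not_lt] at h1 h2
  obtain ⟨a, ha⟩ := h1
  obtain ⟨b, hb⟩ := h2
  refine ⟨a + b, by positivity, fun n => abs_le.2 ?_⟩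
  have hs := one_le_partialSize (X := X) k n ω
  have h3 : 0 ≤ (a : ℝ) * partialSize X k n ω := by positivity
  have h4 : 0 ≤ (b : ℝ) * partialSize X k n ω := by positivity
  constructor <;> linarith [ha n, hb n]

/-- Without blow-up in the first `N` coordinates, these are bounded. -/
lemma exists_partialSize_le {N : ℕ} {ω : Ω}
    (h : ∀ k < N, ω ∉ blowUp X 1 k ∧ ω ∉ blowUp X (-1) k) :
    ∃ M : ℝ, ∀ n, partialSize X N n ω ≤ M := by
  induction N with
  | zero => exact ⟨1, fun n => by simp [partialSize]⟩
  | succ k ih =>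
    obtain ⟨M, hM⟩ := ih fun i hi => h i (by omega)
    obtain ⟨K, hK, hKX⟩ := exists_abs_le_mul_partialSize (h k (by omega)).1 (h k (by omega)).2
    refine ⟨M + K * M, fun n => ?_⟩
    have : partialSize X (k + 1) n ω = partialSize X k n ω + |X n k ω| := by
      simp [partialSize, Finset.sum_range_succ, add_assoc]
    rw [this]
    exact add_le_add (hM n) ((hKX n).trans (mul_le_mul_of_nonneg_left (hM n) hK))

/-- On a blow-up event, the signed unit vector is an asymptotic direction. -/
lemma approxIndices_nonempty_of_mem_blowUp {s : ℝ} (hs : |s| = 1) {j : ℕ} {ω : Ω}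
    (hω : ω ∈ blowUp X s j) (hZ : ∀ i < j, Z i ω = 0) (hZj : Z j ω = s) (m : ℕ) :
    (approxIndices X Z (j + 1) m ω).Nonempty := by
  obtain ⟨n, hn⟩ := hω (m + 1)
  push_cast at hn
  set x := s * X n j ω with hx
  have hR := one_le_partialSize (X := X) j n ω
  have hm : (0 : ℝ) < m + 1 := by positivity
  have hmx : (m : ℝ) + 1 < x := lt_of_le_of_lt (by nlinarith) hn
  have hx0 : 0 < x := hm.trans hmx
  have hss : s * s = 1 := by rw [← abs_mul_abs_self, hs, one_mul]
  have hXj : X n j ω = s * x := by rw [hx, ← mul_assoc, hss, one_mul]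
  have ha := Nat.le_ceil x
  have ha' := Nat.ceil_lt_add_one hx0.le
  have ha0 : (0 : ℝ) < ⌈x⌉₊ := hx0.trans_le ha
  refine ⟨(n, ⌈x⌉₊), ?_, fun i hi => ?_⟩
  · have : ((m + 1 : ℕ) : ℝ) ≤ ⌈x⌉₊ := by push_cast; linarith
    exact_mod_cast this
  · rcases Nat.lt_succ_iff_lt_or_eq.1 hi with hi | rfl
    · rw [hZ i hi, sub_zero, abs_div, abs_of_pos ha0, div_lt_div_iff₀ ha0 hm]
      have := abs_le_partialSize (X := X) hi n ω
      nlinarith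
    · have : X n i ω / (⌈x⌉₊ : ℝ) - Z i ω = s * ((x - ⌈x⌉₊) / ⌈x⌉₊) := by
        rw [hZj, hXj]
        field_simp
      simp only [this]
      rw [abs_mul, hs, one_mul, abs_div, abs_of_pos ha0, div_lt_div_iff₀ ha0 hm,
        abs_of_nonpos (by linarith)]
      nlinarith

/-- Without blow-up in coordinate `k`, an asymptotic direction extends to that coordinate. -/
lemma approxIndices_succ_nonempty {k : ℕ} {ω : Ω} (h1 : ω ∉ blowUp X 1 k)
    (h2 : ω ∉ blowUp X (-1) k) (hne : ∀ m, (approxIndices X Z k m ω).Nonempty)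
    (hZ : Z k ω = (upperExtension X Z k ω).toReal) (m : ℕ) :
    (approxIndices X Z (k + 1) m ω).Nonempty := by
  obtain ⟨M, hM, hMX⟩ := exists_abs_le_mul_partialSize h1 h2
  set C : ℝ := M * (1 + ∑ i ∈ Finset.range k, (|Z i ω| + 1)) with hC
  have hbound : ∀ q, ∀ p ∈ approxIndices X Z k q ω, |X p.1 k ω / p.2| ≤ C := by
    intro q p hp
    obtain ⟨hp1, hp2⟩ := approxIndices_anti (Nat.zero_le q) ω hp
    have hp1' : (1 : ℝ) ≤ p.2 := by exact_mod_cast hp1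
    have hp0 : (0 : ℝ) < p.2 := by linarith
    rw [abs_div, abs_of_pos hp0, div_le_iff₀ hp0]
    refine (hMX p.1).trans ?_
    rw [hC, mul_assoc]
    refine mul_le_mul_of_nonneg_left ?_ hM
    rw [add_mul, Finset.sum_mul, partialSize]
    refine add_le_add (by linarith) (Finset.sum_le_sum fun i hi => ?_)
    have h3 := hp2 i (Finset.mem_range.1 hi)
    have h4 := abs_sub_abs_le_abs_sub (X p.1 i ω / p.2) (Z i ω)
    have h5 : |X p.1 i ω / p.2| ≤ |Z i ω| + 1 := by
      norm_num at h3
      linarith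
    rwa [abs_div, abs_of_pos hp0, div_le_iff₀ hp0] at h5
  obtain ⟨r, hr⟩ : ∃ r : ℝ, upperExtension X Z k ω = r := by
    have hle : upperExtension X Z k ω ≤ (C : EReal) :=
      (iInf_le _ 0).trans <| iSup₂_le fun p hp =>
        EReal.coe_le_coe_iff.2 (abs_le.1 (hbound 0 p hp)).2
    have hge : ((-C : ℝ) : EReal) ≤ upperExtension X Z k ω := by
      refine le_iInf fun q => ?_
      obtain ⟨p, hp⟩ := hne q
      exact (EReal.coe_le_coe_iff.2 (abs_le.1 (hbound q p hp)).1).trans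
        (le_iSup₂ (f := fun (p : ℕ × ℕ) (_ : p ∈ approxIndices X Z k q ω) =>
          ((X p.1 k ω / p.2 : ℝ) : EReal)) p hp)
    exact ⟨_, (EReal.coe_toReal (ne_top_of_le_ne_top (EReal.coe_ne_top _) hle)
      (ne_bot_of_le_ne_bot (EReal.coe_ne_bot _) hge)).symm⟩
  rw [hr, EReal.toReal_coe] at hZ
  have hε : 0 < 1 / ((m : ℝ) + 1) := by positivity
  obtain ⟨q, hq⟩ := iInf_lt_iff.1 (show upperExtension X Z k ω < ((r + 1 / ((m : ℝ) + 1) : ℝ) :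
    EReal) by rw [hr]; exact EReal.coe_lt_coe_iff.2 (by linarith))
  have hlow : ((r - 1 / ((m : ℝ) + 1) : ℝ) : EReal) < upperExtension X Z k ω := by
    rw [hr]; exact EReal.coe_lt_coe_iff.2 (by linarith)
  obtain ⟨p, hp⟩ := lt_iSup_iff.1 (hlow.trans_le (iInf_le _ (max m q)))
  obtain ⟨hpm, hp⟩ := lt_iSup_iff.1 hp
  have hup := (le_iSup₂ (f := fun (p : ℕ × ℕ) (_ : p ∈ approxIndices X Z k q ω) =>
    ((X p.1 k ω / p.2 : ℝ) : EReal)) p (approxIndices_anti (le_max_right _ _) ω hpm)).trans_lt hq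
  obtain ⟨hp1, hp2⟩ := approxIndices_anti (le_max_left m q) ω hpm
  refine ⟨p, hp1, fun i hi => ?_⟩
  rcases Nat.lt_succ_iff_lt_or_eq.1 hi with hi | rfl
  · exact hp2 i hi
  · rw [EReal.coe_lt_coe_iff] at hp hup
    rw [hZ, abs_lt]
    constructor <;> linarith

lemma measurable_partialSize {m : MeasurableSpace Ω} {k n : ℕ}
    (hX : ∀ i < k, Measurable (X n i)) : Measurable (partialSize X k n) := by
  refine measurable_const.add (Finset.measurable_fun_sum _ fun i hi => ?_)
  simpa [Real.norm_eq_abs] using (hX i (Finset.mem_range.1 hi)).norm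

lemma measurableSet_blowUp {m : MeasurableSpace Ω} {k : ℕ}
    (hX : ∀ n, ∀ i ≤ k, Measurable (X n i)) (s : ℝ) : MeasurableSet (blowUp X s k) := by
  simp only [blowUp, Set.ofPred_forall, Set.ofPred_exists]
  refine MeasurableSet.iInter fun q => MeasurableSet.iUnion fun n => ?_
  exact measurableSet_lt ((measurable_partialSize fun i hi => hX n i hi.le).const_mul _)
    ((hX n k le_rfl).const_mul _)

lemma measurable_upperExtension {m : MeasurableSpace Ω} {k : ℕ}
    (hX : ∀ n, ∀ i ≤ k, Measurable (X n i)) (hZ : ∀ i < k, Measurable (Z i)) :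
    Measurable (upperExtension X Z k) := by
  refine Measurable.iInf fun q => Measurable.iSup fun p => ?_
  have hS : MeasurableSet {ω | p ∈ approxIndices X Z k q ω} := by
    have hset : {ω | p ∈ approxIndices X Z k q ω} = {_ω | q + 1 ≤ p.2} ∩
        ⋂ i, ⋂ (_ : i < k), {ω | |X p.1 i ω / p.2 - Z i ω| < 1 / ((q : ℝ) + 1)} := by
      ext ω
      simp [approxIndices]
    rw [hset]
    refine (MeasurableSet.const _).inter ?_
    refine MeasurableSet.iInter fun i => MeasurableSet.iInter fun hi => ?_
    have := (((hX p.1 i hi.le).div_const (p.2 : ℝ)).sub (hZ i hi)).norm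
    exact measurableSet_lt (by simpa [Real.norm_eq_abs] using this) measurable_const
  classical
  have heq : (fun ω => ⨆ _ : p ∈ approxIndices X Z k q ω, ((X p.1 k ω / p.2 : ℝ) : EReal)) =
      fun ω => if p ∈ approxIndices X Z k q ω then ((X p.1 k ω / p.2 : ℝ) : EReal) else ⊥ := by
    ext ω
    split_ifs with h <;> simp [h]
  rw [heq]
  exact Measurable.ite hS ((hX p.1 k le_rfl).div_const _).coe_real_ereal measurable_const

/-- If the first `N` coordinates of an adapted sequence blow up with positive probability, then
there is an adapted asymptotic direction which does not vanish almost surely. -/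
theorem exists_adapted_asymptotic_direction {mΩ : MeasurableSpace Ω} {P : Measure Ω}
    {G : ℕ → MeasurableSpace Ω} (hG : Monotone G) (hX : ∀ n k, Measurable[G k] (X n k)) {N : ℕ}
    (hN : ∃ j < N, ∃ s : ℝ, |s| = 1 ∧ P (blowUp X s j) ≠ 0) :
    ∃ Z : ℕ → Ω → ℝ, (∀ k, Measurable[G k] (Z k)) ∧ (¬ ∀ᵐ ω ∂P, ∀ i < N, Z i ω = 0) ∧
      ∀ᵐ ω ∂P, (∀ i, Z i ω = 0) ∨ ∀ m, (approxIndices X Z N m ω).Nonempty := by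
  classical
  have hXle : ∀ k n, ∀ i ≤ k, Measurable[G k] (X n i) := fun k n i hi =>
    (hX n i).mono (hG hi) le_rfl
  let blows : ℕ → Prop := fun j => ∃ s : ℝ, |s| = 1 ∧ P (blowUp X s j) ≠ 0
  obtain ⟨j, hjN, ⟨s, hs, hPs⟩, hmax⟩ : ∃ j < N, blows j ∧ ∀ k, j < k → k < N → ¬ blows k := by
    obtain ⟨i, hi, hbi⟩ := hN
    refine ⟨Nat.findGreatest blows (N - 1), ?_, ?_, fun k hk hkN => ?_⟩
    · have := Nat.findGreatest_le (P := blows) (N - 1)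
      omega
    · exact Nat.findGreatest_spec (P := blows) (by omega : i ≤ N - 1) hbi
    · exact Nat.findGreatest_is_greatest hk (by omega)
  have hs0 : s ≠ 0 := by
    rintro rfl
    simp at hs
  have hE : MeasurableSet[G j] (blowUp X s j) :=
    measurableSet_blowUp (m := G j) (hXle j) s
  have key : ∀ r, j + 1 + r ≤ N → ∃ Z : ℕ → Ω → ℝ, (∀ k, Measurable[G k] (Z k)) ∧
      (∀ ω ∈ blowUp X s j, Z j ω = s) ∧ (∀ ω ∉ blowUp X s j, ∀ i, Z i ω = 0) ∧
      ∀ᵐ ω ∂P, ω ∈ blowUp X s j → ∀ m, (approxIndices X Z (j + 1 + r) m ω).Nonempty := by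
    intro r
    induction r with
    | zero =>
      intro _
      refine ⟨fun i => if i = j then (blowUp X s j).indicator fun _ => s else 0, ?_, ?_, ?_, ?_⟩
      · intro k
        by_cases hk : k = j
        · subst hk
          simpa using Measurable.indicator (m := G k) measurable_const hE
        · simp only [hk, if_false]
          exact measurable_const
      · intro ω hω
        simp [hω]
      · intro ω hω i
        by_cases hi : i = j <;> simp [hω, hi]
      · refine Eventually.of_forall fun ω hω m => ?_
        refine approxIndices_nonempty_of_mem_blowUp hs hω (fun i hi => ?_) ?_ m
        · simp [hi.ne]
        · simp [hω]
    | succ r ih =>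
      intro hr
      obtain ⟨Z, hZm, hZj, hZ0, hZa⟩ := ih (by omega)
      set k := j + 1 + r with hk
      let Y : Ω → ℝ := (blowUp X s j).indicator fun ω => (upperExtension X Z k ω).toReal
      have hYm : Measurable[G k] Y := by
        refine Measurable.indicator (m := G k) ?_ (hG (by omega : j ≤ k) _ hE)
        refine Measurable.ereal_toReal (mα := G k) ?_
        exact measurable_upperExtension (m := G k) (hXle k)
          fun i hi => (hZm i).mono (hG hi.le) le_rfl
      refine ⟨Function.update Z k Y, ?_, ?_, ?_, ?_⟩
      · intro i
        by_cases hi : i = k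
        · subst hi
          simpa using hYm
        · simpa [hi] using hZm i
      · intro ω hω
        rw [Function.update_of_ne (by omega)]
        exact hZj ω hω
      · intro ω hω i
        by_cases hi : i = k
        · subst hi
          simp [Y, hω]
        · simpa [hi] using hZ0 ω hω i
      · have hnull : ∀ s' : ℝ, |s'| = 1 → ∀ᵐ ω ∂P, ω ∉ blowUp X s' k := fun s' hs' => by
          refine measure_eq_zero_iff_ae_notMem.1 ?_
          by_contra hne
          exact hmax k (by omega) (by omega) ⟨s', hs', hne⟩
        filter_upwards [hZa, hnull 1 (by simp), hnull (-1) (by simp)] with ω h1 h2 h3 hω m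
        have hcongr : ∀ i < k, Z i ω = Function.update Z k Y i ω := fun i hi => by
          rw [Function.update_of_ne hi.ne]
        refine approxIndices_succ_nonempty h2 h3
          (fun q => by rw [← approxIndices_congr hcongr]; exact h1 hω q) ?_ m
        have : upperExtension X (Function.update Z k Y) k ω = upperExtension X Z k ω := by
          simp only [upperExtension, approxIndices_congr hcongr]
        rw [this]
        simp [Y, hω]
  obtain ⟨Z, hZm, hZj, hZ0, hZa⟩ := key (N - (j + 1)) (by omega)
  rw [show j + 1 + (N - (j + 1)) = N by omega] at hZa
  refine ⟨Z, hZm, fun hZ => hPs ?_, ?_⟩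
  · refine measure_eq_zero_iff_ae_notMem.2 ?_
    filter_upwards [hZ] with ω hω hmem
    exact hs0 ((hZj ω hmem).symm.trans (hω j hjN))
  · filter_upwards [hZa] with ω hω
    by_cases hmem : ω ∈ blowUp X s j
    · exact Or.inr (hω hmem)
    · exact Or.inl (hZ0 ω hmem)

end AsymptoticDirections

lemma recessionModel_zero_nonneg {Ω : Type*} {T d : ℕ} {V : Ω → (Fin T → Fin d → ℝ) → EReal}
    {ω : Ω} (h0 : V ω 0 = 0) : 0 ≤ recessionModel V ω 0 := by
  refine le_iInf fun l => ?_
  refine le_iSup_of_le ⟨l.1 + 1, by linarith⟩ (le_iSup_of_le ⟨0, ?_⟩ ?_)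
  · simpa using l.2
  · simp [h0]

/-- The recession model is nonnegative at asymptotic directions of points at which the model is
bounded below. -/
lemma recessionModel_nonneg_of_approx {Ω : Type*} {T d : ℕ}
    {V : Ω → (Fin T → Fin d → ℝ) → EReal} {ω : Ω} {c : ℝ} {z : Fin T → Fin d → ℝ}
    (h : ∀ m : ℕ, ∃ y : Fin T → Fin d → ℝ, (c : EReal) ≤ V ω y ∧
      ∃ a : ℝ, (m : ℝ) + 1 ≤ a ∧ ‖a⁻¹ • y - z‖ < 1 / ((m : ℝ) + 1)) :
    0 ≤ recessionModel V ω z := by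
  refine le_iInf fun l => le_of_forall_lt fun b hb => ?_
  obtain ⟨b', hbb', hb'⟩ := EReal.lt_iff_exists_real_btwn.1 hb
  have hb'0 : b' < 0 := by exact_mod_cast hb'
  obtain ⟨m, hm⟩ := exists_nat_ge (max l.1 (|c| / (-b')))
  obtain ⟨y, hy, a, ha, hay⟩ := h m
  have hml : l.1 ≤ m := (le_max_left _ _).trans hm
  have hmc : |c| / (-b') ≤ m := (le_max_right _ _).trans hm
  have ha0 : 0 < a := by linarith [l.2]
  refine hbb'.trans_le ?_
  refine le_iSup_of_le ⟨a, by linarith⟩ (le_iSup_of_le ⟨a⁻¹ • y, hay.trans_le ?_⟩ ?_)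
  · exact one_div_le_one_div_of_le l.2 (by linarith)
  · rw [smul_inv_smul₀ ha0.ne']
    refine le_trans ?_ (mul_le_mul_of_nonneg_left hy (EReal.coe_nonneg.2 (inv_nonneg.2 ha0.le)))
    rw [← EReal.coe_mul, EReal.coe_le_coe_iff, inv_mul_eq_div, le_div_iff₀ ha0]
    rw [div_le_iff₀ (by linarith)] at hmc
    nlinarith [neg_abs_le c]

/-- If `NA` holds, then any sequence of adapted strategies superhedging `f` is almost surely
bounded. -/
lemma ae_bounded_of_superhedging {Ω : Type*} {mΩ : MeasurableSpace Ω} {P : Measure Ω}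
    {T d : ℕ} {ℱ : Fin T → MeasurableSpace Ω} (hℱmono : Monotone ℱ) (hℱle : ∀ t, ℱ t ≤ mΩ)
    {V : Ω → (Fin T → Fin d → ℝ) → EReal} (hV0 : ∀ᵐ ω ∂P, V ω 0 = 0) (hNA : NAcond P ℱ V)
    {f : Ω → ℝ} {θ : ℕ → Ω → Fin T → Fin d → ℝ} (hθ : ∀ n, AdaptedStrat ℱ (θ n))
    (hθf : ∀ n, ∀ᵐ ω ∂P, (f ω : EReal) ≤ V ω (θ n ω)) :
    ∀ᵐ ω ∂P, ∃ M : ℝ, ∀ n, ‖θ n ω‖ ≤ M := by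
  rcases Nat.eq_zero_or_pos d with rfl | hd
  · refine Eventually.of_forall fun ω => ⟨0, fun n => ?_⟩
    rw [Subsingleton.elim (θ n ω) 0, norm_zero]
  let G : ℕ → MeasurableSpace Ω := fun k => if h : k / d < T then ℱ ⟨k / d, h⟩ else mΩ
  let X : ℕ → ℕ → Ω → ℝ := fun n k ω =>
    if h : k / d < T then θ n ω ⟨k / d, h⟩ ⟨k % d, Nat.mod_lt _ hd⟩ else 0
  have hdiv : ∀ (t : Fin T) (i : Fin d), (t.1 * d + i.1) / d = t.1 := fun t i => by
    rw [mul_comm, Nat.mul_add_div hd, Nat.div_eq_of_lt i.2, add_zero]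
  have hmod : ∀ (t : Fin T) (i : Fin d), (t.1 * d + i.1) % d = i.1 := fun t i => by
    rw [mul_comm, Nat.mul_add_mod, Nat.mod_eq_of_lt i.2]
  have hlt : ∀ (t : Fin T) (i : Fin d), t.1 * d + i.1 < T * d := fun t i =>
    (Nat.div_lt_iff_lt_mul hd).1 (by rw [hdiv]; exact t.2)
  have hGt : ∀ (t : Fin T) (i : Fin d), G (t.1 * d + i.1) = ℱ t := fun t i => by
    simp [G, hdiv]
  have hXt : ∀ n (t : Fin T) (i : Fin d) ω, X n (t.1 * d + i.1) ω = θ n ω t i :=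
    fun n t i ω => by simp [X, hdiv, hmod]
  have hG : Monotone G := by
    intro k l hkl
    have hkl' : k / d ≤ l / d := Nat.div_le_div_right hkl
    by_cases hl : l / d < T
    · have hk : k / d < T := hkl'.trans_lt hl
      simp only [G, hk, hl, dif_pos]
      exact hℱmono hkl'
    · by_cases hk : k / d < T
      · simp only [G, hk, hl, dif_pos, dif_neg, not_false_eq_true]
        exact hℱle _
      · simp [G, hk, hl]
  have hX : ∀ n k, Measurable[G k] (X n k) := by
    intro n k
    by_cases hk : k / d < T
    · have hGk : G k = ℱ ⟨k / d, hk⟩ := dif_pos hk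
      simp only [X, hk, dif_pos]
      rw [hGk]
      exact (measurable_pi_apply _).comp (hθ n ⟨k / d, hk⟩)
    · simp only [X, hk, dif_neg, not_false_eq_true]
      exact measurable_const
  have hnull : ∀ j < T * d, ∀ s : ℝ, |s| = 1 → P (blowUp X s j) = 0 := by
    by_contra hcon
    push Not at hcon
    obtain ⟨Z, hZm, hZne, hZ⟩ := exists_adapted_asymptotic_direction (P := P) hG hX hcon
    refine hZne ?_
    have hzero := hNA (fun ω t i => Z (t.1 * d + i.1) ω) (fun t => ?_) ?_
    · filter_upwards [hzero] with ω hω k hk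
      have hk' : k / d < T := (Nat.div_lt_iff_lt_mul hd).2 hk
      have := congrFun (congrFun hω ⟨k / d, hk'⟩) ⟨k % d, Nat.mod_lt _ hd⟩
      simpa [Nat.div_add_mod'] using this
    · refine @measurable_pi_lambda _ _ _ (ℱ t) _ _ fun i => ?_
      rw [← hGt t i]
      exact hZm _
    · filter_upwards [hV0, ae_all_iff.2 hθf, hZ] with ω h0 hf hω
      rcases hω with hω | hω
      · have : (fun (t : Fin T) (i : Fin d) => Z (t.1 * d + i.1) ω) = 0 := by
          ext t i
          exact hω _
        rw [this]
        exact recessionModel_zero_nonneg h0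
      · refine recessionModel_nonneg_of_approx (c := f ω) fun m => ?_
        obtain ⟨⟨n, a⟩, ha, hna⟩ := hω m
        refine ⟨θ n ω, hf n, a, by exact_mod_cast ha, ?_⟩
        have hm : 0 < 1 / ((m : ℝ) + 1) := by positivity
        refine (pi_norm_lt_iff hm).2 fun t => (pi_norm_lt_iff hm).2 fun i => ?_
        have := hna _ (hlt t i)
        simp only [hXt] at this
        simpa [Real.norm_eq_abs, inv_mul_eq_div] using this
  have hall : ∀ᵐ ω ∂P, ∀ k, k < T * d → ω ∉ blowUp X 1 k ∧ ω ∉ blowUp X (-1) k := by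
    refine ae_all_iff.2 fun k => ?_
    by_cases hk : k < T * d
    · filter_upwards [measure_eq_zero_iff_ae_notMem.1 (hnull k hk 1 (by simp)),
        measure_eq_zero_iff_ae_notMem.1 (hnull k hk (-1) (by simp))] with ω h1 h2 _
      exact ⟨h1, h2⟩
    · exact Eventually.of_forall fun ω h => absurd h hk
  filter_upwards [hall] with ω hω
  obtain ⟨M, hM⟩ := exists_partialSize_le hω
  refine ⟨M, fun n => ?_⟩
  have hM0 : 0 ≤ M := by linarith [hM n, one_le_partialSize (X := X) (T * d) n ω]
  refine (pi_norm_le_iff_of_nonneg hM0).2 fun t => (pi_norm_le_iff_of_nonneg hM0).2 fun i => ?_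
  rw [Real.norm_eq_abs, ← hXt]
  exact (abs_le_partialSize (hlt t i) n ω).trans (hM n)

/-- for a normal integrand market model satisfying NA and a random
variable `f`, the set `𝒜_f` of superhedging strategies is bounded in probability. -/
theorem stmt7 {Ω : Type*} {mΩ : MeasurableSpace Ω} (P : Measure Ω) [IsProbabilityMeasure P]
    (T d : ℕ) (hT : 1 ≤ T) (hd : 1 ≤ d)
    (ℱ : Fin T → MeasurableSpace Ω) (hℱmono : Monotone ℱ) (hℱle : ∀ t, ℱ t ≤ mΩ)
    -- V is a normal integrand market model:
    (V : Ω → (Fin T → Fin d → ℝ) → EReal)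
    (hVjm : Measurable (Function.uncurry V))
    (hV0 : ∀ᵐ ω ∂P, V ω 0 = 0)
    (hVnotTop : ∀ ω x, V ω x ≠ ⊤)
    (hVusc : ∀ᵐ ω ∂P, UpperSemicontinuous (V ω))
    (hVhypo : HypoClosedMeas (mΩ := mΩ) V)
    -- satisfying the no-arbitrage condition:
    (hNA : NAcond P ℱ V)
    (f : Ω → ℝ) (hf : Measurable f) :
    -- 𝒜_f is bounded in probability (as a subset of L^0(𝓕;ℝ^{dT}))
    ∀ ε : ℝ, 0 < ε → ∃ M : ℝ, 0 < M ∧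
      ∀ ϑ, AdaptedStrat ℱ ϑ → (∀ᵐ ω ∂P, (f ω : EReal) ≤ V ω (ϑ ω)) →
        P {ω | M ≤ ‖ϑ ω‖} < ENNReal.ofReal ε := by
  intro ε hε
  by_contra! hcon
  choose! θ hθ hθf hθP using fun n : ℕ => hcon ((n : ℝ) + 1) (by positivity)
  have hbdd := ae_bounded_of_superhedging hℱmono hℱle hV0 hNA hθ hθf
  have hθm : ∀ n, Measurable (θ n) := fun n =>
    measurable_pi_lambda _ fun t => (hθ n t).mono (hℱle t) le_rfl
  have hlim : Tendsto (fun n : ℕ => P {ω | (n : ℝ) + 1 ≤ ‖θ n ω‖}) atTop (𝓝 (P ∅)) := by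
    refine tendsto_measure_of_ae_tendsto_indicator_of_isFiniteMeasure atTop MeasurableSet.empty
      (fun n => measurableSet_le measurable_const (hθm n).norm) ?_
    filter_upwards [hbdd] with ω ⟨M, hM⟩
    obtain ⟨K, hK⟩ := exists_nat_ge M
    filter_upwards [eventually_ge_atTop K] with n hn
    have hn' : (K : ℝ) ≤ n := by exact_mod_cast hn
    have := hM n
    simp only [Set.mem_empty_iff_false, iff_false, not_le]
    linarith
  rw [measure_empty] at hlim
  exact (ENNReal.ofReal_pos.2 hε).not_ge (ge_of_tendsto' hlim hθP)

end
end

section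
/- Let (f_n) be a sequence of 𝓕-measurable random vectors Ω → ℝ^n such that liminf_n |f_n| < ∞ almost surely. Then there exists a strictly increasing sequence of 𝓕-measurable random indices τ(n) : Ω → ℕ (τ(n)(ω) < τ(n+1)(ω) for all n, ω) such that the random subsequence ω ↦ f_{τ(n)(ω)}(ω) converges almost surely to an 𝓕-measurable random vector in L^0(𝓕;ℝ^n). -/
open MeasureTheory Filter Topology
open scoped ENNReal

noncomputable section

/-- A measurable selection of natural numbers satisfying a measurable predicate. -/
lemma exists_measurable_nat_selection {Ω : Type*} [MeasurableSpace Ω] {p : Ω → ℕ → Prop}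
    (hp : ∀ k, MeasurableSet {ω | p ω k}) :
    ∃ c : Ω → ℕ, Measurable c ∧ ∀ ω, (∃ k, p ω k) → p ω (c ω) := by
  classical
  have hex : ∀ ω, ∃ k, p ω k ∨ ∀ m, ¬ p ω m := by
    intro ω
    by_cases h : ∃ k, p ω k
    · exact h.imp fun _ hk => Or.inl hk
    · exact ⟨0, Or.inr (not_exists.mp h)⟩
  refine ⟨fun ω => Nat.find (hex ω), measurable_find hex fun k => ?_, fun ω ⟨k, hk⟩ => ?_⟩
  · have hnone : MeasurableSet {ω | ∀ m, ¬ p ω m} := by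
      rw [Set.ofPred_forall]
      exact MeasurableSet.iInter fun m => (hp m).compl
    exact (hp k).union hnone
  · exact (Nat.find_spec (hex ω)).resolve_right fun h => h k hk

/-- A measurable random set of indices along which the values of `f` cluster can be shrunk,
measurably, to one on which the values of `f` lie in a small ball and still cluster. -/
lemma exists_measurable_refinement {Ω E : Type*} [MeasurableSpace Ω] [PseudoMetricSpace E]
    [ProperSpace E] [Nonempty E] [MeasurableSpace E] [BorelSpace E] {f : ℕ → Ω → E}
    (hf : ∀ k, Measurable (f k)) {S : Ω → Set ℕ} (hS : ∀ k, MeasurableSet {ω | k ∈ S ω})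
    {ε : ℝ} (hε : 0 < ε) :
    ∃ T : Ω → Set ℕ, (∀ k, MeasurableSet {ω | k ∈ T ω}) ∧ (∀ ω, T ω ⊆ S ω) ∧
      ∀ ω, (∃ x, MapClusterPt x (atTop ⊓ 𝓟 (S ω)) (f · ω)) →
        (∃ x, MapClusterPt x (atTop ⊓ 𝓟 (T ω)) (f · ω)) ∧
          ∃ y, ∀ k ∈ T ω, dist (f k ω) y < ε := by
  set d := TopologicalSpace.denseSeq E
  obtain ⟨c, hc, hcsel⟩ := exists_measurable_nat_selection
    (p := fun ω i => ∃ᶠ k in atTop, k ∈ S ω ∧ dist (f k ω) (d i) < ε) (by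
      intro i
      simp only [frequently_atTop, Set.ofPred_forall, Set.ofPred_exists]
      refine MeasurableSet.iInter fun a => MeasurableSet.iUnion fun b => ?_
      exact (MeasurableSet.const (b ≥ a)).inter ((hS b).inter
        (measurableSet_lt ((hf b).dist measurable_const) measurable_const)))
  have hdc : Measurable fun ω => d (c ω) := (measurable_from_nat (f := d)).comp hc
  refine ⟨fun ω => {k | k ∈ S ω ∧ dist (f k ω) (d (c ω)) < ε}, fun k => (hS k).inter
    (measurableSet_lt ((hf k).dist hdc) measurable_const), fun ω k hk => hk.1, ?_⟩
  rintro ω ⟨x, hx⟩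
  refine ⟨?_, d (c ω), fun k hk => hk.2⟩
  have hfreq := hcsel ω (by
    obtain ⟨i, hi⟩ := (TopologicalSpace.denseRange_denseSeq E).exists_dist_lt x hε
    refine ⟨i, ?_⟩
    have := hx.frequently (Metric.isOpen_ball.mem_nhds (Metric.mem_ball.2 hi))
    rw [frequently_inf_principal] at this
    exact this)
  obtain ⟨z, -, hz⟩ := (isCompact_closedBall (d (c ω)) ε).exists_mapClusterPt_of_frequently
    (l := atTop ⊓ 𝓟 {k | k ∈ S ω ∧ dist (f k ω) (d (c ω)) < ε}) (f := (f · ω)) (by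
      rw [frequently_inf_principal]
      exact hfreq.mono fun k hk => ⟨hk, hk.2.le⟩)
  exact ⟨z, hz⟩

/-- A sequence of measurable maps into a proper space admits a measurable random subsequence that
converges at every point where the sequence has a cluster point. -/
lemma exists_measurable_subseq_tendsto {Ω E : Type*} [MeasurableSpace Ω] [PseudoMetricSpace E]
    [ProperSpace E] [Nonempty E] [MeasurableSpace E] [BorelSpace E] {f : ℕ → Ω → E}
    (hf : ∀ k, Measurable (f k)) :
    ∃ τ : ℕ → Ω → ℕ, (∀ k, Measurable (τ k)) ∧ (∀ k ω, τ k ω < τ (k + 1) ω) ∧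
      ∀ ω, (∃ x, MapClusterPt x atTop (f · ω)) →
        ∃ y, Tendsto (fun k => f (τ k ω) ω) atTop (𝓝 y) := by
  choose! next hnext_meas hnext_sub hnext using
    fun (S : Ω → Set ℕ) (j : ℕ) (hS : ∀ k, MeasurableSet {ω | k ∈ S ω}) =>
      exists_measurable_refinement hf hS (Nat.one_div_pos_of_nat (α := ℝ) (n := j))
  let S : ℕ → Ω → Set ℕ := fun j => Nat.rec (fun _ => Set.univ) (fun j T => next T j) j
  have hS : ∀ j k, MeasurableSet {ω | k ∈ S j ω} := by
    intro j
    induction j with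
    | zero => exact fun k => MeasurableSet.univ
    | succ j ih => exact hnext_meas (S j) j ih
  have hanti : ∀ ω, Antitone fun j => S j ω := fun ω =>
    antitone_nat_of_succ_le fun j => hnext_sub (S j) j (hS j) ω
  choose! pick hpick_meas hpick using
    fun (t : Ω → ℕ) (j : ℕ) (ht : Measurable t) =>
      exists_measurable_nat_selection (p := fun ω k => t ω < k ∧ k ∈ S (j + 1) ω) fun k =>
        (measurableSet_lt ht measurable_const).inter (hS (j + 1) k)
  let τ : ℕ → Ω → ℕ := fun j =>
    Nat.rec (fun _ => 0) (fun j t ω => max (pick t j ω) (t ω + 1)) j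
  have hτ : ∀ j, Measurable (τ j) := by
    intro j
    induction j with
    | zero => exact measurable_const
    | succ j ih => exact (hpick_meas (τ j) j ih).max (ih.add_const 1)
  refine ⟨τ, hτ, fun j ω => (Nat.lt_succ_self _).trans_le (le_max_right _ _), ?_⟩
  rintro ω ⟨x, hx⟩
  have hclus : ∀ j, ∃ x, MapClusterPt x (atTop ⊓ 𝓟 (S j ω)) (f · ω) := by
    intro j
    induction j with
    | zero => exact ⟨x, by simpa [S] using hx⟩
    | succ j ih => exact (hnext (S j) j (hS j) ω ih).1
  have hmem : ∀ j, τ (j + 1) ω ∈ S (j + 1) ω := by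
    intro j
    obtain ⟨z, hz⟩ := hclus (j + 1)
    have hfreq : ∃ᶠ k in atTop, k ∈ S (j + 1) ω := by
      have := hz.frequently univ_mem
      rw [frequently_inf_principal] at this
      exact this.mono fun k hk => hk.1
    obtain ⟨k, hk, hkS⟩ := frequently_atTop.1 hfreq (τ j ω + 1)
    obtain ⟨hlt, hin⟩ := hpick (τ j) j (hτ j) ω ⟨k, hk, hkS⟩
    have heq : τ (j + 1) ω = pick (τ j) j ω := max_eq_left hlt
    rwa [heq]
  refine cauchySeq_tendsto_of_complete (Metric.cauchySeq_iff.2 fun ε hε => ?_)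
  obtain ⟨j, hj⟩ := exists_nat_one_div_lt (half_pos hε)
  obtain ⟨y, hy⟩ := (hnext (S j) j (hS j) ω (hclus j)).2
  have hclose : ∀ m ≥ j + 1, dist (f (τ m ω) ω) y < ε / 2 := by
    intro m hm
    obtain ⟨i, rfl⟩ := Nat.exists_eq_add_of_le' (Nat.le_of_add_left_le hm : 1 ≤ m)
    exact (hy _ (hanti ω hm (hmem i))).trans hj
  exact ⟨j + 1, fun m hm k hk => (dist_triangle_right _ _ y).trans_lt
    (by linarith [hclose m hm, hclose k hk])⟩

/-- A sequence in a proper normed space with `liminf ‖u k‖ < ∞` has a cluster point. -/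
lemma exists_mapClusterPt_of_liminf_nnnorm_lt_top {E : Type*} [SeminormedAddCommGroup E]
    [ProperSpace E] {u : ℕ → E} (hu : liminf (fun k => (‖u k‖₊ : ℝ≥0∞)) atTop < ⊤) :
    ∃ x, MapClusterPt x atTop u := by
  obtain ⟨r, hr, hrtop⟩ := exists_between hu
  lift r to NNReal using hrtop.ne
  have hfreq : ∃ᶠ k in atTop, u k ∈ Metric.closedBall (0 : E) r := by
    refine (frequently_lt_of_liminf_lt (by isBoundedDefault) hr).mono fun k hk => ?_
    rw [mem_closedBall_zero_iff]
    exact_mod_cast (ENNReal.coe_lt_coe.1 hk).le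
  obtain ⟨x, -, hx⟩ :=
    (isCompact_closedBall (0 : E) r).exists_mapClusterPt_of_frequently hfreq
  exact ⟨x, hx⟩

/-- from a sequence of random vectors with `liminf_n |f_n| < ∞` a.s. one
can extract a measurable random subsequence converging almost surely. -/
theorem stmt8 {Ω : Type*} {mΩ : MeasurableSpace Ω} (P : Measure Ω) [IsProbabilityMeasure P]
    (n : ℕ) (f : ℕ → Ω → Fin n → ℝ) (hfmeas : ∀ k, Measurable (f k))
    (hliminf : ∀ᵐ ω ∂P, Filter.liminf (fun k => (‖f k ω‖₊ : ℝ≥0∞)) atTop < ⊤) :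
    ∃ τ : ℕ → Ω → ℕ,
      (∀ k, Measurable (τ k)) ∧
      (∀ k ω, τ k ω < τ (k + 1) ω) ∧
      ∃ g : Ω → Fin n → ℝ, Measurable g ∧
        ∀ᵐ ω ∂P, Tendsto (fun k => f (τ k ω) ω) atTop (nhds (g ω)) := by
  obtain ⟨τ, hτ, hmono, hlim⟩ := exists_measurable_subseq_tendsto hfmeas
  have hmeas : ∀ k, Measurable fun ω => f (τ k ω) ω := fun k =>
    (measurable_from_prod_countable_right (f := fun q : ℕ × Ω => f q.1 q.2) hfmeas).comp
      ((hτ k).prodMk measurable_id)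
  obtain ⟨g, hg, hconv⟩ := measurable_limit_of_tendsto_metrizable_ae
    (fun k => (hmeas k).aemeasurable) (hliminf.mono fun ω hω =>
      hlim ω (exists_mapClusterPt_of_liminf_nnnorm_lt_top hω))
  exact ⟨τ, hτ, hmono, g, hg, hconv⟩

end
end

section
/- Let (ϑ^n) ⊆ 𝒜 be a sequence of adapted strategies that is bounded in probability. Then there exists a strictly increasing sequence of 𝓕-measurable random indices τ(n) : Ω → ℕ such that, for each t ∈ {0,…,T−1}, τ(n) can be chosen so that ω ↦ ϑ^{τ(n)(ω)}(ω) converges almost surely to an adapted strategy ϑ ∈ 𝒜 (i.e. the t-th component of the limit is 𝓕_t-measurable for every t). -/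
open MeasureTheory Filter Topology
open scoped ENNReal

noncomputable section

/-- A strictly increasing sequence of `m`-measurable random indices. -/
structure IsRandomSubseq {Ω : Type*} (m : MeasurableSpace Ω) (τ : ℕ → Ω → ℕ) : Prop where
  measurable : ∀ k, Measurable[m] (τ k)
  lt_succ : ∀ k ω, τ k ω < τ (k + 1) ω

/-- Evaluating a sequence of measurable functions at a measurable random index is measurable. -/
lemma measurable_apply_index {Ω E : Type*} {m : MeasurableSpace Ω} [MeasurableSpace E]
    {Y : ℕ → Ω → E} (hY : ∀ k, Measurable (Y k)) {τ : Ω → ℕ} (hτ : Measurable τ) :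
    Measurable fun ω => Y (τ ω) ω := by
  have h : Measurable fun p : Ω × ℕ => Y p.2 p.1 := measurable_from_prod_countable_left hY
  exact h.comp (measurable_id.prodMk hτ)

namespace IsRandomSubseq

variable {Ω : Type*} {m : MeasurableSpace Ω} {τ ρ : ℕ → Ω → ℕ}

lemma strictMono (hτ : IsRandomSubseq m τ) (ω : Ω) : StrictMono fun k => τ k ω :=
  strictMono_nat_of_lt_succ fun k => hτ.lt_succ k ω

lemma tendsto_atTop (hτ : IsRandomSubseq m τ) (ω : Ω) :
    Tendsto (fun k => τ k ω) atTop atTop :=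
  (hτ.strictMono ω).tendsto_atTop

lemma mono {m' : MeasurableSpace Ω} (hτ : IsRandomSubseq m τ) (h : m ≤ m') :
    IsRandomSubseq m' τ :=
  ⟨fun k => (hτ.measurable k).mono h le_rfl, hτ.lt_succ⟩

lemma comp (hτ : IsRandomSubseq m τ) (hρ : IsRandomSubseq m ρ) :
    IsRandomSubseq m fun k ω => τ (ρ k ω) ω :=
  ⟨fun k => measurable_apply_index hτ.measurable (hρ.measurable k),
    fun k ω => hτ.strictMono ω (hρ.lt_succ k ω)⟩

lemma id (m : MeasurableSpace Ω) : IsRandomSubseq m fun k _ => k :=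
  ⟨fun _ => measurable_const, fun k _ => k.lt_succ_self⟩

end IsRandomSubseq

/-- A measurable choice of cluster points is reached along a measurable random subsequence. -/
lemma exists_isRandomSubseq_tendsto_of_mapClusterPt {Ω E : Type*} {m : MeasurableSpace Ω}
    [TopologicalSpace E] [TopologicalSpace.MetrizableSpace E] [SecondCountableTopology E]
    [MeasurableSpace E] [BorelSpace E] {Y : ℕ → Ω → E} (hY : ∀ k, Measurable (Y k))
    {x : Ω → E} (hx : Measurable x) (hcl : ∀ ω, MapClusterPt (x ω) atTop fun k => Y k ω) :
    ∃ τ, IsRandomSubseq m τ ∧ ∀ ω, Tendsto (fun k => Y (τ k ω) ω) atTop (𝓝 (x ω)) := by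
  classical
  let := TopologicalSpace.metrizableSpaceMetric E
  have hex : ∀ (n N : ℕ) (ω : Ω), ∃ k, N < k ∧ dist (Y k ω) (x ω) < 1 / ((n : ℝ) + 1) := by
    intro n N ω
    have h := mapClusterPt_iff_frequently.1 (hcl ω) _
      (Metric.ball_mem_nhds (x ω) (Nat.one_div_pos_of_nat (n := n)))
    obtain ⟨k, hk, hk'⟩ := frequently_atTop.1 h (N + 1)
    exact ⟨k, hk, hk'⟩
  let next : ℕ → (Ω → ℕ) → Ω → ℕ := fun n σ ω => Nat.find (hex n (σ ω) ω)
  have hnext_spec : ∀ n σ ω,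
      σ ω < next n σ ω ∧ dist (Y (next n σ ω) ω) (x ω) < 1 / ((n : ℝ) + 1) :=
    fun n σ ω => Nat.find_spec (hex n (σ ω) ω)
  have hnext : ∀ n σ, Measurable σ → Measurable (next n σ) := by
    intro n σ hσ
    refine measurable_find _ fun k => ?_
    exact (measurableSet_lt hσ measurable_const).inter
      (measurableSet_lt ((hY k).dist hx) measurable_const)
  let τ : ℕ → Ω → ℕ := fun k => Nat.rec (next 0 fun _ => 0) (fun n σ => next (n + 1) σ) k
  have hspec : ∀ k ω, dist (Y (τ k ω) ω) (x ω) < 1 / ((k : ℝ) + 1) := by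
    intro k ω
    cases k with
    | zero => exact (hnext_spec 0 (fun _ => 0) ω).2
    | succ n => exact (hnext_spec (n + 1) (τ n) ω).2
  refine ⟨τ, ⟨fun k => ?_, fun k ω => (hnext_spec (k + 1) (τ k) ω).1⟩, fun ω => ?_⟩
  · induction k with
    | zero => exact hnext _ _ measurable_const
    | succ n ih => exact hnext _ _ ih
  · rw [tendsto_iff_dist_tendsto_zero]
    exact squeeze_zero (fun _ => dist_nonneg) (fun k => (hspec k ω).le)
      tendsto_one_div_add_atTop_nhds_zero_nat

/-- The lower limit is reached along a measurable random subsequence. -/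
lemma exists_isRandomSubseq_tendsto_liminf {Ω E : Type*} {m : MeasurableSpace Ω}
    [CompleteLinearOrder E] [TopologicalSpace E] [OrderTopology E]
    [TopologicalSpace.MetrizableSpace E] [SecondCountableTopology E] [MeasurableSpace E]
    [BorelSpace E] {Y : ℕ → Ω → E} (hY : ∀ k, Measurable (Y k)) :
    ∃ τ, IsRandomSubseq m τ ∧
      ∀ ω, Tendsto (fun k => Y (τ k ω) ω) atTop (𝓝 (liminf (fun k => Y k ω) atTop)) :=
  exists_isRandomSubseq_tendsto_of_mapClusterPt hY (Measurable.liminf hY)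
    fun _ => MapClusterPt.liminf

/-- Finitely many sequences of extended real random variables converge along a common measurable
random subsequence. -/
lemma exists_isRandomSubseq_forall_tendsto {Ω ι : Type*} {m : MeasurableSpace Ω} (s : Finset ι)
    {Y : ℕ → ι → Ω → EReal} (hY : ∀ k i, Measurable (Y k i)) :
    ∃ τ, IsRandomSubseq m τ ∧ ∃ l : ι → Ω → EReal, (∀ i, Measurable (l i)) ∧
      ∀ i ∈ s, ∀ ω, Tendsto (fun k => Y (τ k ω) i ω) atTop (𝓝 (l i ω)) := by
  classical
  induction s using Finset.induction_on with
  | empty => exact ⟨_, .id m, fun _ _ => 0, fun _ => measurable_const, by simp⟩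
  | insert a s ha ih =>
    obtain ⟨τ, hτ, l, hl, hlim⟩ := ih
    have hYa : ∀ k, Measurable fun ω => Y (τ k ω) a ω := fun k =>
      measurable_apply_index (fun j => hY j a) (hτ.measurable k)
    obtain ⟨ρ, hρ, hlima⟩ := exists_isRandomSubseq_tendsto_liminf hYa
    refine ⟨_, hτ.comp hρ,
      Function.update l a fun ω => liminf (fun k => Y (τ k ω) a ω) atTop, fun i => ?_, ?_⟩
    · obtain rfl | hi := eq_or_ne i a
      · simpa using Measurable.liminf hYa
      · simpa [hi] using hl i
    · intro i hi ω
      obtain rfl | hia := eq_or_ne i a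
      · simpa using hlima ω
      · rw [Function.update_of_ne hia]
        exact (hlim i (Finset.mem_of_mem_insert_of_ne hi hia) ω).comp (hρ.tendsto_atTop ω)

/-- A sequence of random vectors has a measurable random subsequence that converges to a measurable
limit at every point where the whole sequence is eventually bounded. -/
lemma exists_isRandomSubseq_tendsto_of_bounded {Ω : Type*} {m : MeasurableSpace Ω} {d : ℕ}
    {X : ℕ → Ω → Fin d → ℝ} (hX : ∀ k, Measurable (X k)) :
    ∃ τ, IsRandomSubseq m τ ∧ ∃ x : Ω → Fin d → ℝ, Measurable x ∧
      ∀ ω, (∃ R, ∀ᶠ k in atTop, ‖X k ω‖ ≤ R) →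
        Tendsto (fun k => X (τ k ω) ω) atTop (𝓝 (x ω)) := by
  obtain ⟨τ, hτ, l, hl, hlim⟩ := exists_isRandomSubseq_forall_tendsto (m := m) Finset.univ
    (Y := fun k i ω => ((X k ω i : ℝ) : EReal))
    fun k i => ((measurable_pi_apply i).comp (hX k)).coe_real_ereal
  refine ⟨τ, hτ, fun ω i => (l i ω).toReal, measurable_pi_lambda _ fun i => (hl i).ereal_toReal, ?_⟩
  rintro ω ⟨R, hR⟩
  refine tendsto_pi_nhds.2 fun i => ?_
  have h := hlim i (Finset.mem_univ i) ω
  have hR' : ∀ᶠ k in atTop, |X (τ k ω) ω i| ≤ R :=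
    ((hτ.tendsto_atTop ω).eventually hR).mono fun k hk => (norm_le_pi_norm _ i).trans hk
  have hle : l i ω ≤ (R : ℝ) :=
    le_of_tendsto h (hR'.mono fun k hk => EReal.coe_le_coe_iff.2 (abs_le.1 hk).2)
  have hge : ((-R : ℝ) : EReal) ≤ l i ω :=
    ge_of_tendsto h (hR'.mono fun k hk => EReal.coe_le_coe_iff.2 (abs_le.1 hk).1)
  exact (EReal.tendsto_toReal (ne_top_of_le_ne_top (EReal.coe_ne_top R) hle)
    (ne_bot_of_le_ne_bot (EReal.coe_ne_bot (-R)) hge)).comp h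

/-- Domination of integrals over `m`-measurable sets passes to `m`-measurable random indices. -/
lemma setLIntegral_apply_index_le {Ω : Type*} {m mΩ : MeasurableSpace Ω} (P : Measure Ω)
    (hm : m ≤ mΩ) {U V : ℕ → Ω → ℝ≥0∞} {c : ℝ≥0∞}
    (hUV : ∀ k A, MeasurableSet[m] A → ∫⁻ ω in A, V k ω ∂P ≤ c * ∫⁻ ω in A, U k ω ∂P)
    {σ : Ω → ℕ} (hσ : Measurable[m] σ) {A : Set Ω} (hA : MeasurableSet[m] A) :
    ∫⁻ ω in A, V (σ ω) ω ∂P ≤ c * ∫⁻ ω in A, U (σ ω) ω ∂P := by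
  have hB : ∀ k, MeasurableSet[m] (A ∩ σ ⁻¹' {k}) := fun k =>
    hA.inter (hσ (measurableSet_singleton k))
  have hdisj : Pairwise (Function.onFun Disjoint fun k => A ∩ σ ⁻¹' {k}) := by
    intro i j hij
    refine Set.disjoint_left.2 ?_
    rintro ω ⟨-, rfl⟩ ⟨-, h⟩
    exact hij h
  have hAU : A = ⋃ k, A ∩ σ ⁻¹' {k} := by
    ext ω
    simp
  have hsum : ∀ F : ℕ → Ω → ℝ≥0∞,
      ∫⁻ ω in A, F (σ ω) ω ∂P = ∑' k, ∫⁻ ω in A ∩ σ ⁻¹' {k}, F k ω ∂P := by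
    intro F
    conv_lhs => rw [hAU]
    rw [lintegral_iUnion (fun k => hm _ (hB k)) hdisj]
    refine tsum_congr fun k => setLIntegral_congr_fun (hm _ (hB k)) ?_
    rintro ω ⟨-, rfl⟩
    rfl
  rw [hsum V, hsum U, ← ENNReal.tsum_mul_left]
  exact ENNReal.tsum_le_tsum fun k => hUV k _ (hB k)

/-- A conditional form of Fatou's lemma along a random subsequence. -/
lemma ae_liminf_apply_index_lt_top {Ω : Type*} {m mΩ : MeasurableSpace Ω} (P : Measure Ω)
    [IsProbabilityMeasure P] (hm : m ≤ mΩ) {U V : ℕ → Ω → ℝ≥0∞}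
    (hU : ∀ k, Measurable[m] (U k)) (hV : ∀ k, Measurable (V k)) {c : ℝ≥0∞} (hc : c ≠ ∞)
    (hUV : ∀ k A, MeasurableSet[m] A → ∫⁻ ω in A, V k ω ∂P ≤ c * ∫⁻ ω in A, U k ω ∂P)
    {τ : ℕ → Ω → ℕ} (hτ : IsRandomSubseq m τ)
    (hbdd : ∀ᵐ ω ∂P, ∃ j : ℕ, ∀ k, j ≤ k → U (τ k ω) ω ≤ j) :
    ∀ᵐ ω ∂P, liminf (fun k => V (τ k ω) ω) atTop < ∞ := by
  have hVτ : ∀ k, Measurable fun ω => V (τ k ω) ω := fun k =>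
    measurable_apply_index hV ((hτ.mono hm).measurable k)
  let A : ℕ → Set Ω := fun j => ⋂ k, ⋂ _ : j ≤ k, {ω | U (τ k ω) ω ≤ j}
  have hA : ∀ j, MeasurableSet[m] (A j) := fun j =>
    MeasurableSet.iInter fun k => MeasurableSet.iInter fun _ =>
      measurableSet_le (measurable_apply_index hU (hτ.measurable k)) measurable_const
  have hae : ∀ j, ∀ᵐ ω ∂P, ω ∈ A j → liminf (fun k => V (τ k ω) ω) atTop < ∞ := by
    intro j
    rw [← ae_restrict_iff' (hm _ (hA j))]
    refine ae_lt_top (Measurable.liminf hVτ) (ne_top_of_le_ne_top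
      (ENNReal.mul_ne_top hc (ENNReal.natCast_ne_top j)) ?_)
    refine (lintegral_liminf_le hVτ).trans
      (liminf_le_of_frequently_le' (Eventually.frequently ?_))
    filter_upwards [eventually_ge_atTop j] with k hk
    refine (setLIntegral_apply_index_le P hm hUV (hτ.measurable k) (hA j)).trans ?_
    gcongr
    calc ∫⁻ ω in A j, U (τ k ω) ω ∂P ≤ ∫⁻ _ in A j, (j : ℝ≥0∞) ∂P :=
          setLIntegral_mono measurable_const fun ω hω => by
            simp only [A, Set.mem_iInter] at hω
            exact hω k hk
      _ = j * P (A j) := by simp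
      _ ≤ j * 1 := by gcongr; exact prob_le_one
      _ = j := mul_one _
  filter_upwards [ae_all_iff.2 hae, hbdd] with ω h ⟨j, hj⟩
  exact h j (by simpa [A] using hj)

/-- A sequence bounded in probability has uniformly bounded expectations after applying a suitable
monotone function whose bounded sublevel sets are bounded above. -/
lemma exists_monotone_lintegral_le {Ω : Type*} {mΩ : MeasurableSpace Ω} (P : Measure Ω)
    {X : ℕ → Ω → ℝ} (hX : ∀ k, Measurable (X k))
    (hbdd : ∀ ε : ℝ, 0 < ε → ∃ M : ℝ, 0 < M ∧ ∀ k, P {ω | M ≤ X k ω} < ENNReal.ofReal ε) :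
    ∃ φ : ℝ → ℝ≥0∞, Monotone φ ∧ (∀ j : ℕ, ∃ R, ∀ r, φ r ≤ j → r ≤ R) ∧
      ∀ k, ∫⁻ ω, φ (X k ω) ∂P ≤ 2 := by
  choose M _ hM using fun j : ℕ => hbdd ((1 / 2) ^ j) (by positivity)
  refine ⟨fun r => ∑' j, (Set.Ici (M j)).indicator 1 r, fun r s hrs => ?_, fun j => ?_, fun k => ?_⟩
  · refine ENNReal.tsum_le_tsum fun j => ?_
    by_cases hr : r ∈ Set.Ici (M j)
    · rw [Set.indicator_of_mem hr, Set.indicator_of_mem (Set.mem_Ici.2 (hr.trans hrs))]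
      rfl
    · simp [Set.indicator_of_notMem hr]
  · refine ⟨∑ i ∈ Finset.range (j + 1), |M i|, fun r hr => ?_⟩
    by_contra! hlt
    have h1 : ∀ i ∈ Finset.range (j + 1), (Set.Ici (M i)).indicator (1 : ℝ → ℝ≥0∞) r = 1 := by
      intro i hi
      refine Set.indicator_of_mem (Set.mem_Ici.2 ?_) _
      exact ((le_abs_self _).trans
        (Finset.single_le_sum (f := fun i => |M i|) (fun _ _ => abs_nonneg _) hi)).trans hlt.le
    have h2 := (ENNReal.sum_le_tsum (Finset.range (j + 1))).trans hr
    rw [Finset.sum_congr rfl h1] at h2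
    simp only [Finset.sum_const, Finset.card_range, nsmul_eq_mul, mul_one, Nat.cast_le] at h2
    omega
  · beta_reduce
    rw [lintegral_tsum (f := fun j ω => (Set.Ici (M j)).indicator 1 (X k ω)) fun j =>
      ((measurable_one.indicator measurableSet_Ici).comp (hX k)).aemeasurable]
    calc ∑' j, ∫⁻ ω, (Set.Ici (M j)).indicator 1 (X k ω) ∂P
        ≤ ∑' j : ℕ, (2⁻¹ : ℝ≥0∞) ^ j := by
          refine ENNReal.tsum_le_tsum fun j => ?_
          have h : ∀ ω, (Set.Ici (M j)).indicator (1 : ℝ → ℝ≥0∞) (X k ω)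
              = {ω | M j ≤ X k ω}.indicator 1 ω := fun ω => rfl
          simp_rw [h]
          rw [lintegral_indicator_one (measurableSet_le measurable_const (hX k))]
          refine (hM j k).le.trans_eq ?_
          rw [ENNReal.ofReal_pow (by norm_num), one_div, ENNReal.ofReal_inv_of_pos (by norm_num)]
          norm_num
      _ = 2 := by rw [ENNReal.tsum_geometric, ENNReal.one_sub_inv_two, inv_inv]

/-- Refining a random subsequence, measurable at an earlier time, so that the value at the next
time converges, while conditional tightness is kept. -/
lemma exists_refinement {Ω : Type*} {m₀ m₁ mΩ : MeasurableSpace Ω} (P : Measure Ω)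
    [IsProbabilityMeasure P] (h₀₁ : m₀ ≤ m₁) (h₁ : m₁ ≤ mΩ) {d : ℕ} {φ : ℝ → ℝ≥0∞}
    (hφ : Monotone φ) (hφR : ∀ j : ℕ, ∃ R, ∀ r, φ r ≤ j → r ≤ R) {Z U : ℕ → Ω → ℝ≥0∞}
    {X : ℕ → Ω → Fin d → ℝ} (hX : ∀ k, Measurable[m₁] (X k)) (hXZ : ∀ k ω, φ ‖X k ω‖ ≤ Z k ω)
    (hU : ∀ k, Measurable[m₀] (U k))
    (hUZ : ∀ k A, MeasurableSet[m₀] A → ∫⁻ ω in A, Z k ω ∂P ≤ ∫⁻ ω in A, U k ω ∂P)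
    {τ : ℕ → Ω → ℕ} (hτ : IsRandomSubseq m₀ τ)
    (hbdd : ∀ᵐ ω ∂P, ∃ j : ℕ, ∀ k, j ≤ k → U (τ k ω) ω ≤ j) :
    ∃ ρ, IsRandomSubseq m₁ ρ ∧ ∃ V : ℕ → Ω → ℝ≥0∞, (∀ k, Measurable[m₁] (V k)) ∧
      (∀ k A, MeasurableSet[m₁] A → ∫⁻ ω in A, Z k ω ∂P ≤ ∫⁻ ω in A, V k ω ∂P) ∧
      (∀ᵐ ω ∂P, ∃ j : ℕ, ∀ k, j ≤ k → V (τ (ρ k ω) ω) ω ≤ j) ∧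
      ∃ x : Ω → Fin d → ℝ, Measurable[m₁] x ∧
        ∀ᵐ ω ∂P, Tendsto (fun k => X (τ (ρ k ω) ω) ω) atTop (𝓝 (x ω)) := by
  let V : ℕ → Ω → ℝ≥0∞ := fun k ω => φ ‖X k ω‖ + condLExp m₁ P (Z k) ω
  have hφX : ∀ k, Measurable[m₁] fun ω => φ ‖X k ω‖ := fun k =>
    hφ.measurable.comp (measurable_norm.comp (hX k))
  have hV : ∀ k, Measurable[m₁] (V k) := fun k => (hφX k).add (measurable_condLExp m₁ P (Z k))
  have hVint : ∀ k A, MeasurableSet[m₁] A →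
      ∫⁻ ω in A, V k ω ∂P = ∫⁻ ω in A, φ ‖X k ω‖ ∂P + ∫⁻ ω in A, Z k ω ∂P := by
    intro k A hA
    rw [← setLIntegral_condLExp h₁ P (Z k) hA]
    exact lintegral_add_left ((hφX k).mono h₁ le_rfl) _
  have hτ₁ := hτ.mono h₀₁
  have hfin := ae_liminf_apply_index_lt_top (V := V) P (h₀₁.trans h₁) hU
    (fun k => (hV k).mono h₁ le_rfl) (c := 2) (by simp) (fun k A hA => by
      rw [hVint k A (h₀₁ _ hA), two_mul]
      exact add_le_add ((lintegral_mono fun ω => hXZ k ω).trans (hUZ k A hA)) (hUZ k A hA)) hτ hbdd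
  obtain ⟨ρ, hρ, hlim⟩ := exists_isRandomSubseq_tendsto_liminf (m := m₁)
    fun k => measurable_apply_index hV (hτ₁.measurable k)
  have hτρ := hτ₁.comp hρ
  obtain ⟨ρ', hρ', x, hx, hxlim⟩ := exists_isRandomSubseq_tendsto_of_bounded (m := m₁)
    fun k => measurable_apply_index hX (hτρ.measurable k)
  have hbddV : ∀ᵐ ω ∂P, ∃ j : ℕ, ∀ k, j ≤ k → V (τ (ρ k ω) ω) ω ≤ j := by
    filter_upwards [hfin] with ω hω
    obtain ⟨n, hn⟩ := ENNReal.exists_nat_gt hω.ne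
    obtain ⟨N, hN⟩ := eventually_atTop.1 ((hlim ω).eventually_lt_const hn)
    refine ⟨max n N, fun k hk => (hN k (le_of_max_le_right hk)).le.trans ?_⟩
    exact_mod_cast le_max_left n N
  refine ⟨_, hρ.comp hρ', V, hV, fun k A hA => ?_, ?_, x, hx, ?_⟩
  · rw [hVint k A hA]
    exact le_add_self
  · filter_upwards [hbddV] with ω ⟨j, hj⟩
    exact ⟨j, fun k hk => hj _ (hk.trans ((hρ'.strictMono ω).le_apply))⟩
  · filter_upwards [hbddV] with ω ⟨j, hj⟩
    obtain ⟨R, hR⟩ := hφR j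
    exact hxlim ω ⟨R, eventually_atTop.2 ⟨j, fun k hk => hR _ (le_self_add.trans (hj k hk))⟩⟩

/-- from a sequence of adapted strategies that is bounded in probability
one can extract a measurable, strictly increasing random subsequence converging almost
surely to an adapted strategy. -/
theorem stmt9 {Ω : Type*} {mΩ : MeasurableSpace Ω} (P : Measure Ω) [IsProbabilityMeasure P]
    (T d : ℕ) (hT : 1 ≤ T) (hd : 1 ≤ d)
    (ℱ : Fin T → MeasurableSpace Ω) (hℱmono : Monotone ℱ) (hℱle : ∀ t, ℱ t ≤ mΩ)
    (ϑn : ℕ → Ω → Fin T → Fin d → ℝ) (hadapted : ∀ k, AdaptedStrat ℱ (ϑn k))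
    -- bounded in probability
    (hbdd : ∀ ε : ℝ, 0 < ε → ∃ M : ℝ, 0 < M ∧
      ∀ k, P {ω | M ≤ ‖ϑn k ω‖} < ENNReal.ofReal ε) :
    ∃ τ : ℕ → Ω → ℕ,
      (∀ k, Measurable (τ k)) ∧
      (∀ k ω, τ k ω < τ (k + 1) ω) ∧
      ∃ ϑ : Ω → Fin T → Fin d → ℝ, AdaptedStrat ℱ ϑ ∧
        ∀ᵐ ω ∂P, Tendsto (fun k => ϑn (τ k ω) ω) atTop (nhds (ϑ ω)) := by
  have hmeas : ∀ k, Measurable (ϑn k) := fun k =>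
    measurable_pi_lambda _ fun t => (hadapted k t).mono (hℱle t) le_rfl
  obtain ⟨φ, hφ, hφR, hφint⟩ :=
    exists_monotone_lintegral_le P (fun k => (hmeas k).norm) hbdd
  let Z : ℕ → Ω → ℝ≥0∞ := fun k ω => φ ‖ϑn k ω‖
  suffices H : ∀ s ≤ T, ∃ m : MeasurableSpace Ω, m ≤ mΩ ∧ (∀ t : Fin T, s ≤ t → m ≤ ℱ t) ∧
      ∃ τ, IsRandomSubseq m τ ∧ ∃ U : ℕ → Ω → ℝ≥0∞, (∀ k, Measurable[m] (U k)) ∧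
        (∀ k A, MeasurableSet[m] A → ∫⁻ ω in A, Z k ω ∂P ≤ ∫⁻ ω in A, U k ω ∂P) ∧
        (∀ᵐ ω ∂P, ∃ j : ℕ, ∀ k, j ≤ k → U (τ k ω) ω ≤ j) ∧
        ∀ t : Fin T, (t : ℕ) < s → ∃ x : Ω → Fin d → ℝ, Measurable[ℱ t] x ∧
          ∀ᵐ ω ∂P, Tendsto (fun k => ϑn (τ k ω) ω t) atTop (𝓝 (x ω)) by
    obtain ⟨m, hm, -, τ, hτ, -, -, -, -, hlim⟩ := H T le_rfl
    choose x hx hxlim using fun t : Fin T => hlim t t.2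
    refine ⟨τ, (hτ.mono hm).measurable, hτ.lt_succ, fun ω t => x t ω, hx, ?_⟩
    filter_upwards [ae_all_iff.2 hxlim] with ω hω
    exact tendsto_pi_nhds.2 hω
  intro s
  induction s with
  | zero =>
    refine fun _ => ⟨⊥, bot_le, fun _ _ => bot_le, fun k _ => k, .id ⊥, fun _ _ => 2,
      fun _ => measurable_const, fun k A hA => ?_, .of_forall fun ω => ⟨2, by simp⟩, by simp⟩
    obtain rfl | rfl := MeasurableSpace.measurableSet_bot_iff.1 hA
    · simp
    · simpa using hφint k
  | succ s ih =>
    intro hs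
    obtain ⟨m, hm, hmℱ, τ, hτ, U, hU, hUZ, hbddU, hlim⟩ := ih (by omega)
    let t₀ : Fin T := ⟨s, hs⟩
    obtain ⟨ρ, hρ, V, hV, hVZ, hbddV, x, hx, hxlim⟩ := exists_refinement P (hmℱ t₀ le_rfl)
      (hℱle t₀) hφ hφR (Z := Z) (X := fun k ω => ϑn k ω t₀) (fun k => hadapted k t₀)
      (fun k ω => hφ (norm_le_pi_norm _ t₀)) hU hUZ hτ hbddU
    refine ⟨ℱ t₀, hℱle t₀, fun t ht => hℱmono (Fin.le_def.2 (by simp only [t₀]; omega)), _,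
      (hτ.mono (hmℱ t₀ le_rfl)).comp hρ, V, hV, hVZ, hbddV, fun t ht => ?_⟩
    obtain hts | hts := Nat.lt_succ_iff_lt_or_eq.1 ht
    · obtain ⟨y, hy, hylim⟩ := hlim t hts
      refine ⟨y, hy, ?_⟩
      filter_upwards [hylim] with ω hω
      exact hω.comp (hρ.tendsto_atTop ω)
    · obtain rfl : t = t₀ := Fin.ext hts
      exact ⟨x, hx, hxlim⟩

end
end

section
/- Let V : Ω × ℝ^{dT} → ℝ ∪ {−∞} be a normal integrand market model satisfying the no-arbitrage condition NA. Then the set 𝒞 = { h ∈ L^0(𝓕;ℝ) : ∃ϑ ∈ 𝒜 with V(·,ϑ(·)) ≥ h a.s. } of superhedgeable claims is closed with respect to convergence in probability. -/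
open MeasureTheory Filter Topology
open scoped ENNReal

noncomputable section

/-- Lexicographic selection of an adapted cluster point: given adapted real coordinates `z k i`
and a family of index sets `{k | ω ∈ B N k}` decreasing in `N`, there is an adapted `x` which, where
the coordinates are bounded and the index sets nonempty, is a cluster point of `z` along them. -/
theorem exists_adapted_clusterPoint {Ω ι : Type*} [LinearOrder ι] {G : ι → MeasurableSpace Ω}
    (hG : Monotone G) (z : ℕ → ι → Ω → ℝ) (B : ℕ → ℕ → Set Ω)
    (hBanti : ∀ k, Antitone fun N => B N k) (s : Finset ι)
    (hz : ∀ k, ∀ i ∈ s, Measurable[G i] (z k i))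
    (hB : ∀ N k, ∀ i ∈ s, MeasurableSet[G i] (B N k)) :
    ∃ x : ι → Ω → ℝ, (∀ i ∈ s, Measurable[G i] (x i)) ∧
      ∀ ω, (∀ N, ∃ k, ω ∈ B N k) → (∀ i ∈ s, ∃ M, ∀ k, |z k i ω| ≤ M) →
        ∀ N, ∀ ε > 0, ∃ k, ω ∈ B N k ∧ ∀ i ∈ s, |z k i ω - x i ω| < ε := by
  classical
  induction s using Finset.induction_on_max with
  | empty => exact ⟨0, by simp, fun ω h _ N ε _ => by simpa using h N⟩
  | insert a s ha ih =>
    obtain ⟨x, hxm, hx⟩ := ih (fun k i hi => hz k i (Finset.mem_insert_of_mem hi))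
      (fun N k i hi => hB N k i (Finset.mem_insert_of_mem hi))
    have has : a ∉ s := fun h => lt_irrefl _ (ha a h)
    let D : ℕ → ℕ → Set Ω := fun N k =>
      B N k ∩ ⋂ i ∈ s, {ω | |z k i ω - x i ω| < 1 / ((N : ℝ) + 1)}
    have hDm : ∀ N k, MeasurableSet[G a] (D N k) := by
      intro N k
      refine MeasurableSet.inter (hB N k a (Finset.mem_insert_self _ _))
        (Finset.measurableSet_biInter s fun i hi => ?_)
      have hle : G i ≤ G a := hG (ha i hi).le
      have hzi : Measurable[G a] (z k i) := (hz k i (Finset.mem_insert_of_mem hi)).mono hle le_rfl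
      have hxi : Measurable[G a] (x i) := (hxm i hi).mono hle le_rfl
      let _ := G a
      exact measurableSet_lt (hzi.sub hxi).abs measurable_const
    let L : ℕ → Ω → EReal := fun N ω => ⨆ k, if ω ∈ D N k then (z k a ω : EReal) else ⊥
    have hLm : ∀ N, Measurable[G a] (L N) := fun N =>
      Measurable.iSup fun k => Measurable.ite (hDm N k)
        (measurable_coe_real_ereal.comp (hz k a (Finset.mem_insert_self _ _))) measurable_const
    let l : Ω → ℝ := fun ω => (⨅ N, L N ω).toReal
    have hlm : Measurable[G a] l := (Measurable.iInf hLm).ereal_toReal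
    refine ⟨Function.update x a l, ?_, ?_⟩
    · intro i hi
      rcases Finset.mem_insert.1 hi with rfl | hi
      · simpa using hlm
      · rw [Function.update_of_ne (ha i hi).ne]
        exact hxm i hi
    intro ω hne hbdd N ε hε
    have hx := hx ω hne fun i hi => hbdd i (Finset.mem_insert_of_mem hi)
    obtain ⟨M, hM⟩ := hbdd a (Finset.mem_insert_self _ _)
    have hDne : ∀ N, ∃ k, ω ∈ D N k := by
      intro N
      obtain ⟨k, hk, hk'⟩ := hx N (1 / ((N : ℝ) + 1)) (by positivity)
      exact ⟨k, hk, by simpa using hk'⟩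
    have hDanti : ∀ k, Antitone fun N => D N k := by
      intro k N N' hN
      refine Set.inter_subset_inter (hBanti k hN) (Set.iInter₂_mono fun i _ => ?_)
      intro ω hω
      have hω : |z k i ω - x i ω| < 1 / ((N' : ℝ) + 1) := hω
      exact hω.trans_le (one_div_le_one_div_of_le (by positivity) (by gcongr))
    have hle : ∀ N k, ω ∈ D N k → (z k a ω : EReal) ≤ L N ω := fun N k hk =>
      le_iSup_of_le k (by rw [if_pos hk])
    have hlb : ((-M : ℝ) : EReal) ≤ ⨅ N, L N ω := by
      refine le_iInf fun N => ?_
      obtain ⟨k, hk⟩ := hDne N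
      exact le_trans (EReal.coe_le_coe_iff.2 (neg_le_of_abs_le (hM k))) (hle N k hk)
    have hub : (⨅ N, L N ω) ≤ (M : EReal) := by
      refine iInf_le_of_le 0 (iSup_le fun k => ?_)
      split_ifs
      · exact EReal.coe_le_coe_iff.2 (le_of_abs_le (hM k))
      · exact bot_le
    have hl : (l ω : EReal) = ⨅ N, L N ω :=
      EReal.coe_toReal (ne_top_of_le_ne_top (EReal.coe_ne_top _) hub)
        (ne_bot_of_le_ne_bot (EReal.coe_ne_bot _) hlb)
    have h1 : (⨅ N, L N ω) < ((l ω + ε : ℝ) : EReal) := by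
      rw [← hl]
      exact EReal.coe_lt_coe_iff.2 (by linarith)
    obtain ⟨N₁, hN₁⟩ := iInf_lt_iff.1 h1
    obtain ⟨N₂, hN₂⟩ := exists_nat_one_div_lt hε
    let n := max N (max N₁ N₂)
    have h2 : ((l ω - ε : ℝ) : EReal) < L n ω := by
      refine lt_of_lt_of_le ?_ (hl.le.trans (iInf_le _ n))
      exact EReal.coe_lt_coe_iff.2 (by linarith)
    obtain ⟨k, hk⟩ := lt_iSup_iff.1 h2
    have hkD : ω ∈ D n k := by
      by_contra hcon
      simp [if_neg hcon] at hk
    rw [if_pos hkD, EReal.coe_lt_coe_iff] at hk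
    refine ⟨k, (hDanti k (le_max_left _ _) hkD).1, fun i hi => ?_⟩
    rcases Finset.mem_insert.1 hi with rfl | hi
    · have h3 := (hle N₁ k (hDanti k ((le_max_left _ _).trans (le_max_right _ _)) hkD)).trans_lt hN₁
      rw [EReal.coe_lt_coe_iff] at h3
      simp only [Function.update_self]
      exact abs_lt.2 ⟨by linarith, by linarith⟩
    · rw [Function.update_of_ne (ha i hi).ne]
      have h4 := (hDanti k ((le_max_right _ _).trans (le_max_right _ _)) hkD).2
      simp only [Set.mem_iInter, Set.mem_ofPred_eq] at h4
      exact (h4 i hi).trans hN₂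

/-- Version of `exists_adapted_clusterPoint` for strategies, selecting only the components from
time `t` on; the earlier ones are set to zero. -/
theorem exists_adaptedStrat_clusterPoint {Ω : Type*} {T d : ℕ} {ℱ : Fin T → MeasurableSpace Ω}
    (hℱ : Monotone ℱ) (t : ℕ) (z : ℕ → Ω → Fin T → Fin d → ℝ) (B : ℕ → ℕ → Set Ω)
    (hBanti : ∀ k, Antitone fun N => B N k)
    (hz : ∀ k, ∀ i : Fin T, t ≤ i → Measurable[ℱ i] fun ω => z k ω i)
    (hB : ∀ N k, ∀ i : Fin T, t ≤ i → MeasurableSet[ℱ i] (B N k)) :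
    ∃ x : Ω → Fin T → Fin d → ℝ, AdaptedStrat ℱ x ∧ (∀ ω, ∀ i : Fin T, i < t → x ω i = 0) ∧
      ∀ ω, (∀ N, ∃ k, ω ∈ B N k) → (∃ M, ∀ k i, ‖z k ω i‖ ≤ M) →
        ∀ N, ∀ ε > 0, ∃ k, ω ∈ B N k ∧ ∀ i : Fin T, t ≤ i → ‖z k ω i - x ω i‖ < ε := by
  classical
  have hG : Monotone fun p : Fin T ×ₗ Fin d => ℱ (ofLex p).1 := by
    intro p q hpq
    refine hℱ ?_
    rcases (Prod.Lex.le_iff.1 hpq) with h | h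
    · exact h.le
    · exact h.1.le
  let s : Finset (Fin T ×ₗ Fin d) := Finset.univ.filter fun p => t ≤ (ofLex p).1
  obtain ⟨x, hxm, hx⟩ := exists_adapted_clusterPoint hG
    (fun k p ω => z k ω (ofLex p).1 (ofLex p).2) B hBanti s
    (fun k p hp => @Measurable.eval _ _ _ (ℱ (ofLex p).1) _ _ _ (hz k _ (by simpa [s] using hp)))
    (fun N k p hp => hB N k _ (by simpa [s] using hp))
  refine ⟨fun ω i j => if t ≤ i then x (toLex (i, j)) ω else 0, ?_, ?_, ?_⟩
  · intro i
    refine @measurable_pi_lambda _ _ _ (ℱ i) _ _ fun j => ?_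
    by_cases hi : t ≤ i
    · simp only [hi, if_true]
      exact hxm (toLex (i, j)) (by simpa [s] using hi)
    · simp only [hi, if_false]
      exact measurable_const
  · intro ω i hi
    ext j
    simp [hi]
  · rintro ω hne ⟨M, hM⟩ N ε hε
    obtain ⟨k, hk, hk'⟩ := hx ω hne
      (fun p _ => ⟨M, fun k => (norm_le_pi_norm (z k ω (ofLex p).1) _).trans (hM k _)⟩) N ε hε
    refine ⟨k, hk, fun i hi => (pi_norm_lt_iff hε).2 fun j => ?_⟩
    simpa [hi] using hk' (toLex (i, j)) (by simpa [s] using hi)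

/-- Normalized limits of points with uniformly bounded below values are recession directions. -/
theorem recessionModel_nonneg {Ω : Type*} {T d : ℕ} {V : Ω → (Fin T → Fin d → ℝ) → EReal}
    {ω : Ω} {z : Fin T → Fin d → ℝ} (H : ℝ)
    (hz : ∀ N : ℕ, ∀ ε > 0, ∃ δ : ℝ, N < δ ∧ ∃ y, ‖δ⁻¹ • y - z‖ < ε ∧ (H : EReal) ≤ V ω y) :
    0 ≤ recessionModel V ω z := by
  refine le_iInf fun ⟨l, hl⟩ => ?_
  refine EReal.ge_of_forall_gt_iff_ge.1 fun a ha => ?_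
  have ha : a < 0 := by exact_mod_cast ha
  obtain ⟨N, hN⟩ := exists_nat_gt (max l (|H| / (-a)))
  obtain ⟨δ, hδ, y, hy, hHy⟩ := hz N (1 / l) (by positivity)
  have hlδ : l < δ := (le_max_left _ _).trans_lt (hN.trans hδ)
  have hδ0 : 0 < δ := hl.trans hlδ
  have haδ : |H| / (-a) < δ := (le_max_right _ _).trans_lt (hN.trans hδ)
  refine le_trans ?_ (le_iSup_of_le (⟨δ, hlδ⟩ : {δ : ℝ // l < δ})
    (le_iSup_of_le (⟨δ⁻¹ • y, hy⟩ : {x : Fin T → Fin d → ℝ // ‖x - z‖ < 1 / l}) le_rfl))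
  simp only [smul_inv_smul₀ hδ0.ne']
  refine le_trans ?_ (mul_le_mul_of_nonneg_left hHy (EReal.coe_nonneg.2 (inv_nonneg.2 hδ0.le)))
  rw [← EReal.coe_mul, EReal.coe_le_coe_iff]
  rw [div_lt_iff₀ (by linarith)] at haδ
  rw [inv_mul_eq_div, le_div_iff₀ hδ0]
  nlinarith [neg_abs_le H]

/-- Under no-arbitrage, a sequence of adapted strategies with values bounded below whose components
before time `t` are dominated by the scales `c k` is dominated by these scales altogether. -/
theorem NAcond.ae_bounded {Ω : Type*} {mΩ : MeasurableSpace Ω} {P : Measure Ω}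
    {T d : ℕ} {ℱ : Fin T → MeasurableSpace Ω} (hℱmono : Monotone ℱ)
    {V : Ω → (Fin T → Fin d → ℝ) → EReal} (hV0 : ∀ᵐ ω ∂P, V ω 0 = 0) (hNA : NAcond P ℱ V)
    {ϑ : ℕ → Ω → Fin T → Fin d → ℝ} (hϑ : ∀ k, AdaptedStrat ℱ (ϑ k))
    (hlow : ∀ᵐ ω ∂P, ∃ H : ℝ, ∀ k, (H : EReal) ≤ V ω (ϑ k ω))
    {t : ℕ} (ht : t ≤ T) (c : ℕ → Ω → ℝ) (hc1 : ∀ k ω, 1 ≤ c k ω)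
    (hcm : ∀ k, ∀ i : Fin T, t ≤ i → Measurable[ℱ i] (c k))
    (hbdd : ∀ᵐ ω ∂P, ∃ M, ∀ k, ∀ i : Fin T, i < t → ‖ϑ k ω i‖ ≤ M * c k ω) :
    ∀ᵐ ω ∂P, ∃ M, ∀ k i, ‖ϑ k ω i‖ ≤ M * c k ω := by
  induction ht using Nat.decreasingInduction generalizing c with
  | self => simpa using hbdd
  | of_succ t ht ih =>
    let τ : Fin T := ⟨t, ht⟩
    have hϑτ : ∀ k, ∀ i : Fin T, t ≤ i → Measurable[ℱ i] fun ω => ‖ϑ k ω τ‖ := fun k i hi =>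
      @Measurable.norm _ _ _ _ _ (ℱ i) _ ((hϑ k τ).mono (hℱmono hi) le_rfl)
    let c' : ℕ → Ω → ℝ := fun k ω => max (c k ω) ‖ϑ k ω τ‖
    have hc'1 : ∀ k ω, 1 ≤ c' k ω := fun k ω => (hc1 k ω).trans (le_max_left _ _)
    have hc'm : ∀ k, ∀ i : Fin T, t ≤ i → Measurable[ℱ i] (c' k) := fun k i hi =>
      (hcm k i hi).max (hϑτ k i hi)
    have hbdd' := ih c' hc'1 (fun k i hi => hc'm k i (by omega)) <| by
      filter_upwards [hbdd] with ω ⟨M, hM⟩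
      refine ⟨max M 1, fun k i hi => ?_⟩
      have h0 : 0 ≤ c' k ω := zero_le_one.trans (hc'1 k ω)
      rcases Nat.lt_succ_iff_lt_or_eq.1 hi with hi | hi
      · have h1 := zero_le_one.trans (hc1 k ω)
        calc ‖ϑ k ω i‖ ≤ M * c k ω := hM k i hi
          _ ≤ max M 1 * c k ω := by gcongr; exact le_max_left _ _
          _ ≤ max M 1 * c' k ω := by gcongr; exact le_max_left _ _
      · obtain rfl : i = τ := Fin.ext hi
        calc ‖ϑ k ω τ‖ ≤ 1 * c' k ω := by rw [one_mul]; exact le_max_right _ _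
          _ ≤ max M 1 * c' k ω := by gcongr; exact le_max_right _ _
    let B : ℕ → ℕ → Set Ω := fun N k => {ω | ((N : ℝ) + 1) * c k ω < ‖ϑ k ω τ‖}
    have hBanti : ∀ k, Antitone fun N => B N k := by
      intro k N N' hN ω hω
      have hω : ((N' : ℝ) + 1) * c k ω < ‖ϑ k ω τ‖ := hω
      refine lt_of_le_of_lt ?_ hω
      have h1 := zero_le_one.trans (hc1 k ω)
      gcongr
    have hBm : ∀ N k, ∀ i : Fin T, t ≤ i → MeasurableSet[ℱ i] (B N k) := by
      intro N k i hi
      have hck := hcm k i hi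
      have hϑk := hϑτ k i hi
      let _ := ℱ i
      exact measurableSet_lt (hck.const_mul _) hϑk
    have hBc' : ∀ N k ω, ω ∈ B N k → c' k ω = ‖ϑ k ω τ‖ := fun N k ω hω =>
      max_eq_right (by nlinarith [hc1 k ω, show ((N : ℝ) + 1) * c k ω < ‖ϑ k ω τ‖ from hω,
        (Nat.cast_nonneg N : (0 : ℝ) ≤ N)])
    have hzm : ∀ k, ∀ i : Fin T, t ≤ i → Measurable[ℱ i] fun ω => (c' k ω)⁻¹ • ϑ k ω i := by
      intro k i hi
      have hck := hc'm k i hi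
      have hϑk := hϑ k i
      let _ := ℱ i
      exact hck.inv.smul hϑk
    obtain ⟨x, hxm, hx0, hx⟩ := exists_adaptedStrat_clusterPoint hℱmono t
      (fun k ω => (c' k ω)⁻¹ • ϑ k ω) B hBanti hzm hBm
    let A : Set Ω := ⋂ N, ⋃ k, B N k
    have hAm : ∀ i : Fin T, t ≤ i → MeasurableSet[ℱ i] A := fun i hi =>
      MeasurableSet.iInter fun N => MeasurableSet.iUnion fun k => hBm N k i hi
    have hA : ∀ ω, ω ∈ A → ∀ N, ∃ k, ω ∈ B N k := fun ω hω => by simpa [A] using hω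
    have hzbdd : ∀ ω, (∃ M, ∀ k i, ‖ϑ k ω i‖ ≤ M * c' k ω) →
        ∃ M, ∀ k i, ‖((c' k ω)⁻¹ • ϑ k ω) i‖ ≤ M := by
      rintro ω ⟨M, hM⟩
      refine ⟨M, fun k i => ?_⟩
      have h0 : 0 < c' k ω := zero_lt_one.trans_le (hc'1 k ω)
      rw [Pi.smul_apply, norm_smul, norm_inv, Real.norm_of_nonneg h0.le, inv_mul_eq_div,
        div_le_iff₀ h0]
      exact hM k i
    have hadapt : AdaptedStrat ℱ (A.indicator x) := by
      intro i
      by_cases hi : t ≤ i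
      · have : (fun ω => A.indicator x ω i) = A.indicator fun ω => x ω i := by
          ext ω
          by_cases hω : ω ∈ A <;> simp [hω]
        rw [this]
        exact (hxm i).indicator (hAm i hi)
      · have : (fun ω => A.indicator x ω i) = fun _ => 0 := by
          ext ω
          by_cases hω : ω ∈ A <;> simp [hω, hx0 ω i (not_le.1 hi)]
        rw [this]
        exact measurable_const
    have hzero := hNA _ hadapt <| by
      filter_upwards [hV0, hlow, hbdd, hbdd'] with ω h0 ⟨H, hH⟩ ⟨M, hM⟩ hM'
      by_cases hω : ω ∈ A
      · rw [Set.indicator_of_mem hω]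
        refine recessionModel_nonneg H fun N ε hε => ?_
        obtain ⟨N', hN'⟩ := exists_nat_gt (max (N : ℝ) (M / ε))
        obtain ⟨k, hk, hk'⟩ := hx ω (hA ω hω) (hzbdd ω hM') N' ε hε
        have hc'k := hBc' N' k ω hk
        have hk1 : ((N' : ℝ) + 1) * c k ω < ‖ϑ k ω τ‖ := hk
        have hck := hc1 k ω
        have hN0 : (0 : ℝ) ≤ N' := Nat.cast_nonneg _
        have hpos : 0 < c' k ω := zero_lt_one.trans_le (hc'1 k ω)
        refine ⟨c' k ω, ?_, ϑ k ω, (pi_norm_lt_iff hε).2 fun i => ?_, hH k⟩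
        · have := (le_max_left _ _).trans_lt hN'
          nlinarith
        · by_cases hi : t ≤ i
          · exact hk' i hi
          · have hi := not_le.1 hi
            rw [Pi.sub_apply, hx0 ω i hi, sub_zero, Pi.smul_apply, norm_smul, norm_inv,
              Real.norm_of_nonneg hpos.le, inv_mul_eq_div, div_lt_iff₀ hpos]
            have h2 : M / ε < N' := (le_max_right _ _).trans_lt hN'
            rw [div_lt_iff₀ hε] at h2
            calc ‖ϑ k ω i‖ ≤ M * c k ω := hM k i hi
              _ ≤ (N' * ε) * c k ω := by gcongr
              _ ≤ ε * ((N' + 1) * c k ω) := by nlinarith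
              _ < ε * c' k ω := by rw [hc'k]; gcongr
      · rw [Set.indicator_of_notMem hω]
        exact recessionModel_nonneg 0 fun N ε hε =>
          ⟨N + 1, by simp, 0, by simpa using hε, by simp [h0]⟩
    filter_upwards [hzero, hbdd'] with ω hω0 hM'
    have hωA : ω ∉ A := by
      intro hω
      rw [Set.indicator_of_mem hω] at hω0
      obtain ⟨k, hk, hk'⟩ := hx ω (hA ω hω) (hzbdd ω hM') 0 1 one_pos
      have hpos : 0 < c' k ω := zero_lt_one.trans_le (hc'1 k ω)
      have h1 := hk' τ le_rfl
      rw [hω0, Pi.zero_apply, sub_zero, Pi.smul_apply, norm_smul, norm_inv,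
        Real.norm_of_nonneg hpos.le, ← hBc' 0 k ω hk, inv_mul_cancel₀ hpos.ne'] at h1
      exact lt_irrefl _ h1
    obtain ⟨N, hN⟩ : ∃ N : ℕ, ∀ k, ‖ϑ k ω τ‖ ≤ ((N : ℝ) + 1) * c k ω := by
      simpa [A, B] using hωA
    obtain ⟨M, hM⟩ := hM'
    refine ⟨|M| * (N + 1), fun k i => (hM k i).trans ?_⟩
    have h1 := hc1 k ω
    have hN0 : (0 : ℝ) ≤ N := Nat.cast_nonneg _
    have h2 : c' k ω ≤ (N + 1) * c k ω := max_le (by nlinarith) (hN k)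
    calc M * c' k ω ≤ |M| * c' k ω :=
          mul_le_mul_of_nonneg_right (le_abs_self M) (zero_le_one.trans (hc'1 k ω))
      _ ≤ |M| * ((N + 1) * c k ω) := by gcongr
      _ = |M| * (N + 1) * c k ω := by ring

/-- for a normal integrand market model satisfying NA, the set `𝒞` of
superhedgeable claims is closed with respect to convergence in probability. -/
theorem stmt10 {Ω : Type*} {mΩ : MeasurableSpace Ω} (P : Measure Ω) [IsProbabilityMeasure P]
    (T d : ℕ) (hT : 1 ≤ T) (hd : 1 ≤ d)
    (ℱ : Fin T → MeasurableSpace Ω) (hℱmono : Monotone ℱ) (hℱle : ∀ t, ℱ t ≤ mΩ)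
    -- V is a normal integrand market model:
    (V : Ω → (Fin T → Fin d → ℝ) → EReal)
    (hVjm : Measurable (Function.uncurry V))
    (hV0 : ∀ᵐ ω ∂P, V ω 0 = 0)
    (hVnotTop : ∀ ω x, V ω x ≠ ⊤)
    (hVusc : ∀ᵐ ω ∂P, UpperSemicontinuous (V ω))
    (hVhypo : HypoClosedMeas (mΩ := mΩ) V)
    -- satisfying the no-arbitrage condition:
    (hNA : NAcond P ℱ V)
    -- a sequence of superhedgeable claims
    (h : ℕ → Ω → ℝ) (hhmeas : ∀ k, Measurable (h k))
    (hmem : ∀ k, ∃ ϑ, AdaptedStrat ℱ ϑ ∧ ∀ᵐ ω ∂P, (h k ω : EReal) ≤ V ω (ϑ ω))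
    -- converging in probability to g
    (g : Ω → ℝ) (hgmeas : Measurable g)
    (htend : TendstoInMeasure P h atTop g) :
    -- then g is superhedgeable
    ∃ ϑ, AdaptedStrat ℱ ϑ ∧ ∀ᵐ ω ∂P, (g ω : EReal) ≤ V ω (ϑ ω) := by
  obtain ⟨φ, -, hφ⟩ := htend.exists_seq_tendsto_ae
  choose ϑ hϑ hle using fun k => hmem (φ k)
  have hle : ∀ᵐ ω ∂P, ∀ k, (h (φ k) ω : EReal) ≤ V ω (ϑ k ω) := ae_all_iff.2 hle
  have hlow : ∀ᵐ ω ∂P, ∃ H : ℝ, ∀ k, (H : EReal) ≤ V ω (ϑ k ω) := by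
    filter_upwards [hφ, hle] with ω hω hω'
    obtain ⟨H, hH⟩ := hω.bddBelow_range
    exact ⟨H, fun k => (EReal.coe_le_coe_iff.2 (hH (Set.mem_range_self k))).trans (hω' k)⟩
  have hbdd := hNA.ae_bounded hℱmono hV0 hϑ hlow (Nat.zero_le T) (fun _ _ => 1)
    (fun _ _ => le_rfl) (fun _ _ _ => measurable_const) (by simp)
  obtain ⟨x, hxm, -, hx⟩ := exists_adaptedStrat_clusterPoint hℱmono 0 ϑ
    (fun N k => {_ω | N ≤ k}) (fun k N N' hN ω hω => le_trans hN hω)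
    (fun k i _ => hϑ k i) (fun N k i _ => MeasurableSet.const _)
  refine ⟨x, hxm, ?_⟩
  filter_upwards [hφ, hle, hbdd, hVusc] with ω hω hω' ⟨M, hM⟩ husc
  have hx := hx ω (fun N => ⟨N, le_refl N⟩) ⟨M, by simpa using hM⟩
  by_contra! hlt
  obtain ⟨b, hVb, hbg⟩ := EReal.lt_iff_exists_real_btwn.1 hlt
  obtain ⟨ε, hε, hball⟩ := Metric.eventually_nhds_iff.1 (husc (x ω) b hVb)
  obtain ⟨N, hN⟩ := eventually_atTop.1 (hω.eventually_const_lt (EReal.coe_lt_coe_iff.1 hbg))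
  obtain ⟨k, hk, hk'⟩ := hx N ε hε
  have h1 : V ω (ϑ k ω) < b := hball <| by
    rw [dist_eq_norm]
    exact (pi_norm_lt_iff hε).2 fun i => hk' i (Nat.zero_le _)
  exact lt_asymm (EReal.coe_lt_coe_iff.1 ((hω' k).trans_lt h1)) (hN k hk)

end
end
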